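/- Let d > 2 be an integer, c₀ ∈ (0,1], ε > 0, and η > 0. There exist constants c⋆, C⋆ > 0 depending only on (d, c₀) such that for all constants c ∈ (0, c⋆] and C ≥ C⋆ there exists δ₂ ∈ (0,1/2] depending only on (η, ε, d, c₀) with the following property. For every admissible kernel J on ℤ^d with constant c₀ and every G ∈ 𝒢 with (J,G) satisfying Assumption G, for every β < β(δ₂): if for every β' ≤ β and every x ∈ ℤ^d one has F_{β'}(x) ≤ (C/σ_J^d)·(σ_J/(σ_J∨|x|))^{d−2−ε}·exp(−c·|x|/ξ(β')), then for every x ∈ ℤ^d with |x| ≥ max{η·ξ(β), 2σ_J}: F_β(x) ≤ (1/8)·(C/σ_J^d)·(σ_J/(σ_J∨|x|))^{d−2−ε}·exp(−c·|x|/ξ(β)). -/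

import Mathlib

open scoped ENNReal

noncomputable section

namespace Blackbox

/-- Supremum norm of a lattice point. -/
def supNorm {d : ℕ} (x : Fin d → ℤ) : ℝ :=
  ((Finset.univ.sup fun i => (x i).natAbs : ℕ) : ℝ)

/-- Squared Euclidean norm of a lattice point. -/
def sqNorm {d : ℕ} (x : Fin d → ℤ) : ℝ :=
  ∑ i, ((x i : ℝ)) ^ 2

/-- Invariance under coordinate permutations and sign flips of individual coordinates. -/
def IsSymmFun {d : ℕ} {α : Type*} (f : (Fin d → ℤ) → α) : Prop :=
  ∀ (π : Equiv.Perm (Fin d)) (e : Fin d → Bool) (x : Fin d → ℤ),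
    f (fun i => (if e i then -1 else 1) * x (π i)) = f x

/-- First coordinate (dot product with `e₁`). -/
def e1 {d : ℕ} {α : Type*} [Zero α] (y : Fin d → α) : α :=
  if h : 0 < d then y ⟨0, h⟩ else 0

/-- An admissible kernel on `ℤ^d` with constant `c₀`. -/
structure AdmissibleKernel (d : ℕ) (c₀ : ℝ) where
  J : (Fin d → ℤ) → ℝ
  nonneg : ∀ x, 0 ≤ J x
  zero_at_zero : J 0 = 0
  summable : Summable J
  norm_one : ∑' x, J x = 1
  symm : IsSymmFun J
  R : ℝ
  R_ge_one : 1 ≤ R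
  range_le : ∀ x, 0 < J x → supNorm x ≤ R
  range_attained : ∃ x, 0 < J x ∧ supNorm x = R
  summable_sq : Summable fun x => sqNorm x * J x
  sigma_lower : c₀ * R ≤ Real.sqrt (∑' x, sqNorm x * J x)
  J_upper : ∀ x, J x ≤ c₀⁻¹ / R ^ d

/-- `σ_J`, the square root of the variance of the kernel. -/
def AdmissibleKernel.sigma {d : ℕ} {c₀ : ℝ} (K : AdmissibleKernel d c₀) : ℝ :=
  Real.sqrt (∑' x, sqNorm x * K.J x)

/-- A family `G ∈ 𝒢` together with an admissible kernel `J` such that `(J,G)` satisfies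
Assumption G (with error-term family `H`). -/
structure Model (d : ℕ) (c₀ : ℝ) where
  K : AdmissibleKernel d c₀
  G : ℝ → (Fin d → ℤ) → ℝ≥0∞
  βc : ℝ≥0∞
  βc_pos : 0 < βc
  init : ∀ x, G 0 x = if x = 0 then 1 else 0
  G' : ℝ → (Fin d → ℤ) → ℝ
  mono : ∀ (x : Fin d → ℤ) ⦃β₁ β₂ : ℝ⦄, 0 ≤ β₁ → β₁ ≤ β₂ →
    ENNReal.ofReal β₂ ≤ βc → G β₁ x ≤ G β₂ x
  deriv : ∀ (x : Fin d → ℤ) ⦃β : ℝ⦄, 0 ≤ β → ENNReal.ofReal β < βc →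
    HasDerivWithinAt (fun t => (G t x).toReal) (G' β x) (Set.Ici 0) β
  symm : ∀ β, IsSymmFun (G β)
  expDecay : ∀ ⦃β : ℝ⦄, 0 ≤ β → ENNReal.ofReal β < βc →
    ∃ C > (0:ℝ), ∃ c > (0:ℝ), ∀ x, G β x ≤ ENNReal.ofReal (C * Real.exp (-c * supNorm x))
  limit : βc ≠ ⊤ → ∀ x, G βc.toReal x = ⨆ β ∈ Set.Ico (0 : ℝ) βc.toReal, G β x
  I1 : ∀ ⦃β' β : ℝ⦄, 0 ≤ β' → β' ≤ β → ENNReal.ofReal β < βc →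
    ∀ x, G β x ≤ G β' x + ENNReal.ofReal (β - β') *
      ∑' p : (Fin d → ℤ) × (Fin d → ℤ),
        G β' p.1 * ENNReal.ofReal (K.J p.2) * G β (x - p.1 - p.2)
  H : ℝ → (Fin d → ℤ) → ℝ
  H_nonneg : ∀ β x, 0 ≤ H β x
  H_zero : ∀ x, H 0 x = 0
  H_symm : ∀ β x, H β (-x) = H β x
  H_cont : ∀ x, ContinuousOn (fun β => H β x)
    {β : ℝ | 0 ≤ β ∧ ENNReal.ofReal β < βc}
  H_expDecay : ∀ ⦃β : ℝ⦄, 0 ≤ β → ENNReal.ofReal β < βc →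
    ∃ C > (0:ℝ), ∃ c > (0:ℝ), ∀ x, H β x ≤ C * Real.exp (-c * supNorm x)
  I2 : ∀ ⦃β : ℝ⦄, 0 ≤ β → ENNReal.ofReal β < βc → ∀ x,
    (∑' p : (Fin d → ℤ) × (Fin d → ℤ),
      (G β p.1).toReal * (K.J p.2 - H β p.2) * (G β (x - p.1 - p.2)).toReal)
      ≤ G' β x

namespace Model

variable {d : ℕ} {c₀ : ℝ}

def sigma (M : Model d c₀) : ℝ := M.K.sigma

/-- `F_β = J * G_β`. -/
def F (M : Model d c₀) (β : ℝ) (x : Fin d → ℤ) : ℝ≥0∞ :=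
  ∑' y, ENNReal.ofReal (M.K.J y) * M.G β (x - y)

/-- The susceptibility `χ(β)`. -/
def chi (M : Model d c₀) (β : ℝ) : ℝ≥0∞ := ∑' x, M.G β x

/-- `ξ(β)²`. -/
def xiSq (M : Model d c₀) (β : ℝ) : ℝ≥0∞ :=
  (∑' x, ENNReal.ofReal (sqNorm x) * M.F β x) / M.chi β

/-- The correlation length of order two, `ξ(β)`. -/
def xi (M : Model d c₀) (β : ℝ) : ℝ := Real.sqrt (M.xiSq β).toReal

/-- The error term `E(β)`. -/
def E (M : Model d c₀) (β : ℝ) : ℝ≥0∞ :=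
  ⨆ t ∈ Set.Icc (0 : ℝ) β,
    (ENNReal.ofReal (∑' x, M.H t x) +
      ENNReal.ofReal (∑' x, sqNorm x * M.H t x) / M.xiSq t)

/-- `β(δ)`. -/
def betaOf (M : Model d c₀) (δ : ℝ) : ℝ :=
  sSup {β : ℝ | 0 ≤ β ∧ ENNReal.ofReal β < M.βc ∧ M.E β < ENNReal.ofReal δ}

/-- One-step distribution of the effective random walk at parameter `β`. -/
def effStep (M : Model d c₀) (β : ℝ) (y : Fin d → ℤ) : ℝ≥0∞ :=
  M.F β y / M.chi β

/-- `k`-step distribution of the effective random walk at parameter `β`. -/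
def effIter (M : Model d c₀) (β : ℝ) : ℕ → (Fin d → ℤ) → ℝ≥0∞
  | 0 => fun x => if x = 0 then 1 else 0
  | n + 1 => fun x => ∑' y, M.effStep β y * M.effIter β n (x - y)

/-- Moment generating function `M_β(s)` of the first coordinate of one step of the
effective random walk. -/
def Mgf (M : Model d c₀) (β s : ℝ) : ℝ≥0∞ :=
  ∑' y : Fin d → ℤ, M.effStep β y * ENNReal.ofReal (Real.exp (s / M.xi β * ((e1 y : ℤ) : ℝ)))

end Model

end Blackbox
open Blackbox

section
namespace Blackbox

/-! ### Convolution algebra -/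
section Conv
variable {d : ℕ}

def conv (f g : (Fin d → ℤ) → ℝ≥0∞) (x : Fin d → ℤ) : ℝ≥0∞ := ∑' y, f y * g (x - y)

def dl (x : Fin d → ℤ) : ℝ≥0∞ := if x = 0 then 1 else 0

def cpow (f : (Fin d → ℤ) → ℝ≥0∞) : ℕ → (Fin d → ℤ) → ℝ≥0∞
  | 0 => dl
  | n + 1 => conv f (cpow f n)

def mass (f : (Fin d → ℤ) → ℝ≥0∞) : ℝ≥0∞ := ∑' x, f x

lemma tsum_shift (F : (Fin d → ℤ) → ℝ≥0∞) (y : Fin d → ℤ) : ∑' x, F (x - y) = ∑' x, F x :=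
  (Equiv.subRight y).tsum_eq F

lemma tsum_refl (F : (Fin d → ℤ) → ℝ≥0∞) (y : Fin d → ℤ) : ∑' x, F (y - x) = ∑' x, F x :=
  (Equiv.subLeft y).tsum_eq F

/-- integration against a convolution -/
lemma tsum_conv_mul (f g W : (Fin d → ℤ) → ℝ≥0∞) :
    ∑' x, conv f g x * W x = ∑' y, ∑' z, f y * g z * W (y + z) := by
  simp only [conv, ← ENNReal.tsum_mul_right]
  rw [ENNReal.tsum_comm]
  refine tsum_congr fun y => ?_
  rw [← tsum_shift (fun z => f y * g z * W (y + z)) y]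
  refine tsum_congr fun x => ?_
  simp

lemma conv_comm (f g : (Fin d → ℤ) → ℝ≥0∞) : conv f g = conv g f := by
  funext x
  simp only [conv]
  rw [← tsum_refl _ x]
  refine tsum_congr fun y => ?_
  simp [mul_comm]

lemma conv_assoc (f g h : (Fin d → ℤ) → ℝ≥0∞) : conv (conv f g) h = conv f (conv g h) := by
  funext x
  have h1 : conv (conv f g) h x = ∑' y, ∑' z, f y * g z * h (x - (y + z)) :=
    tsum_conv_mul f g (fun w => h (x - w))
  rw [h1]
  refine tsum_congr fun y => ?_
  simp only [conv, ← ENNReal.tsum_mul_left]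
  refine tsum_congr fun z => ?_
  rw [mul_assoc, sub_add_eq_sub_sub]

lemma conv_dl (f : (Fin d → ℤ) → ℝ≥0∞) : conv f dl = f := by
  funext x
  simp only [conv, dl]
  rw [tsum_eq_single x]
  · simp
  · intro y hy
    rw [if_neg]
    · simp
    · intro h; exact hy (sub_eq_zero.mp h).symm

lemma dl_conv (f : (Fin d → ℤ) → ℝ≥0∞) : conv dl f = f := by rw [conv_comm, conv_dl]

lemma cpow_one (f : (Fin d → ℤ) → ℝ≥0∞) : cpow f 1 = f := conv_dl f

lemma cpow_add (f : (Fin d → ℤ) → ℝ≥0∞) (m n : ℕ) : cpow f (m + n) = conv (cpow f m) (cpow f n) := by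
  induction m with
  | zero => simp [cpow, dl_conv]
  | succ m ih =>
    rw [Nat.succ_add]
    simp only [cpow]
    rw [ih, conv_assoc]

lemma cpow_succ' (f : (Fin d → ℤ) → ℝ≥0∞) (n : ℕ) : cpow f (n + 1) = conv (cpow f n) f := by
  rw [cpow_add, cpow_one]

lemma conv_mono {f f' g g' : (Fin d → ℤ) → ℝ≥0∞} (h : ∀ x, f x ≤ f' x) (h' : ∀ x, g x ≤ g' x)
    (x : Fin d → ℤ) : conv f g x ≤ conv f' g' x :=
  ENNReal.tsum_le_tsum fun y => mul_le_mul' (h y) (h' _)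

lemma conv_add (f g h : (Fin d → ℤ) → ℝ≥0∞) : conv f (fun x => g x + h x) = fun x => conv f g x + conv f h x := by
  funext x
  simp only [conv, mul_add]
  rw [ENNReal.tsum_add]

lemma add_conv (f g h : (Fin d → ℤ) → ℝ≥0∞) : conv (fun x => f x + g x) h = fun x => conv f h x + conv g h x := by
  rw [conv_comm, conv_add, conv_comm f, conv_comm g]

lemma conv_smul (c : ℝ≥0∞) (f g : (Fin d → ℤ) → ℝ≥0∞) : conv f (fun x => c * g x) = fun x => c * conv f g x := by
  funext x
  simp only [conv]
  rw [← ENNReal.tsum_mul_left]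
  exact tsum_congr fun y => by ring

lemma smul_conv (c : ℝ≥0∞) (f g : (Fin d → ℤ) → ℝ≥0∞) : conv (fun x => c * f x) g = fun x => c * conv f g x := by
  rw [conv_comm, conv_smul, conv_comm f]

lemma cpow_smul (c : ℝ≥0∞) (f : (Fin d → ℤ) → ℝ≥0∞) (n : ℕ) :
    cpow (fun x => c * f x) n = fun x => c ^ n * cpow f n x := by
  induction n with
  | zero => simp [cpow]
  | succ n ih =>
    simp only [cpow]
    rw [ih, smul_conv, conv_smul]
    funext x; rw [pow_succ]; ring

lemma cpow_mono {f g : (Fin d → ℤ) → ℝ≥0∞} (h : ∀ x, f x ≤ g x) (n : ℕ) (x : Fin d → ℤ) :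
    cpow f n x ≤ cpow g n x := by
  induction n generalizing x with
  | zero => exact le_rfl
  | succ n ih => exact conv_mono h ih x

/-- submultiplicative weights -/
lemma conv_weight {W : (Fin d → ℤ) → ℝ≥0∞} (hW : ∀ x y, W (x + y) ≤ W x * W y)
    (f g : (Fin d → ℤ) → ℝ≥0∞) (x : Fin d → ℤ) :
    conv f g x * W x ≤ conv (fun y => f y * W y) (fun y => g y * W y) x := by
  simp only [conv]
  rw [← ENNReal.tsum_mul_right]
  refine ENNReal.tsum_le_tsum fun y => ?_
  have := hW y (x - y)
  rw [add_sub_cancel] at this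
  calc f y * g (x - y) * W x ≤ f y * g (x - y) * (W y * W (x - y)) := by gcongr
    _ = _ := by ring

lemma cpow_weight {W : (Fin d → ℤ) → ℝ≥0∞} (hW : ∀ x y, W (x + y) ≤ W x * W y) (h0 : W 0 ≤ 1)
    (f : (Fin d → ℤ) → ℝ≥0∞) (n : ℕ) (x : Fin d → ℤ) :
    cpow f n x * W x ≤ cpow (fun y => f y * W y) n x := by
  induction n generalizing x with
  | zero =>
    simp only [cpow, dl]
    split_ifs with h
    · simpa [h] using h0
    · simp
  | succ n ih =>
    simp only [cpow]
    exact (conv_weight hW _ _ x).trans (conv_mono (fun _ => le_rfl) ih x)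

lemma mass_conv (f g : (Fin d → ℤ) → ℝ≥0∞) : mass (conv f g) = mass f * mass g := by
  have := tsum_conv_mul f g (fun _ => 1)
  simp only [mul_one] at this
  simp only [mass]
  rw [this]
  simp only [ENNReal.tsum_mul_left, ENNReal.tsum_mul_right]

lemma mass_dl : mass (dl : (Fin d → ℤ) → ℝ≥0∞) = 1 := by
  simp only [mass, dl]
  rw [tsum_eq_single 0] <;> simp

lemma mass_cpow (f : (Fin d → ℤ) → ℝ≥0∞) (n : ℕ) : mass (cpow f n) = mass f ^ n := by
  induction n with
  | zero => simp [cpow, mass_dl]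
  | succ n ih => simp only [cpow]; rw [mass_conv, ih, pow_succ, mul_comm]

lemma le_mass (f : (Fin d → ℤ) → ℝ≥0∞) (x : Fin d → ℤ) : f x ≤ mass f := ENNReal.le_tsum x

lemma mass_mono {f g : (Fin d → ℤ) → ℝ≥0∞} (h : ∀ x, f x ≤ g x) : mass f ≤ mass g :=
  ENNReal.tsum_le_tsum h

lemma mass_smul (c : ℝ≥0∞) (f : (Fin d → ℤ) → ℝ≥0∞) : mass (fun x => c * f x) = c * mass f :=
  ENNReal.tsum_mul_left

/-- `sup g * mass f` bound -/
lemma conv_le_sup {f g : (Fin d → ℤ) → ℝ≥0∞} {B : ℝ≥0∞} (h : ∀ x, g x ≤ B) (x : Fin d → ℤ) :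
    conv f g x ≤ mass f * B := by
  simp only [conv, mass]
  rw [← ENNReal.tsum_mul_right]
  exact ENNReal.tsum_le_tsum fun y => by gcongr; exact h _

/-! supNorm facts -/
lemma supNorm_nonneg (x : Fin d → ℤ) : 0 ≤ supNorm x := Nat.cast_nonneg _

lemma supNorm_zero : supNorm (0 : Fin d → ℤ) = 0 := by
  simp [supNorm]

lemma abs_le_supNorm (x : Fin d → ℤ) (i : Fin d) : |(x i : ℝ)| ≤ supNorm x := by
  have : (x i).natAbs ≤ Finset.univ.sup fun i => (x i).natAbs :=
    Finset.le_sup (f := fun i => (x i).natAbs) (Finset.mem_univ i)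
  have h2 : ((x i).natAbs : ℝ) = |(x i : ℝ)| := by
    rw [Nat.cast_natAbs]; push_cast; rfl
  rw [← h2]; unfold supNorm; exact_mod_cast this

lemma supNorm_le {x : Fin d → ℤ} {r : ℝ} (hr : 0 ≤ r) (h : ∀ i, |(x i : ℝ)| ≤ r) : supNorm x ≤ r := by
  have h2 : ∀ i, (x i).natAbs ≤ ⌊r⌋₊ := fun i => by
    apply Nat.le_floor
    have h2 : ((x i).natAbs : ℝ) = |(x i : ℝ)| := by
      rw [Nat.cast_natAbs]; push_cast; rfl
    rw [h2]; exact h i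
  have : (Finset.univ.sup fun i => (x i).natAbs) ≤ ⌊r⌋₊ := Finset.sup_le fun i _ => h2 i
  unfold supNorm
  calc ((Finset.univ.sup fun i => (x i).natAbs : ℕ) : ℝ) ≤ ⌊r⌋₊ := by exact_mod_cast this
    _ ≤ r := Nat.floor_le hr

lemma supNorm_add (x y : Fin d → ℤ) : supNorm (x + y) ≤ supNorm x + supNorm y := by
  refine supNorm_le (add_nonneg (supNorm_nonneg _) (supNorm_nonneg _)) fun i => ?_
  push_cast [Pi.add_apply]
  exact (abs_add_le _ _).trans (add_le_add (abs_le_supNorm _ _) (abs_le_supNorm _ _))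

lemma supNorm_neg (x : Fin d → ℤ) : supNorm (-x) = supNorm x := by
  simp [supNorm]

lemma exists_supNorm_eq (hd : 0 < d) (x : Fin d → ℤ) : ∃ i, supNorm x = |(x i : ℝ)| := by
  haveI : Nonempty (Fin d) := ⟨⟨0, hd⟩⟩
  obtain ⟨i, -, hi⟩ := Finset.exists_mem_eq_sup (Finset.univ : Finset (Fin d)) Finset.univ_nonempty
    (fun i => (x i).natAbs)
  refine ⟨i, ?_⟩
  unfold supNorm
  rw [hi, Nat.cast_natAbs]; push_cast; rfl

lemma sqNorm_nonneg (x : Fin d → ℤ) : 0 ≤ sqNorm x := Finset.sum_nonneg fun _ _ => sq_nonneg _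

lemma supNorm_sq_le (hd : 0 < d) (x : Fin d → ℤ) : supNorm x ^ 2 ≤ sqNorm x := by
  obtain ⟨i, hi⟩ := exists_supNorm_eq hd x
  rw [hi, sq_abs]
  exact Finset.single_le_sum (f := fun i => ((x i : ℝ)) ^ 2) (fun _ _ => sq_nonneg _) (Finset.mem_univ i)

lemma sqNorm_le (x : Fin d → ℤ) : sqNorm x ≤ d * supNorm x ^ 2 := by
  have : ∀ i ∈ Finset.univ, ((x i : ℝ)) ^ 2 ≤ supNorm x ^ 2 := fun i _ => by
    rw [← sq_abs]; exact pow_le_pow_left₀ (abs_nonneg _) (abs_le_supNorm x i) 2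
  simpa [sqNorm] using Finset.sum_le_sum this

/-- exponential tilt -/
def tl (a : ℝ) (x : Fin d → ℤ) : ℝ≥0∞ := ENNReal.ofReal (Real.exp (a * supNorm x))

lemma tl_add {a : ℝ} (ha : 0 ≤ a) (x y : Fin d → ℤ) : tl a (x + y) ≤ tl a x * tl a y := by
  unfold tl
  rw [← ENNReal.ofReal_mul (Real.exp_pos _).le, ← Real.exp_add]
  apply ENNReal.ofReal_le_ofReal
  apply Real.exp_le_exp.mpr
  rw [← mul_add]
  exact mul_le_mul_of_nonneg_left (supNorm_add x y) ha

lemma tl_zero (a : ℝ) : tl a (0 : Fin d → ℤ) ≤ 1 := by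
  simp [tl, supNorm_zero]

/-- binary max-step lemma -/
lemma max_step {f g : (Fin d → ℤ) → ℝ≥0∞} {r₁ r₂ : ℝ} {A B : ℝ≥0∞}
    (hf : ∀ y, r₁ ≤ supNorm y → f y ≤ A) (hg : ∀ y, r₂ ≤ supNorm y → g y ≤ B)
    (x : Fin d → ℤ) (hx : r₁ + r₂ ≤ supNorm x) :
    conv f g x ≤ A * mass g + mass f * B := by
  have key : ∀ y, f y * g (x - y) ≤ A * g (x - y) + f y * B := by
    intro y
    by_cases h : r₁ ≤ supNorm y
    · exact (mul_le_mul' (hf y h) le_rfl).trans le_self_add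
    · have h2 : r₂ ≤ supNorm (x - y) := by
        have := supNorm_add y (x - y)
        rw [add_sub_cancel] at this
        linarith
      exact (mul_le_mul' le_rfl (hg _ h2)).trans le_add_self
  calc conv f g x ≤ ∑' y, (A * g (x - y) + f y * B) := ENNReal.tsum_le_tsum key
    _ = A * mass g + mass f * B := by
      rw [ENNReal.tsum_add, ENNReal.tsum_mul_left, ENNReal.tsum_mul_right, tsum_refl]; rfl

lemma max_step_cpow {f : (Fin d → ℤ) → ℝ≥0∞} {r : ℝ} {A : ℝ≥0∞}
    (hf : ∀ y, r ≤ supNorm y → f y ≤ A) (n : ℕ) (x : Fin d → ℤ) (hx : (n + 1 : ℕ) * r ≤ supNorm x) :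
    cpow f (n + 1) x ≤ (n + 1 : ℕ) * A * mass f ^ n := by
  induction n generalizing x with
  | zero => simpa [cpow_one] using hf x (by simpa using hx)
  | succ n ih =>
    rw [cpow_succ']
    refine (max_step (r₁ := (n + 1 : ℕ) * r) (r₂ := r) (fun y hy => ih y hy) hf x ?_).trans ?_
    · push_cast at hx ⊢; linarith
    · rw [mass_cpow]
      push_cast
      rw [pow_succ (mass f) n]
      apply le_of_eq; ring

/-- second moment of a convolution, `g` even -/
lemma sm_conv {f g : (Fin d → ℤ) → ℝ≥0∞} (hg : ∀ x, g (-x) = g x) :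
    ∑' x, conv f g x * ENNReal.ofReal (sqNorm x) =
      (∑' x, f x * ENNReal.ofReal (sqNorm x)) * mass g + mass f * ∑' x, g x * ENNReal.ofReal (sqNorm x) := by
  have h1 := tsum_conv_mul f g (fun x => ENNReal.ofReal (sqNorm x))
  have h2 : ∑' x, conv f g x * ENNReal.ofReal (sqNorm x)
      = ∑' y, ∑' z, f y * g z * ENNReal.ofReal (sqNorm (y - z)) := by
    rw [h1]
    refine tsum_congr fun y => ?_
    rw [← (Equiv.neg (Fin d → ℤ)).tsum_eq]
    refine tsum_congr fun z => ?_
    simp [hg, sub_eq_add_neg]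
  have h3 : ∑' x, conv f g x * ENNReal.ofReal (sqNorm x) + ∑' x, conv f g x * ENNReal.ofReal (sqNorm x)
      = 2 * ((∑' x, f x * ENNReal.ofReal (sqNorm x)) * mass g
        + mass f * ∑' x, g x * ENNReal.ofReal (sqNorm x)) := by
    nth_rewrite 1 [h1]
    rw [h2, ← ENNReal.tsum_add]
    have : ∀ y, (∑' z, f y * g z * ENNReal.ofReal (sqNorm (y + z))
        + ∑' z, f y * g z * ENNReal.ofReal (sqNorm (y - z)))
        = 2 * (f y * ENNReal.ofReal (sqNorm y) * mass g + f y * ∑' z, g z * ENNReal.ofReal (sqNorm z)) := by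
      intro y
      rw [← ENNReal.tsum_add, mass, ← ENNReal.tsum_mul_left, ← ENNReal.tsum_mul_left, ← ENNReal.tsum_add,
        ← ENNReal.tsum_mul_left]
      refine tsum_congr fun z => ?_
      have e : ENNReal.ofReal (sqNorm (y + z)) + ENNReal.ofReal (sqNorm (y - z))
          = 2 * (ENNReal.ofReal (sqNorm y) + ENNReal.ofReal (sqNorm z)) := by
        have h2 : (2 : ℝ≥0∞) = ENNReal.ofReal 2 := by simp
        rw [h2, ← ENNReal.ofReal_add (sqNorm_nonneg _) (sqNorm_nonneg _),
          ← ENNReal.ofReal_add (sqNorm_nonneg _) (sqNorm_nonneg _), ← ENNReal.ofReal_mul (by norm_num)]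
        congr 1
        simp only [sqNorm, ← Finset.sum_add_distrib, Finset.mul_sum]
        refine Finset.sum_congr rfl fun i _ => ?_
        push_cast [Pi.add_apply, Pi.sub_apply]; ring
      rw [← mul_add, e]; ring
    simp only [this]
    rw [ENNReal.tsum_mul_left, ENNReal.tsum_add, ENNReal.tsum_mul_right, ENNReal.tsum_mul_right]
    rfl
  rw [← two_mul] at h3
  exact (ENNReal.mul_right_inj (by norm_num) (by norm_num)).mp h3

lemma conv_even {f g : (Fin d → ℤ) → ℝ≥0∞} (hf : ∀ x, f (-x) = f x) (hg : ∀ x, g (-x) = g x) (x : Fin d → ℤ) :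
    conv f g (-x) = conv f g x := by
  simp only [conv]
  rw [← (Equiv.neg (Fin d → ℤ)).tsum_eq]
  refine tsum_congr fun y => ?_
  rw [Equiv.neg_apply, hf, ← hg (x - y)]; congr 2; abel

/-- summability of exponentials on the lattice -/
lemma tsum_pi_prod (d : ℕ) (g : ℤ → ℝ≥0∞) : ∑' x : Fin d → ℤ, ∏ i, g (x i) = (∑' j, g j) ^ d := by
  induction d with
  | zero => simp
  | succ d ih =>
    rw [← (Fin.consEquiv (fun _ => ℤ)).tsum_eq, ENNReal.tsum_prod', pow_succ', ← ih, ← ENNReal.tsum_mul_right]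
    refine tsum_congr fun j => ?_
    rw [← ENNReal.tsum_mul_left]
    refine tsum_congr fun x => ?_
    simp [Fin.consEquiv, Fin.prod_univ_succ]

lemma tsum_int_exp {c : ℝ} (hc : 0 < c) : ∑' j : ℤ, ENNReal.ofReal (Real.exp (-c * |(j : ℝ)|)) ≠ ⊤ := by
  have h : Summable fun j : ℤ => Real.exp (-c * |(j : ℝ)|) := by
    have h1 : Summable fun n : ℕ => Real.exp (-c * (n : ℝ)) := by
      have := Real.summable_exp_nat_mul_iff (a := -c) |>.mpr (by linarith)
      refine this.congr fun n => by ring_nf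
    refine Summable.of_nat_of_neg ?_ ?_
    · refine h1.congr fun n => by simp
    · refine h1.congr fun n => by simp
  exact h.tsum_ofReal_ne_top

lemma tsum_exp_ne_top (d : ℕ) {c : ℝ} (hc : 0 < c) :
    ∑' x : Fin d → ℤ, ENNReal.ofReal (Real.exp (-c * supNorm x)) ≠ ⊤ := by
  rcases Nat.eq_zero_or_pos d with rfl | hd
  · simp
  have hle : ∀ x : Fin d → ℤ, ENNReal.ofReal (Real.exp (-c * supNorm x))
      ≤ ∏ i, ENNReal.ofReal (Real.exp (-(c / d) * |(x i : ℝ)|)) := by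
    intro x
    rw [← ENNReal.ofReal_prod_of_nonneg (fun i _ => (Real.exp_pos _).le), ← Real.exp_sum]
    apply ENNReal.ofReal_le_ofReal
    apply Real.exp_le_exp.mpr
    have : ∑ i, |(x i : ℝ)| ≤ d * supNorm x := by
      simpa using Finset.sum_le_sum fun i (_ : i ∈ Finset.univ) => abs_le_supNorm x i
    rw [← Finset.mul_sum]
    have hd' : (0:ℝ) < d := by exact_mod_cast hd
    have : (c / d) * ∑ i, |(x i : ℝ)| ≤ (c / d) * (d * supNorm x) := by gcongr
    have e : (c / d) * (d * supNorm x) = c * supNorm x := by field_simp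
    linarith
  refine ne_top_of_le_ne_top ?_ (ENNReal.tsum_le_tsum hle)
  rw [tsum_pi_prod d (fun j => ENNReal.ofReal (Real.exp (-(c / d) * |(j : ℝ)|)))]
  exact ENNReal.pow_ne_top (tsum_int_exp (by positivity))

end Conv
end Blackbox
end

section
namespace Blackbox
open Model

variable {d : ℕ} {c₀ : ℝ}

lemma IsSymmFun.even {f : (Fin d → ℤ) → ℝ≥0∞} (h : IsSymmFun f) (x : Fin d → ℤ) : f (-x) = f x := by
  have := h 1 (fun _ => true) x
  rw [← this]; congr 1; funext i; simp

/-- the signed permutation as an equivalence -/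
def sgnEquiv (π : Equiv.Perm (Fin d)) (e : Fin d → Bool) : (Fin d → ℤ) ≃ (Fin d → ℤ) where
  toFun x := fun i => (if e i then -1 else 1) * x (π i)
  invFun y := fun i => (if e (π.symm i) then -1 else 1) * y (π.symm i)
  left_inv x := by
    funext i; by_cases h : e (π.symm i) <;> simp [h]
  right_inv x := by
    funext i; by_cases h : e i <;> simp [h]

lemma sgnEquiv_sub (π : Equiv.Perm (Fin d)) (e : Fin d → Bool) (x y : Fin d → ℤ) :
    sgnEquiv π e (x - y) = sgnEquiv π e x - sgnEquiv π e y := by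
  funext i; simp only [sgnEquiv, Equiv.coe_fn_mk, Pi.sub_apply]; ring

lemma IsSymmFun.conv {f g : (Fin d → ℤ) → ℝ≥0∞} (hf : IsSymmFun f) (hg : IsSymmFun g) :
    IsSymmFun (conv f g) := by
  intro π e x
  change Blackbox.conv f g (sgnEquiv π e x) = _
  simp only [Blackbox.conv]
  rw [← (sgnEquiv π e).tsum_eq]
  refine tsum_congr fun y => ?_
  rw [← sgnEquiv_sub]
  exact congrArg₂ (· * ·) (hf π e y) (hg π e (x - y))

/-- subcritical -/
def Sub (M : Model d c₀) (t : ℝ) : Prop := 0 ≤ t ∧ ENNReal.ofReal t < M.βc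

def Jf (M : Model d c₀) (x : Fin d → ℤ) : ℝ≥0∞ := ENNReal.ofReal (M.K.J x)

def sq (x : Fin d → ℤ) : ℝ≥0∞ := ENNReal.ofReal (sqNorm x)

lemma F_eq (M : Model d c₀) (t : ℝ) : M.F t = conv (Jf M) (M.G t) := rfl

lemma mass_J (M : Model d c₀) : mass (Jf M) = 1 := by
  unfold mass Jf
  rw [← ENNReal.ofReal_tsum_of_nonneg M.K.nonneg M.K.summable, M.K.norm_one, ENNReal.ofReal_one]

lemma J_symm (M : Model d c₀) : IsSymmFun (Jf M) := fun π e x => by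
  unfold Jf; rw [M.K.symm π e x]

lemma F_symm (M : Model d c₀) (t : ℝ) : IsSymmFun (M.F t) := (J_symm M).conv (M.symm t)

lemma mass_F (M : Model d c₀) (t : ℝ) : mass (M.F t) = M.chi t := by
  rw [F_eq, mass_conv, mass_J, one_mul]; rfl

lemma G_zero (M : Model d c₀) : M.G 0 = dl := by
  funext x; rw [M.init]; rfl

lemma F_zero (M : Model d c₀) : M.F 0 = Jf M := by
  rw [F_eq, G_zero, conv_dl]

lemma chi_zero (M : Model d c₀) : M.chi 0 = 1 := by
  rw [← mass_F, F_zero, mass_J]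

lemma Sub.mono {M : Model d c₀} {t s : ℝ} (h : Sub M t) (h0 : 0 ≤ s) (hs : s ≤ t) : Sub M s :=
  ⟨h0, (ENNReal.ofReal_le_ofReal hs).trans_lt h.2⟩

lemma sub_zero' (M : Model d c₀) : Sub M 0 := ⟨le_rfl, by simpa using M.βc_pos⟩

/-- sigma squared as ENNReal -/
lemma sq_J (M : Model d c₀) : ∑' x, Jf M x * sq x = ENNReal.ofReal (M.sigma ^ 2) := by
  have h0 : 0 ≤ ∑' x, sqNorm x * M.K.J x := tsum_nonneg fun x => mul_nonneg (sqNorm_nonneg x) (M.K.nonneg x)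
  unfold Model.sigma AdmissibleKernel.sigma
  rw [Real.sq_sqrt h0, ENNReal.ofReal_tsum_of_nonneg (fun x => mul_nonneg (sqNorm_nonneg x) (M.K.nonneg x))
    M.K.summable_sq]
  refine tsum_congr fun x => ?_
  rw [Jf, sq, mul_comm, ENNReal.ofReal_mul (sqNorm_nonneg x)]

lemma sigma_pos (M : Model d c₀) (hc : 0 < c₀) : 0 < M.sigma := by
  have := M.K.sigma_lower
  have h2 := M.K.R_ge_one
  exact lt_of_lt_of_le (by positivity) this

lemma sqNorm_le_exp (x : Fin d → ℤ) {c : ℝ} (hc : 0 < c) :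
    sqNorm x ≤ (d * (2 / c^2)) * Real.exp (c * supNorm x) := by
  have h1 := sqNorm_le x
  have h2 := Real.quadratic_le_exp_of_nonneg (x := c * supNorm x) (mul_nonneg hc.le (supNorm_nonneg x))
  have h3 : (c * supNorm x)^2 / 2 ≤ Real.exp (c * supNorm x) := by
    have := mul_nonneg hc.le (supNorm_nonneg x); linarith
  have h4 : supNorm x ^ 2 = (2/c^2) * ((c * supNorm x)^2 / 2) := by field_simp
  calc sqNorm x ≤ d * supNorm x ^ 2 := h1
    _ = d * (2/c^2) * ((c * supNorm x)^2 / 2) := by rw [h4]; ring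
    _ ≤ _ := by gcongr

lemma G_finite {M : Model d c₀} {t : ℝ} (h : Sub M t) :
    M.chi t ≠ ⊤ ∧ ∑' x, M.G t x * sq x ≠ ⊤ := by
  obtain ⟨C, hC, c, hc, hG⟩ := M.expDecay h.1 h.2
  constructor
  · refine ne_top_of_le_ne_top ?_ (ENNReal.tsum_le_tsum hG)
    simp_rw [ENNReal.ofReal_mul hC.le]
    rw [ENNReal.tsum_mul_left]
    exact ENNReal.mul_ne_top ENNReal.ofReal_ne_top (tsum_exp_ne_top d hc)
  · have : ∀ x, M.G t x * sq x ≤ ENNReal.ofReal (C * (d * (2 / (c/2)^2))) *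
        ENNReal.ofReal (Real.exp (-(c/2) * supNorm x)) := by
      intro x
      refine (mul_le_mul' (hG x) (ENNReal.ofReal_le_ofReal (sqNorm_le_exp x (half_pos hc)))).trans ?_
      rw [← ENNReal.ofReal_mul (by positivity), ← ENNReal.ofReal_mul (by positivity)]
      apply ENNReal.ofReal_le_ofReal
      apply le_of_eq
      have : Real.exp (-c * supNorm x) * Real.exp (c/2 * supNorm x) = Real.exp (-(c/2) * supNorm x) := by
        rw [← Real.exp_add]; ring_nf
      rw [← this]; ring
    refine ne_top_of_le_ne_top ?_ (ENNReal.tsum_le_tsum this)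
    rw [ENNReal.tsum_mul_left]
    exact ENNReal.mul_ne_top ENNReal.ofReal_ne_top (tsum_exp_ne_top d (half_pos hc))

/-- S = second moment of F -/
def Ss (M : Model d c₀) (t : ℝ) : ℝ≥0∞ := ∑' x, M.F t x * sq x

lemma Ss_eq (M : Model d c₀) (t : ℝ) :
    Ss M t = ENNReal.ofReal (M.sigma ^ 2) * M.chi t + ∑' x, M.G t x * sq x := by
  unfold Ss
  rw [F_eq]
  have := sm_conv (f := Jf M) (g := M.G t) (M.symm t).even
  have h2 := sq_J M
  unfold sq at *
  rw [this, h2, mass_J, one_mul]; rfl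

lemma Ss_ne_top {M : Model d c₀} {t : ℝ} (h : Sub M t) : Ss M t ≠ ⊤ := by
  rw [Ss_eq]
  exact ENNReal.add_ne_top.mpr ⟨ENNReal.mul_ne_top ENNReal.ofReal_ne_top (G_finite h).1, (G_finite h).2⟩

def X (M : Model d c₀) (t : ℝ) : ℝ := (M.chi t).toReal
def S (M : Model d c₀) (t : ℝ) : ℝ := (Ss M t).toReal

lemma chi_eq {M : Model d c₀} {t : ℝ} (h : Sub M t) : M.chi t = ENNReal.ofReal (X M t) :=
  (ENNReal.ofReal_toReal (G_finite h).1).symm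
lemma Ss_eq' {M : Model d c₀} {t : ℝ} (h : Sub M t) : Ss M t = ENNReal.ofReal (S M t) :=
  (ENNReal.ofReal_toReal (Ss_ne_top h)).symm

lemma chi_mono {M : Model d c₀} {s t : ℝ} (h : Sub M t) (h0 : 0 ≤ s) (hs : s ≤ t) : M.chi s ≤ M.chi t :=
  ENNReal.tsum_le_tsum fun x => M.mono x h0 hs h.2.le

lemma X_mono {M : Model d c₀} {s t : ℝ} (h : Sub M t) (h0 : 0 ≤ s) (hs : s ≤ t) : X M s ≤ X M t :=
  ENNReal.toReal_mono (G_finite h).1 (chi_mono h h0 hs)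

lemma X_zero (M : Model d c₀) : X M 0 = 1 := by simp [X, chi_zero]

lemma one_le_X {M : Model d c₀} {t : ℝ} (h : Sub M t) : 1 ≤ X M t := by
  rw [← X_zero M]; exact X_mono h le_rfl h.1

lemma X_pos {M : Model d c₀} {t : ℝ} (h : Sub M t) : 0 < X M t := by linarith [one_le_X h]

lemma sigma_sq_X_le {M : Model d c₀} {t : ℝ} (h : Sub M t) : M.sigma ^ 2 * X M t ≤ S M t := by
  have h1 : ENNReal.ofReal (M.sigma ^ 2) * M.chi t ≤ Ss M t := by rw [Ss_eq]; exact le_self_add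
  have := ENNReal.toReal_mono (Ss_ne_top h) h1
  rwa [ENNReal.toReal_mul, ENNReal.toReal_ofReal (sq_nonneg _)] at this

lemma S_pos {M : Model d c₀} (hc : 0 < c₀) {t : ℝ} (h : Sub M t) : 0 < S M t :=
  lt_of_lt_of_le (mul_pos (pow_pos (sigma_pos M hc) 2) (X_pos h)) (sigma_sq_X_le h)

lemma xiSq_eq {M : Model d c₀} {t : ℝ} (h : Sub M t) : M.xiSq t = ENNReal.ofReal (S M t / X M t) := by
  unfold Model.xiSq
  rw [ENNReal.ofReal_div_of_pos (X_pos h), ← chi_eq h, ← Ss_eq' h]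
  unfold Ss sq
  simp_rw [mul_comm]

lemma xi_sq {M : Model d c₀} {t : ℝ} (h : Sub M t) : M.xi t ^ 2 = S M t / X M t := by
  have h0 : 0 ≤ S M t / X M t := div_nonneg ENNReal.toReal_nonneg ENNReal.toReal_nonneg
  unfold Model.xi
  rw [xiSq_eq h, ENNReal.toReal_ofReal h0, Real.sq_sqrt h0]

lemma xi_nonneg (M : Model d c₀) (t : ℝ) : 0 ≤ M.xi t := Real.sqrt_nonneg _

lemma sigma_le_xi {M : Model d c₀} {t : ℝ} (hc : 0 < c₀) (h : Sub M t) : M.sigma ≤ M.xi t := by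
  refine abs_le_of_sq_le_sq' ?_ (xi_nonneg M t) |>.2
  rw [xi_sq h, le_div_iff₀ (X_pos h)]; exact sigma_sq_X_le h

lemma xi_pos {M : Model d c₀} {t : ℝ} (hc : 0 < c₀) (h : Sub M t) : 0 < M.xi t :=
  (sigma_pos M hc).trans_le (sigma_le_xi hc h)

lemma xi_zero (M : Model d c₀) (hc : 0 < c₀) : M.xi 0 = M.sigma := by
  have h : M.xi 0 ^ 2 = M.sigma ^ 2 := by
    rw [xi_sq (sub_zero' M), X_zero, div_one]
    unfold S Ss
    rw [F_zero, sq_J, ENNReal.toReal_ofReal (sq_nonneg _)]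
  exact (pow_left_inj₀ (xi_nonneg M 0) (sigma_pos M hc).le two_ne_zero).mp h

lemma conv3_eq (f g h : (Fin d → ℤ) → ℝ≥0∞) (x : Fin d → ℤ) :
    ∑' p : (Fin d → ℤ) × (Fin d → ℤ), f p.1 * g p.2 * h (x - p.1 - p.2) = conv (conv f g) h x := by
  rw [ENNReal.tsum_prod', conv_assoc]
  simp only [conv, ← ENNReal.tsum_mul_left]
  exact tsum_congr fun y => tsum_congr fun z => by ring

lemma I1_conv {M : Model d c₀} {s t : ℝ} (h : Sub M t) (h0 : 0 ≤ s) (hs : s ≤ t) (x : Fin d → ℤ) :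
    M.G t x ≤ M.G s x + ENNReal.ofReal (t - s) * conv (M.F s) (M.G t) x := by
  have := M.I1 h0 hs h.2 x
  rw [conv3_eq (M.G s) (fun y => ENNReal.ofReal (M.K.J y)) (M.G t) x] at this
  rwa [F_eq, conv_comm (Jf M)]

lemma F_rec {M : Model d c₀} {s t : ℝ} (h : Sub M t) (h0 : 0 ≤ s) (hs : s ≤ t) (x : Fin d → ℤ) :
    M.F t x ≤ M.F s x + ENNReal.ofReal (t - s) * conv (M.F s) (M.F t) x := by
  have := conv_mono (f := Jf M) (fun _ => le_rfl) (I1_conv h h0 hs) x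
  rw [← F_eq, conv_add, conv_smul, ← conv_assoc, conv_comm (Jf M) (M.F s), conv_assoc, ← F_eq, ← F_eq] at this
  exact this

lemma F_iter {M : Model d c₀} {s t : ℝ} (h : Sub M t) (h0 : 0 ≤ s) (hs : s ≤ t) (n : ℕ) (x : Fin d → ℤ) :
    M.F t x ≤ ∑ k ∈ Finset.range n, ENNReal.ofReal (t - s) ^ k * cpow (M.F s) (k + 1) x
      + ENNReal.ofReal (t - s) ^ n * conv (cpow (M.F s) n) (M.F t) x := by
  induction n with
  | zero => simp [cpow, dl_conv]
  | succ n ih =>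
    refine ih.trans ?_
    rw [Finset.sum_range_succ, add_assoc]
    gcongr
    have := conv_mono (f := cpow (M.F s) n) (fun _ => le_rfl) (F_rec h h0 hs) x
    rw [conv_add, conv_smul, ← conv_assoc, ← cpow_succ'] at this
    refine (mul_le_mul_right this _).trans (le_of_eq ?_)
    ring

lemma F_series {M : Model d c₀} {s t : ℝ} (h : Sub M t) (h0 : 0 ≤ s) (hs : s ≤ t)
    (hl : ENNReal.ofReal (t - s) * M.chi s < 1) (x : Fin d → ℤ) :
    M.F t x ≤ ∑' k, ENNReal.ofReal (t - s) ^ k * cpow (M.F s) (k + 1) x := by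
  set q := ENNReal.ofReal (t - s) * M.chi s
  have hb : ∀ n : ℕ, M.F t x ≤ ∑' k, ENNReal.ofReal (t - s) ^ k * cpow (M.F s) (k + 1) x + q ^ n * M.chi t := by
    intro n
    refine (F_iter h h0 hs n x).trans (add_le_add (ENNReal.sum_le_tsum _) ?_)
    have : conv (cpow (M.F s) n) (M.F t) x ≤ M.chi s ^ n * M.chi t := by
      refine (conv_le_sup (B := M.chi t) (fun y => ?_) x).trans (le_of_eq ?_)
      · rw [← mass_F]; exact le_mass _ _
      · rw [mass_cpow, mass_F]
    refine (mul_le_mul_right this _).trans (le_of_eq ?_)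
    simp only [q]; ring
  have hlim : Filter.Tendsto (fun n : ℕ => ∑' k, ENNReal.ofReal (t - s) ^ k * cpow (M.F s) (k + 1) x + q ^ n * M.chi t)
      Filter.atTop (nhds (∑' k, ENNReal.ofReal (t - s) ^ k * cpow (M.F s) (k + 1) x + 0 * M.chi t)) := by
    refine Filter.Tendsto.const_add _ ?_
    exact ENNReal.Tendsto.mul_const (ENNReal.tendsto_pow_atTop_nhds_zero_of_lt_one hl) (Or.inr (G_finite h).1)
  have := ge_of_tendsto' hlim hb
  simpa using this

/-- Lipschitz type bounds -/
lemma X_step {M : Model d c₀} {s t : ℝ} (h : Sub M t) (h0 : 0 ≤ s) (hs : s ≤ t) :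
    X M t ≤ X M s + (t - s) * (X M s * X M t) := by
  have h1 : M.chi t ≤ M.chi s + ENNReal.ofReal (t - s) * (M.chi s * M.chi t) := by
    have := ENNReal.tsum_le_tsum (F_rec h h0 hs)
    rw [ENNReal.tsum_add, ENNReal.tsum_mul_left] at this
    have h3 := mass_conv (M.F s) (M.F t)
    simp only [mass_F] at h3
    unfold mass at h3
    rw [h3] at this
    simpa [← mass_F, mass] using this
  have hs' := h.mono h0 hs
  rw [chi_eq h, chi_eq hs', ← ENNReal.ofReal_mul (X_pos hs').le, ← ENNReal.ofReal_mul (by linarith),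
    ← ENNReal.ofReal_add (X_pos hs').le (mul_nonneg (by linarith) (mul_pos (X_pos hs') (X_pos h)).le)] at h1
  exact (ENNReal.ofReal_le_ofReal_iff (add_nonneg (X_pos hs').le (mul_nonneg (by linarith) (mul_pos (X_pos hs') (X_pos h)).le))).mp h1

lemma S_nonneg (M : Model d c₀) (t : ℝ) : 0 ≤ S M t := ENNReal.toReal_nonneg

lemma S_step {M : Model d c₀} {s t : ℝ} (h : Sub M t) (h0 : 0 ≤ s) (hs : s ≤ t) :
    S M t ≤ S M s + (t - s) * (S M s * X M t + X M s * S M t) := by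
  have hs' := h.mono h0 hs
  have h1 : Ss M t ≤ Ss M s + ENNReal.ofReal (t - s) * (Ss M s * M.chi t + M.chi s * Ss M t) := by
    have := ENNReal.tsum_le_tsum (fun x => mul_le_mul_left (F_rec h h0 hs x) (sq x))
    simp_rw [add_mul, mul_assoc] at this
    rw [ENNReal.tsum_add, ENNReal.tsum_mul_left] at this
    have h3 := sm_conv (f := M.F s) (g := M.F t) (F_symm M t).even
    unfold sq at this
    rw [h3, mass_F, mass_F] at this
    exact this
  have e1 : 0 ≤ S M s * X M t := mul_nonneg (S_nonneg _ _) (X_pos h).le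
  have e2 : 0 ≤ X M s * S M t := mul_nonneg (X_pos hs').le (S_nonneg _ _)
  have e3 : 0 ≤ (t - s) * (S M s * X M t + X M s * S M t) := mul_nonneg (by linarith) (add_nonneg e1 e2)
  rw [Ss_eq' h, Ss_eq' hs', chi_eq h, chi_eq hs', ← ENNReal.ofReal_mul (S_nonneg _ _),
    ← ENNReal.ofReal_mul (X_pos hs').le, ← ENNReal.ofReal_add e1 e2, ← ENNReal.ofReal_mul (by linarith),
    ← ENNReal.ofReal_add (S_nonneg _ _) e3] at h1
  exact (ENNReal.ofReal_le_ofReal_iff (add_nonneg (S_nonneg _ _) e3)).mp h1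

lemma F_mono {M : Model d c₀} {s t : ℝ} (h : Sub M t) (h0 : 0 ≤ s) (hs : s ≤ t) (x : Fin d → ℤ) : M.F s x ≤ M.F t x :=
  conv_mono (fun _ => le_rfl) (fun x => M.mono x h0 hs h.2.le) x

lemma S_mono {M : Model d c₀} {s t : ℝ} (h : Sub M t) (h0 : 0 ≤ s) (hs : s ≤ t) : S M s ≤ S M t :=
  ENNReal.toReal_mono (Ss_ne_top h) (ENNReal.tsum_le_tsum fun x => mul_le_mul_left (F_mono h h0 hs x) _)

lemma cont_of_lip {f : ℝ → ℝ} {b K : ℝ} (hK : ∀ s t, 0 ≤ s → s ≤ t → t ≤ b → |f t - f s| ≤ K * (t - s)) :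
    ContinuousOn f (Set.Icc 0 b) := by
  have : LipschitzOnWith (Real.toNNReal K) f (Set.Icc 0 b) := by
    refine LipschitzOnWith.of_dist_le_mul fun x hx y hy => ?_
    rw [Real.dist_eq, Real.dist_eq]
    have hKK : K ≤ (Real.toNNReal K : ℝ) := Real.le_coe_toNNReal K
    rcases le_total x y with hxy | hxy
    · rw [abs_sub_comm (f x), abs_sub_comm x, abs_of_nonneg (sub_nonneg.mpr hxy)]
      exact (hK x y hx.1 hxy hy.2).trans (mul_le_mul_of_nonneg_right hKK (sub_nonneg.mpr hxy))
    · rw [abs_of_nonneg (sub_nonneg.mpr hxy)]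
      exact (hK y x hy.1 hxy hx.2).trans (mul_le_mul_of_nonneg_right hKK (sub_nonneg.mpr hxy))
  exact this.continuousOn

lemma X_cont {M : Model d c₀} {b : ℝ} (h : Sub M b) : ContinuousOn (X M) (Set.Icc 0 b) := by
  refine cont_of_lip (K := X M b * X M b) fun s t h0 hst htb => ?_
  have ht := h.mono (h0.trans hst) htb
  have hs := h.mono h0 (hst.trans htb)
  rw [abs_of_nonneg (sub_nonneg.mpr (X_mono ht h0 hst))]
  have h1 := X_step ht h0 hst
  have h2 : X M s * X M t ≤ X M b * X M b :=
    mul_le_mul (X_mono h h0 (hst.trans htb)) (X_mono h (h0.trans hst) htb) (X_pos ht).le (X_pos h).le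
  have := mul_le_mul_of_nonneg_left h2 (sub_nonneg.mpr hst)
  linarith

lemma S_cont {M : Model d c₀} {b : ℝ} (h : Sub M b) : ContinuousOn (S M) (Set.Icc 0 b) := by
  refine cont_of_lip (K := S M b * X M b + X M b * S M b) fun s t h0 hst htb => ?_
  have ht := h.mono (h0.trans hst) htb
  have hs := h.mono h0 (hst.trans htb)
  rw [abs_of_nonneg (sub_nonneg.mpr (S_mono ht h0 hst))]
  have h1 := S_step ht h0 hst
  have h2 : S M s * X M t ≤ S M b * X M b :=
    mul_le_mul (S_mono h h0 (hst.trans htb)) (X_mono h (h0.trans hst) htb) (X_pos ht).le (S_nonneg _ _)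
  have h3 : X M s * S M t ≤ X M b * S M b :=
    mul_le_mul (X_mono h h0 (hst.trans htb)) (S_mono h (h0.trans hst) htb) (S_nonneg _ _) (X_pos h).le
  have := mul_le_mul_of_nonneg_left (add_le_add h2 h3) (sub_nonneg.mpr hst)
  linarith

/-- predecessor -/
lemma pred_exists {M : Model d c₀} {t θ : ℝ} (h : Sub M t) (hθ : θ < 1) (ht : 1 - θ < t) :
    ∃ s, 0 ≤ s ∧ s ≤ t ∧ (t - s) * X M s = 1 - θ := by
  have hc : ContinuousOn (fun s => (t - s) * X M s) (Set.Icc 0 t) :=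
    (continuousOn_const.sub continuousOn_id).mul (X_cont h)
  have := intermediate_value_Icc' h.1 hc
  have hm : (1 - θ) ∈ Set.Icc ((t - t) * X M t) ((t - 0) * X M 0) := by
    rw [X_zero]; constructor <;> linarith
  obtain ⟨s, hs, hs'⟩ := this hm
  exact ⟨s, hs.1, hs.2, hs'⟩

lemma pred_induct {M : Model d c₀} {β θ : ℝ} (h : Sub M β) (hθ : θ < 1) (P : ℝ → Prop)
    (h0 : ∀ t, 0 ≤ t → t ≤ β → t ≤ 1 - θ → P t)
    (hs : ∀ s t, 0 ≤ s → s ≤ t → t ≤ β → (t - s) * X M s = 1 - θ → P s → P t) :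
    ∀ t, 0 ≤ t → t ≤ β → P t := by
  have hX := X_pos h
  set e := (1 - θ) / X M β with he
  have hepos : 0 < e := div_pos (by linarith) hX
  have key : ∀ n : ℕ, ∀ t, 0 ≤ t → t ≤ β → t ≤ n * e → P t := by
    intro n
    induction n with
    | zero => intro t ht0 htb hte; exact h0 t ht0 htb (by simp at hte; linarith)
    | succ n ih =>
      intro t ht0 htb hte
      by_cases hle : t ≤ 1 - θ
      · exact h0 t ht0 htb hle
      · obtain ⟨s, hs0, hst, hsX⟩ := pred_exists (h.mono ht0 htb) hθ (not_le.mp hle)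
        refine hs s t hs0 hst htb hsX (ih s hs0 (hst.trans htb) ?_)
        have hXs : X M s ≤ X M β := X_mono h hs0 (hst.trans htb)
        have : e ≤ t - s := by
          rw [he, div_le_iff₀ hX, ← hsX]
          exact mul_le_mul_of_nonneg_left hXs (sub_nonneg.mpr hst)
        push_cast at hte; linarith
  intro t ht0 htb
  obtain ⟨n, hn⟩ := exists_nat_ge (t / e)
  exact key n t ht0 htb (by rwa [div_le_iff₀ hepos] at hn)

/-- error hypotheses -/
def Err (M : Model d c₀) (δ β : ℝ) : Prop :=
  Sub M β ∧ ∀ t, 0 ≤ t → t ≤ β → (∑' x, ENNReal.ofReal (M.H t x) ≤ ENNReal.ofReal δ) ∧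
    (∑' x, ENNReal.ofReal (M.H t x) * sq x ≤ ENNReal.ofReal (δ * M.xi t ^ 2))

lemma Err.mono {M : Model d c₀} {δ β t : ℝ} (h : Err M δ β) (h0 : 0 ≤ t) (ht : t ≤ β) : Err M δ t :=
  ⟨h.1.mono h0 ht, fun s hs0 hst => h.2 s hs0 (hst.trans ht)⟩

lemma Err.weaken {M : Model d c₀} {δ δ' β : ℝ} (h : Err M δ β) (hδ : δ ≤ δ') : Err M δ' β :=
  ⟨h.1, fun s hs0 hst => ⟨(h.2 s hs0 hst).1.trans (ENNReal.ofReal_le_ofReal hδ),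
    (h.2 s hs0 hst).2.trans (ENNReal.ofReal_le_ofReal (mul_le_mul_of_nonneg_right hδ (sq_nonneg _)))⟩⟩

lemma H_summable {M : Model d c₀} {t : ℝ} (h : Sub M t) :
    Summable (M.H t) ∧ Summable (fun x => sqNorm x * M.H t x) := by
  obtain ⟨C, hC, c, hc, hH⟩ := M.H_expDecay h.1 h.2
  have key : ∀ e > (0:ℝ), Summable fun x : Fin d → ℤ => Real.exp (-e * supNorm x) := fun e he => by
    have := ENNReal.summable_toReal (tsum_exp_ne_top d he)
    refine this.congr fun x => ENNReal.toReal_ofReal (Real.exp_pos _).le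
  constructor
  · exact Summable.of_nonneg_of_le (M.H_nonneg t) hH ((key c hc).mul_left C)
  · refine Summable.of_nonneg_of_le (fun x => mul_nonneg (sqNorm_nonneg x) (M.H_nonneg t x)) (fun x => ?_)
      ((key (c/2) (half_pos hc)).mul_left ((d * (2 / (c/2)^2)) * C))
    refine (mul_le_mul (sqNorm_le_exp x (half_pos hc)) (hH x) (M.H_nonneg t x) (by positivity)).trans (le_of_eq ?_)
    have : Real.exp (c/2 * supNorm x) * Real.exp (-c * supNorm x) = Real.exp (-(c/2) * supNorm x) := by
      rw [← Real.exp_add]; ring_nf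
    rw [← this]; ring

lemma err_of_lt {M : Model d c₀} (hc : 0 < c₀) {δ β : ℝ} (hδ : 0 < δ) (h0 : 0 ≤ β) (hβ : β < M.betaOf δ) : Err M δ β := by
  obtain ⟨b, hb, hbb⟩ : ∃ b ∈ {β : ℝ | 0 ≤ β ∧ ENNReal.ofReal β < M.βc ∧ M.E β < ENNReal.ofReal δ}, β < b := by
    unfold Model.betaOf at hβ
    by_cases hne : {β : ℝ | 0 ≤ β ∧ ENNReal.ofReal β < M.βc ∧ M.E β < ENNReal.ofReal δ}.Nonempty
    · exact exists_lt_of_lt_csSup hne hβ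
    · rw [Set.not_nonempty_iff_eq_empty.mp hne, Real.sSup_empty] at hβ; linarith
  have hsub : Sub M b := ⟨hb.1, hb.2.1⟩
  refine ⟨hsub.mono h0 hbb.le, fun t ht0 htb => ?_⟩
  have ht := hsub.mono ht0 (htb.trans hbb.le)
  have hE : ENNReal.ofReal (∑' x, M.H t x) + ENNReal.ofReal (∑' x, sqNorm x * M.H t x) / M.xiSq t ≤ ENNReal.ofReal δ := by
    refine le_trans ?_ hb.2.2.le
    unfold Model.E
    exact le_iSup₂_of_le t ⟨ht0, htb.trans hbb.le⟩ le_rfl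
  have hs := H_summable ht
  constructor
  · rw [← ENNReal.ofReal_tsum_of_nonneg (M.H_nonneg t) hs.1]
    exact le_self_add.trans hE
  · have h1 := le_add_self.trans hE
    have h2 : M.xiSq t = ENNReal.ofReal (M.xi t ^ 2) := by rw [xiSq_eq ht, xi_sq ht]
    rw [h2, ENNReal.div_le_iff (by simpa using (xi_pos hc ht).ne') ENNReal.ofReal_ne_top,
      ← ENNReal.ofReal_mul hδ.le, ENNReal.ofReal_tsum_of_nonneg (fun x => mul_nonneg (sqNorm_nonneg x) (M.H_nonneg t x)) hs.2] at h1
    refine le_trans (le_of_eq (tsum_congr fun x => ?_)) h1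
    rw [sq, mul_comm, ENNReal.ofReal_mul (sqNorm_nonneg x)]

end Blackbox
end

section
namespace Blackbox
open Model Filter Topology

variable {d : ℕ} {c₀ : ℝ}

def Hf (M : Model d c₀) (t : ℝ) (x : Fin d → ℤ) : ℝ≥0∞ := ENNReal.ofReal (M.H t x)

lemma G_ne_top {M : Model d c₀} {t : ℝ} (h : Sub M t) (x : Fin d → ℤ) : M.G t x ≠ ⊤ :=
  ne_top_of_le_ne_top (G_finite h).1 (le_mass (M.G t) x)

lemma mass_H_ne_top {M : Model d c₀} {t : ℝ} (h : Sub M t) : mass (Hf M t) ≠ ⊤ := by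
  unfold mass Hf
  rw [← ENNReal.ofReal_tsum_of_nonneg (M.H_nonneg t) (H_summable h).1]
  exact ENNReal.ofReal_ne_top

lemma conv3_real (f g h : (Fin d → ℤ) → ℝ≥0∞) (hf : mass f ≠ ⊤) (hg : mass g ≠ ⊤) (hh : mass h ≠ ⊤)
    (x : Fin d → ℤ) :
    HasSum (fun p : (Fin d → ℤ) × (Fin d → ℤ) => (f p.1).toReal * (g p.2).toReal * (h (x - p.1 - p.2)).toReal)
      (conv (conv f g) h x).toReal := by
  have hne : ∑' p : (Fin d → ℤ) × (Fin d → ℤ), f p.1 * g p.2 * h (x - p.1 - p.2) ≠ ⊤ := by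
    rw [conv3_eq]
    refine ne_top_of_le_ne_top ?_ (le_mass _ x)
    rw [mass_conv, mass_conv]
    exact ENNReal.mul_ne_top (ENNReal.mul_ne_top hf hg) hh
  rw [← conv3_eq]
  have := (ENNReal.summable_toReal hne).hasSum
  rw [← ENNReal.tsum_toReal_eq (fun a => ENNReal.ne_top_of_tsum_ne_top hne a)] at this
  simpa [ENNReal.toReal_mul] using this

lemma G'_nonneg {M : Model d c₀} {t : ℝ} (h : Sub M t) (x : Fin d → ℤ) : 0 ≤ M.G' t x := by
  have hd := (M.deriv x h.1 h.2).mono (s := Set.Ioi t) (fun y hy => h.1.trans (le_of_lt hy))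
  rw [hasDerivWithinAt_iff_tendsto_slope' (by simp)] at hd
  obtain ⟨r, hr0, hr⟩ := ENNReal.lt_iff_exists_real_btwn.mp h.2
  have hlt : t < r := (ENNReal.ofReal_lt_ofReal_iff_of_nonneg h.1).mp hr.1
  have hev : ∀ᶠ z in 𝓝[>] t, 0 ≤ slope (fun u => (M.G u x).toReal) t z := by
    filter_upwards [Ioo_mem_nhdsGT hlt] with z hz
    have hz' : Sub M z := ⟨h.1.trans hz.1.le, (ENNReal.ofReal_le_ofReal hz.2.le).trans_lt hr.2⟩
    rw [slope_def_field]
    refine div_nonneg (sub_nonneg.mpr (ENNReal.toReal_mono (G_ne_top hz' x) ?_)) (sub_nonneg.mpr hz.1.le)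
    exact M.mono x h.1 hz.1.le hz'.2.le
  exact ge_of_tendsto hd hev

lemma I2_conv {M : Model d c₀} {t : ℝ} (h : Sub M t) (x : Fin d → ℤ) :
    conv (M.F t) (M.G t) x ≤ ENNReal.ofReal (M.G' t x) + conv (conv (M.G t) (Hf M t)) (M.G t) x := by
  have hG : mass (M.G t) ≠ ⊤ := (G_finite h).1
  have hJ : mass (Jf M) ≠ ⊤ := by rw [mass_J]; exact ENNReal.one_ne_top
  have h1 := conv3_real (M.G t) (Jf M) (M.G t) hG hJ hG x
  have h2 := conv3_real (M.G t) (Hf M t) (M.G t) hG (mass_H_ne_top h) hG x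
  have h3 := (h1.sub h2).tsum_eq
  have h4 := M.I2 h.1 h.2 x
  have h5 : ∀ f : (Fin d → ℤ) → ℝ≥0∞, mass f ≠ ⊤ → conv (conv (M.G t) f) (M.G t) x ≠ ⊤ := fun f hf => by
    refine ne_top_of_le_ne_top ?_ (le_mass _ x)
    rw [mass_conv, mass_conv]
    exact ENNReal.mul_ne_top (ENNReal.mul_ne_top hG hf) hG
  rw [F_eq, conv_comm (Jf M), ← ENNReal.ofReal_toReal (h5 _ hJ), ← ENNReal.ofReal_toReal (h5 _ (mass_H_ne_top h)),
    ← ENNReal.ofReal_add (G'_nonneg h x) ENNReal.toReal_nonneg]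
  apply ENNReal.ofReal_le_ofReal
  have h6 : (fun p : (Fin d → ℤ) × (Fin d → ℤ) => (M.G t p.1).toReal * (M.K.J p.2 - M.H t p.2) * (M.G t (x - p.1 - p.2)).toReal)
     = fun p => (M.G t p.1).toReal * (Jf M p.2).toReal * (M.G t (x - p.1 - p.2)).toReal -
         (M.G t p.1).toReal * (Hf M t p.2).toReal * (M.G t (x - p.1 - p.2)).toReal := by
    funext p
    rw [Jf, Hf, ENNReal.toReal_ofReal (M.K.nonneg _), ENNReal.toReal_ofReal (M.H_nonneg _ _)]; ring
  rw [h6, h3] at h4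
  linarith

/-- Dini lower bound -/
lemma dini {M : Model d c₀} {t b : ℝ} (hb : Sub M b) (h0 : 0 ≤ t) (htb : t < b) (w : (Fin d → ℤ) → ℝ)
    (hw : ∀ x, 0 ≤ w x) (Φ : ℝ → ℝ)
    (hΦ : ∀ u, Sub M u → HasSum (fun x => w x * (M.G u x).toReal) (Φ u)) (m : ℝ)
    (hm : ENNReal.ofReal m < ∑' x, ENNReal.ofReal (w x * M.G' t x)) :
    ∀ᶠ z in 𝓝[>] t, m < slope Φ t z := by
  have h := hb.mono h0 htb.le
  rw [ENNReal.tsum_eq_iSup_sum, lt_iSup_iff] at hm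
  obtain ⟨A, hA⟩ := hm
  rw [← ENNReal.ofReal_sum_of_nonneg (fun x _ => mul_nonneg (hw x) (G'_nonneg h x))] at hA
  have hA' := (ENNReal.ofReal_lt_ofReal_iff').mp hA |>.1
  have hd : HasDerivWithinAt (fun u => ∑ x ∈ A, w x * (M.G u x).toReal) (∑ x ∈ A, w x * M.G' t x) (Set.Ioi t) t := by
    refine HasDerivWithinAt.fun_sum fun x _ => ?_
    exact ((M.deriv x h.1 h.2).mono (s := Set.Ioi t) (fun y hy => h.1.trans (le_of_lt hy))).const_mul _
  rw [hasDerivWithinAt_iff_tendsto_slope' (by simp)] at hd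
  filter_upwards [hd.eventually (lt_mem_nhds hA'), Ioo_mem_nhdsGT htb] with z hz hz2
  refine hz.trans_le ?_
  rw [slope_def_field, slope_def_field]
  have hsz : Sub M z := hb.mono (h0.trans hz2.1.le) hz2.2.le
  refine div_le_div_of_nonneg_right ?_ (sub_nonneg.mpr hz2.1.le)
  rw [← Finset.sum_sub_distrib]
  have hS := (hΦ z hsz).sub (hΦ t h)
  refine sum_le_hasSum A (fun x _ => ?_) hS
  rw [← mul_sub]
  exact mul_nonneg (hw x) (sub_nonneg.mpr (ENNReal.toReal_mono (G_ne_top hsz x) (M.mono x h0 hz2.1.le hsz.2.le)))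

lemma X_hasSum {M : Model d c₀} (u : ℝ) (h : Sub M u) : HasSum (fun x => 1 * (M.G u x).toReal) (X M u) := by
  simp only [one_mul]
  have := (ENNReal.summable_toReal (G_finite h).1).hasSum
  rwa [← ENNReal.tsum_toReal_eq (G_ne_top h)] at this

lemma S_eq (M : Model d c₀) (u : ℝ) : Ss M u = ∑' x, ENNReal.ofReal (M.sigma ^ 2 + sqNorm x) * M.G u x := by
  rw [Ss_eq, Model.chi, ← ENNReal.tsum_mul_left, ← ENNReal.tsum_add]
  refine tsum_congr fun x => ?_
  rw [ENNReal.ofReal_add (sq_nonneg _) (sqNorm_nonneg x), sq]; ring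

lemma S_hasSum {M : Model d c₀} (u : ℝ) (h : Sub M u) :
    HasSum (fun x => (M.sigma ^ 2 + sqNorm x) * (M.G u x).toReal) (S M u) := by
  have hne := Ss_ne_top h
  rw [S_eq] at hne
  have := (ENNReal.summable_toReal hne).hasSum
  rw [← ENNReal.tsum_toReal_eq (fun a => ENNReal.ne_top_of_tsum_ne_top hne a), ← S_eq] at this
  refine this.congr_fun ?_ |> id
  intro x
  rw [ENNReal.toReal_mul, ENNReal.toReal_ofReal (add_nonneg (sq_nonneg _) (sqNorm_nonneg x))]

lemma ofReal_sub_le {a b : ℝ} {y : ℝ≥0∞} (hb : 0 ≤ b) (h : ENNReal.ofReal a ≤ y + ENNReal.ofReal b) :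
    ENNReal.ofReal (a - b) ≤ y := by
  rw [ENNReal.ofReal_sub _ hb]
  exact tsub_le_iff_right.mpr h

lemma X_dini {M : Model d c₀} {δ t : ℝ} (hδ : 0 ≤ δ) (he : Err M δ t) :
    ENNReal.ofReal ((1 - δ) * X M t ^ 2) ≤ ∑' x, ENNReal.ofReal (1 * M.G' t x) := by
  have h := he.1
  have h1 := mass_mono (I2_conv h)
  have h2 : mass (fun x => ENNReal.ofReal (M.G' t x) + conv (conv (M.G t) (Hf M t)) (M.G t) x)
     = (∑' x, ENNReal.ofReal (M.G' t x)) + M.chi t * mass (Hf M t) * M.chi t := by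
    unfold mass; rw [ENNReal.tsum_add]; congr 1
    change mass _ = _
    rw [mass_conv, mass_conv]; rfl
  rw [h2, mass_conv, mass_F] at h1
  have h3 : mass (Hf M t) ≤ ENNReal.ofReal δ := (he.2 t h.1 le_rfl).1
  have h4 : M.chi t * M.chi t ≤ (∑' x, ENNReal.ofReal (M.G' t x)) + M.chi t * ENNReal.ofReal δ * M.chi t := by
    refine h1.trans ?_; gcongr
  have hX := (X_pos h).le
  rw [chi_eq h, ← ENNReal.ofReal_mul hX, ← ENNReal.ofReal_mul hX, ← ENNReal.ofReal_mul (by positivity)] at h4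
  have := ofReal_sub_le (by positivity) h4
  simp only [one_mul]
  refine le_trans (le_of_eq ?_) this
  congr 1; ring

lemma S_dini {M : Model d c₀} {δ t : ℝ} (hδ : 0 ≤ δ) (he : Err M δ t) :
    ENNReal.ofReal ((2 - 3 * δ) * (X M t * S M t)) ≤ ∑' x, ENNReal.ofReal ((M.sigma ^ 2 + sqNorm x) * M.G' t x) := by
  have h := he.1
  set w : (Fin d → ℤ) → ℝ≥0∞ := fun x => ENNReal.ofReal (M.sigma ^ 2 + sqNorm x) with hw
  have hsplit : ∀ f : (Fin d → ℤ) → ℝ≥0∞, ∑' x, f x * w x = ENNReal.ofReal (M.sigma ^ 2) * mass f + ∑' x, f x * sq x := by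
    intro f
    unfold mass
    rw [← ENNReal.tsum_mul_left, ← ENNReal.tsum_add]
    refine tsum_congr fun x => ?_
    rw [hw]; simp only []
    rw [ENNReal.ofReal_add (sq_nonneg _) (sqNorm_nonneg x), sq]; ring
  have h1 := ENNReal.tsum_le_tsum (fun x => mul_le_mul_left (I2_conv h x) (w x))
  simp_rw [add_mul] at h1
  rw [ENNReal.tsum_add, hsplit (conv (M.F t) (M.G t)), hsplit (conv (conv (M.G t) (Hf M t)) (M.G t)), mass_conv, mass_conv, mass_conv, mass_F] at h1
  have hGe := (M.symm t).even
  have hHe : ∀ x, Hf M t (-x) = Hf M t x := fun x => by unfold Hf; rw [M.H_symm]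
  have e1 := sm_conv (f := M.F t) (g := M.G t) hGe
  have e2 := sm_conv (f := conv (M.G t) (Hf M t)) (g := M.G t) hGe
  have e3 := sm_conv (f := M.G t) (g := Hf M t) hHe
  change ∑' x, conv _ _ x * sq x = (∑' x, M.F t x * sq x) * _ + _ * ∑' x, _ * sq x at e1
  change ∑' x, conv _ _ x * sq x = (∑' x, _ * sq x) * _ + _ * ∑' x, _ * sq x at e2
  change ∑' x, conv _ _ x * sq x = (∑' x, _ * sq x) * _ + _ * ∑' x, _ * sq x at e3
  rw [e1, e2, e3, mass_F, mass_conv] at h1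
  have hT : ∑' x, M.G t x * sq x = ENNReal.ofReal (∑' x, M.G t x * sq x).toReal := (ENNReal.ofReal_toReal (G_finite h).2).symm
  set T := (∑' x, M.G t x * sq x).toReal with hTdef
  have hT0 : 0 ≤ T := ENNReal.toReal_nonneg
  have hm : mass (M.G t) = ENNReal.ofReal (X M t) := chi_eq h
  have hX := (X_pos h).le
  have hS0 := S_nonneg M t
  have hST : S M t = M.sigma ^ 2 * X M t + T := by
    rw [S, Ss_eq, ENNReal.toReal_add (ENNReal.mul_ne_top ENNReal.ofReal_ne_top (G_finite h).1) (G_finite h).2,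
      ENNReal.toReal_mul, ENNReal.toReal_ofReal (sq_nonneg _)]; rfl
  have h3 : mass (Hf M t) ≤ ENNReal.ofReal δ := (he.2 t h.1 le_rfl).1
  have h4 : ∑' x, Hf M t x * sq x ≤ ENNReal.ofReal (δ * (S M t / X M t)) := by
    rw [← xi_sq h]; exact (he.2 t h.1 le_rfl).2
  change _ * _ + (Ss M t * _ + _) ≤ _ at h1
  rw [hT, hm, chi_eq h, Ss_eq' h] at h1
  have h5 := h1.trans (add_le_add le_rfl (add_le_add (mul_le_mul_right (mul_le_mul_left (mul_le_mul_right h3 _) _) _)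
    (add_le_add (mul_le_mul_left (add_le_add (mul_le_mul_right h3 _) (mul_le_mul_right h4 _)) _)
      (mul_le_mul_left (mul_le_mul_right h3 _) _))))
  have hq : 0 ≤ S M t / X M t := div_nonneg hS0 hX
  simp (disch := positivity) only [← ENNReal.ofReal_mul, ← ENNReal.ofReal_add] at h5
  have h6 := ofReal_sub_le (by positivity) h5
  have e4 : ∑' x, ENNReal.ofReal (M.G' t x) * w x = ∑' x, ENNReal.ofReal ((M.sigma ^ 2 + sqNorm x) * M.G' t x) := by
    refine tsum_congr fun x => ?_
    rw [mul_comm, hw]; simp only []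
    rw [ENNReal.ofReal_mul (add_nonneg (sq_nonneg _) (sqNorm_nonneg x))]
  rw [e4] at h6
  refine le_trans (ENNReal.ofReal_le_ofReal ?_) h6
  have hXne : X M t ≠ 0 := (X_pos h).ne'
  have e5 : X M t * (δ * (S M t / X M t)) * X M t = δ * X M t * S M t := by field_simp
  rw [add_mul, e5, hST]
  have : 0 ≤ M.sigma ^ 2 * X M t := by positivity
  nlinarith [mul_nonneg hδ (mul_nonneg this hX), mul_nonneg hδ (mul_nonneg hT0 hX)]

lemma inv_lin_deriv {a p s u : ℝ} (h : a - p * (u - s) ≠ 0) :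
    HasDerivAt (fun u => (a - p * (u - s))⁻¹) (p * ((a - p * (u - s))⁻¹) ^ 2) u := by
  have h1 : HasDerivAt (fun u => a - p * (u - s)) (-(p * 1)) u :=
    (((hasDerivAt_id u).sub_const s).const_mul p).const_sub a
  refine (h1.inv h).congr_deriv ?_
  field_simp

lemma X_lower {M : Model d c₀} {δ s t : ℝ} (hδ : 0 < δ) (hδ' : δ ≤ 1/2) (he : Err M δ t) (h0 : 0 ≤ s) (hst : s ≤ t)
    (hl : (t - s) * X M s < 1) :
    ∀ u ∈ Set.Icc s t, ((X M s)⁻¹ - (1 - 2 * δ) * (u - s))⁻¹ ≤ X M u ∧ 0 < (X M s)⁻¹ - (1 - 2 * δ) * (u - s) := by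
  have hXs := X_pos (he.1.mono h0 hst)
  have hpos : ∀ u ∈ Set.Icc s t, 0 < (X M s)⁻¹ - (1 - 2 * δ) * (u - s) := by
    intro u hu
    have h1 : (t - s) < (X M s)⁻¹ := by rw [← one_div, lt_div_iff₀ hXs]; exact hl
    have : (1 - 2 * δ) * (u - s) ≤ 1 * (t - s) :=
      mul_le_mul (by linarith) (by linarith [hu.2]) (by linarith [hu.1]) zero_le_one
    linarith
  intro u hu
  refine ⟨?_, hpos u hu⟩
  have key := image_le_of_liminf_slope_right_lt_deriv_boundary' (f := fun u => - X M u)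
    (f' := fun u => -((1 - δ) * X M u ^ 2)) (a := s) (b := t)
    (B := fun u => -((X M s)⁻¹ - (1 - 2 * δ) * (u - s))⁻¹)
    (B' := fun u => -((1 - 2 * δ) * (((X M s)⁻¹ - (1 - 2 * δ) * (u - s))⁻¹) ^ 2))
    (((X_cont he.1).mono (Set.Icc_subset_Icc_left h0)).neg) ?_ ?_ ?_ ?_ ?_ hu
  · simpa using key
  · intro x hx r hr
    refine Eventually.frequently ?_
    have hx0 := h0.trans hx.1
    have hex := he.mono hx0 hx.2.le
    rcases le_or_gt 0 r with hr0 | hr0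
    · have hm : ENNReal.ofReal ((1-δ) * X M x ^ 2) ≤ _ := X_dini hδ.le hex
      have hp : 0 < (1 - δ) * X M x ^ 2 := mul_pos (by linarith) (pow_pos (X_pos hex.1) 2)
      have := dini he.1 hx0 hx.2 (fun _ => 1) (fun _ => zero_le_one) (X M) X_hasSum 0 (by
        refine lt_of_lt_of_le ?_ hm
        simpa using ENNReal.ofReal_pos.mpr hp)
      filter_upwards [this] with z hz
      have : slope (fun u => - X M u) x z = - slope (X M) x z := by simp [slope_def_field]; ring
      rw [this]; linarith
    · have hm : ENNReal.ofReal ((1-δ) * X M x ^ 2) ≤ _ := X_dini hδ.le hex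
      have := dini he.1 hx0 hx.2 (fun _ => 1) (fun _ => zero_le_one) (X M) X_hasSum (-r) (by
        refine lt_of_lt_of_le ?_ hm
        exact (ENNReal.ofReal_lt_ofReal_iff (by linarith)).mpr (by linarith))
      filter_upwards [this] with z hz
      have : slope (fun u => - X M u) x z = - slope (X M) x z := by simp [slope_def_field]; ring
      rw [this]; linarith
  · simp
  · intro x hx
    exact (inv_lin_deriv (hpos x hx).ne').continuousAt.continuousWithinAt.neg
  · intro x hx
    exact (inv_lin_deriv (hpos x ⟨hx.1, hx.2.le⟩).ne').hasDerivWithinAt.neg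
  · intro x hx hxe
    have e : X M x = ((X M s)⁻¹ - (1 - 2 * δ) * (x - s))⁻¹ := by linarith
    change -_ < -_
    rw [← e]
    have : 0 < X M x ^ 2 := pow_pos (X_pos (he.1.mono (h0.trans hx.1) hx.2.le)) 2
    nlinarith

lemma S_lower {M : Model d c₀} (hc : 0 < c₀) {δ s t : ℝ} (hδ : 0 < δ) (hδ' : δ ≤ 1/2) (he : Err M δ t) (h0 : 0 ≤ s) (hst : s ≤ t)
    (hl : (t - s) * X M s < 1) :
    ∀ u ∈ Set.Icc s t, S M s / X M s ^ 2 * (((X M s)⁻¹ - (1 - 2 * δ) * (u - s))⁻¹) ^ 2 ≤ S M u := by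
  have hXL := X_lower hδ hδ' he h0 hst hl
  have hXs := X_pos (he.1.mono h0 hst)
  have hD : ∀ u ∈ Set.Icc s t, HasDerivAt (fun u => -(S M s / X M s ^ 2 * (((X M s)⁻¹ - (1 - 2 * δ) * (u - s))⁻¹) ^ 2))
     (-(S M s / X M s ^ 2 * (2 * ((X M s)⁻¹ - (1 - 2 * δ) * (u - s))⁻¹ * ((1 - 2 * δ) * (((X M s)⁻¹ - (1 - 2 * δ) * (u - s))⁻¹) ^ 2)))) u := by
    intro u hu
    have := ((inv_lin_deriv (hXL u hu).2.ne').pow 2).const_mul (S M s / X M s ^ 2) |>.neg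
    refine this.congr_deriv ?_
    simp
  intro u hu
  have key := image_le_of_liminf_slope_right_lt_deriv_boundary' (f := fun u => - S M u)
    (f' := fun u => -((2 - 3 * δ) * (X M u * S M u))) (a := s) (b := t)
    (B := fun u => -(S M s / X M s ^ 2 * (((X M s)⁻¹ - (1 - 2 * δ) * (u - s))⁻¹) ^ 2))
    (B' := fun u => -(S M s / X M s ^ 2 * (2 * ((X M s)⁻¹ - (1 - 2 * δ) * (u - s))⁻¹ * ((1 - 2 * δ) * (((X M s)⁻¹ - (1 - 2 * δ) * (u - s))⁻¹) ^ 2))))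
    (((S_cont he.1).mono (Set.Icc_subset_Icc_left h0)).neg) ?_ ?_ ?_ ?_ ?_ hu
  · simpa using key
  · intro x hx r hr
    refine Eventually.frequently ?_
    have hx0 := h0.trans hx.1
    have hex := he.mono hx0 hx.2.le
    have hp : 0 < (2 - 3 * δ) * (X M x * S M x) := mul_pos (by linarith) (mul_pos (X_pos hex.1) (S_pos hc hex.1))
    have hm : ENNReal.ofReal ((2 - 3 * δ) * (X M x * S M x)) ≤ _ := S_dini hδ.le hex
    have hmm : max 0 (-r) < (2 - 3 * δ) * (X M x * S M x) := max_lt hp (by linarith)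
    have := dini he.1 hx0 hx.2 (fun x => M.sigma ^ 2 + sqNorm x) (fun x => add_nonneg (sq_nonneg _) (sqNorm_nonneg x))
      (S M) S_hasSum (max 0 (-r)) (lt_of_lt_of_le ((ENNReal.ofReal_lt_ofReal_iff hp).mpr hmm) hm)
    filter_upwards [this] with z hz
    have : slope (fun u => - S M u) x z = - slope (S M) x z := by simp [slope_def_field]; ring
    rw [this]; linarith [le_max_right 0 (-r)]
  · simp only [sub_self, mul_zero, sub_zero, inv_inv]
    rw [div_mul_cancel₀ _ (by positivity)]
  · intro x hx
    exact (hD x hx).continuousAt.continuousWithinAt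
  · intro x hx
    exact (hD x ⟨hx.1, hx.2.le⟩).hasDerivWithinAt
  · intro x hx hxe
    have hx' : x ∈ Set.Icc s t := ⟨hx.1, hx.2.le⟩
    have hsx := he.1.mono (h0.trans hx.1) hx.2.le
    have h1 := (hXL x hx').1
    set Y := ((X M s)⁻¹ - (1 - 2 * δ) * (x - s))⁻¹ with hY
    have hYp : 0 < Y := inv_pos.mpr (hXL x hx').2
    have e : S M x = S M s / X M s ^ 2 * Y ^ 2 := by simp only [neg_inj] at hxe; exact hxe
    have hSx := S_pos hc hsx
    have e2 : S M s / X M s ^ 2 * (2 * Y * ((1 - 2 * δ) * Y ^ 2)) = 2 * (1 - 2 * δ) * (Y * S M x) := by rw [e]; ring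
    change -_ < -_
    rw [e2]
    have : Y * S M x ≤ X M x * S M x := mul_le_mul_of_nonneg_right h1 hSx.le
    have hp2 : 0 < Y * S M x := mul_pos hYp hSx
    nlinarith

/-- summary -/
lemma step_lower {M : Model d c₀} (hc : 0 < c₀) {δ s t θ : ℝ} (hδ : 0 < δ) (hδ' : δ ≤ 1/2) (he : Err M δ t) (h0 : 0 ≤ s) (hst : s ≤ t)
    (hθ : 0 < θ) (hl : (t - s) * X M s = 1 - θ) :
    X M s ≤ (θ + 2 * δ) * X M t ∧ X M t ≤ X M s / θ ∧ M.xi s ^ 2 * θ ≤ M.xi t ^ 2 * (θ + 2 * δ) ^ 2 := by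
  have hs := he.1.mono h0 hst
  have hXs := X_pos hs
  have hXt := X_pos he.1
  have hlt : (t - s) * X M s < 1 := by linarith
  have hθ1 : θ ≤ 1 := by have := mul_nonneg (sub_nonneg.mpr hst) hXs.le; linarith
  have h1 := (X_lower hδ hδ' he h0 hst hlt t ⟨hst, le_rfl⟩).1
  have h2 := (X_lower hδ hδ' he h0 hst hlt t ⟨hst, le_rfl⟩).2
  have h3 := S_lower hc hδ hδ' he h0 hst hlt t ⟨hst, le_rfl⟩
  have e : (X M s)⁻¹ - (1 - 2 * δ) * (t - s) = (θ + 2 * δ * (1 - θ)) / X M s := by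
    rw [eq_div_iff hXs.ne', sub_mul, inv_mul_cancel₀ hXs.ne', mul_assoc, hl]; ring
  have hD : 0 < θ + 2 * δ * (1 - θ) := by nlinarith
  rw [e, inv_div] at h1 h3
  have h4 : X M s ≤ X M t * (θ + 2 * δ * (1 - θ)) := by rwa [div_le_iff₀ hD] at h1
  have h5 : S M s ≤ S M t * (θ + 2 * δ * (1 - θ)) ^ 2 := by
    have : S M s / X M s ^ 2 * (X M s / (θ + 2 * δ * (1 - θ))) ^ 2 = S M s / (θ + 2 * δ * (1 - θ)) ^ 2 := by
      field_simp
    rw [this, div_le_iff₀ (by positivity)] at h3; exact h3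
  have hle : θ + 2 * δ * (1 - θ) ≤ θ + 2 * δ := by nlinarith
  have h6 : X M t ≤ X M s / θ := by
    rw [le_div_iff₀ hθ]
    have := X_step he.1 h0 hst
    nlinarith
  refine ⟨h4.trans (by rw [mul_comm]; exact mul_le_mul_of_nonneg_right hle hXt.le), h6, ?_⟩
  rw [xi_sq hs, xi_sq he.1]
  have h7 : S M s ≤ S M t * (θ + 2 * δ) ^ 2 := h5.trans (mul_le_mul_of_nonneg_left (pow_le_pow_left₀ hD.le hle 2) (S_nonneg _ _))
  have h8 : X M t * θ ≤ X M s := by rwa [le_div_iff₀ hθ] at h6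
  rw [div_mul_eq_mul_div, div_mul_eq_mul_div, div_le_div_iff₀ hXs hXt]
  calc S M s * θ * X M t ≤ S M s * X M s := by nlinarith [S_nonneg M s]
    _ ≤ _ := mul_le_mul_of_nonneg_right h7 hXs.le

end Blackbox
end

section
namespace Blackbox
open Model

variable {d : ℕ} {c₀ : ℝ}

lemma cosh_quartic {r : ℝ} (hr0 : 0 ≤ r) (hr : r ≤ 1) (v : ℝ) :
    Real.cosh (r * v) + r ^ 4 ≤ 1 + (r ^ 2 - r ^ 4) * v ^ 2 / 2 + r ^ 4 * Real.cosh v := by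
  have h := ((Real.hasSum_cosh v).mul_left (r ^ 4)).sub (Real.hasSum_cosh (r * v))
  have := sum_le_hasSum (Finset.range 2) (fun n hn => ?_) h
  · simp [Finset.sum_range_succ] at this
    nlinarith
  · have hn2 : 2 ≤ n := by simp at hn; omega
    have : r ^ (2 * n) ≤ r ^ 4 := pow_le_pow_of_le_one hr0 hr (by omega)
    rw [mul_pow, mul_div_assoc, ← sub_mul]
    exact mul_nonneg (sub_nonneg.mpr this) (div_nonneg (by rw [pow_mul]; positivity) (by positivity))

lemma cosh_quad {r : ℝ} (hr : |r| ≤ 1) (v : ℝ) :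
    Real.cosh (r * v) + r ^ 2 ≤ 1 + r ^ 2 * Real.cosh v := by
  have h := ((Real.hasSum_cosh v).mul_left (r ^ 2)).sub (Real.hasSum_cosh (r * v))
  have := sum_le_hasSum (Finset.range 1) (fun n hn => ?_) h
  · simp at this
    nlinarith
  · have hn2 : 1 ≤ n := by simp at hn; omega
    have h1 : (r ^ 2) ^ n ≤ (r ^ 2) ^ 1 := pow_le_pow_of_le_one (sq_nonneg r) (by rw [← sq_abs]; exact pow_le_one₀ (abs_nonneg _) hr) hn2
    have : r ^ (2 * n) ≤ r ^ 2 := by rw [pow_mul]; simpa using h1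
    rw [mul_pow, mul_div_assoc, ← sub_mul]
    exact mul_nonneg (sub_nonneg.mpr this) (div_nonneg (by rw [pow_mul]; positivity) (by positivity))

lemma cosh_small {v : ℝ} (hv : v ^ 2 ≤ 1 / 100) : Real.cosh v ≤ 1 + 51 / 100 * v ^ 2 := by
  have h1 := Real.cosh_le_exp_half_sq v
  have h2 := Real.abs_exp_sub_one_sub_id_le (x := v ^ 2 / 2) (by rw [abs_of_nonneg (by positivity)]; linarith)
  have h3 := (abs_le.mp h2).2
  nlinarith [sq_nonneg v]

/-- one dimensional weight -/
def ew (u : ℝ) (i : Fin d) (x : Fin d → ℤ) : ℝ≥0∞ := ENNReal.ofReal (Real.exp (u * (x i : ℝ)))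

lemma ew_add (u : ℝ) (i : Fin d) (x y : Fin d → ℤ) : ew u i (x + y) = ew u i x * ew u i y := by
  unfold ew
  rw [← ENNReal.ofReal_mul (Real.exp_pos _).le, ← Real.exp_add]
  congr 2; push_cast [Pi.add_apply]; ring

lemma ew_zero (u : ℝ) (i : Fin d) : ew u i 0 = 1 := by simp [ew]

lemma ew_cosh {f : (Fin d → ℤ) → ℝ≥0∞} (hf : ∀ x, f (-x) = f x) (u : ℝ) (i : Fin d) :
    ∑' x, f x * ew u i x = ∑' x, f x * ENNReal.ofReal (Real.cosh (u * (x i : ℝ))) := by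
  have h1 : ∑' x, f x * ew u i x = ∑' x, f x * ENNReal.ofReal (Real.exp (-(u * (x i : ℝ)))) := by
    rw [← (Equiv.neg (Fin d → ℤ)).tsum_eq]
    refine tsum_congr fun x => ?_
    simp [hf, ew]
  have h2 : (2:ℝ≥0∞) * ∑' x, f x * ew u i x = 2 * ∑' x, f x * ENNReal.ofReal (Real.cosh (u * (x i : ℝ))) := by
    rw [two_mul]
    nth_rewrite 2 [h1]
    rw [← ENNReal.tsum_add, ← ENNReal.tsum_mul_left]
    refine tsum_congr fun x => ?_
    rw [Real.cosh_eq, ew, ← mul_add, ← ENNReal.ofReal_add (Real.exp_pos _).le (Real.exp_pos _).le,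
      ENNReal.ofReal_div_of_pos two_pos, mul_left_comm]
    congr 1
    rw [ENNReal.ofReal_ofNat, ENNReal.mul_div_cancel two_ne_zero ENNReal.ofNat_ne_top]
  exact (ENNReal.mul_right_inj two_ne_zero ENNReal.ofNat_ne_top).mp h2

/-- coordinate second moment -/
lemma coord_sq {f : (Fin d → ℤ) → ℝ≥0∞} (hf : IsSymmFun f) (i : Fin d) :
    (d : ℝ≥0∞) * ∑' x, f x * ENNReal.ofReal ((x i : ℝ) ^ 2) = ∑' x, f x * sq x := by
  have hsw : ∀ j : Fin d, ∑' x, f x * ENNReal.ofReal ((x j : ℝ) ^ 2) = ∑' x, f x * ENNReal.ofReal ((x i : ℝ) ^ 2) := by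
    intro j
    rw [← (sgnEquiv (Equiv.swap i j) (fun _ => false)).tsum_eq]
    refine tsum_congr fun x => ?_
    have h1 : f (sgnEquiv (Equiv.swap i j) (fun _ => false) x) = f x := hf _ _ x
    rw [h1]; simp [sgnEquiv]
  have h2 : ∀ x : Fin d → ℤ, f x * sq x = ∑ j, f x * ENNReal.ofReal ((x j : ℝ) ^ 2) := by
    intro x
    rw [← Finset.mul_sum, ← ENNReal.ofReal_sum_of_nonneg (fun _ _ => sq_nonneg _)]; rfl
  simp_rw [h2]
  rw [Summable.tsum_finsetSum (fun _ _ => ENNReal.summable)]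
  simp_rw [hsw]
  simp

lemma coord_sq' {M : Model d c₀} {t : ℝ} (h : Sub M t) (hd : 0 < d) (i : Fin d) :
    ∑' x, M.F t x * ENNReal.ofReal ((x i : ℝ) ^ 2) = ENNReal.ofReal (M.xi t ^ 2 * X M t / d) := by
  have h1 := coord_sq (F_symm M t) i
  change _ = Ss M t at h1
  have hd' : (0:ℝ) < d := by exact_mod_cast hd
  rw [xi_sq h, div_mul_cancel₀ _ (X_pos h).ne', ENNReal.ofReal_div_of_pos hd', ← Ss_eq' h, ← h1,
    ENNReal.ofReal_natCast, mul_comm, ENNReal.mul_div_cancel_right]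
  · exact_mod_cast hd.ne'
  · exact ENNReal.natCast_ne_top d

/-- exponential moment property -/
def EM (M : Model d c₀) (s₀ t : ℝ) : Prop :=
  ∀ i, ∑' x, M.F t x * ew (s₀ / M.xi t) i x ≤ ENNReal.ofReal ((1 + s₀ ^ 2) * X M t)

lemma ew_series {M : Model d c₀} {s t : ℝ} (h : Sub M t) (h0 : 0 ≤ s) (hs : s ≤ t)
    (hl : ENNReal.ofReal (t - s) * M.chi s < 1) (u : ℝ) (i : Fin d) :
    ∑' x, M.F t x * ew u i x ≤ ∑' k, ENNReal.ofReal (t - s) ^ k * (∑' x, M.F s x * ew u i x) ^ (k + 1) := by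
  have h1 : ∀ x, M.F t x * ew u i x ≤ ∑' k, ENNReal.ofReal (t - s) ^ k * (cpow (fun y => M.F s y * ew u i y) (k + 1) x) := by
    intro x
    refine (mul_le_mul_left (F_series h h0 hs hl x) _).trans ?_
    rw [← ENNReal.tsum_mul_right]
    refine ENNReal.tsum_le_tsum fun k => ?_
    rw [mul_assoc]
    refine mul_le_mul_right ?_ _
    exact cpow_weight (fun x y => (ew_add u i x y).le) (ew_zero u i).le _ _ _
  refine (ENNReal.tsum_le_tsum h1).trans ?_
  rw [ENNReal.tsum_comm]
  refine ENNReal.tsum_le_tsum fun k => ?_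
  rw [ENNReal.tsum_mul_left]
  refine mul_le_mul_right (le_of_eq ?_) _
  exact mass_cpow _ _

lemma geom_bound {a m : ℝ} (ha : 0 ≤ a) (hm : 0 ≤ m) (h : a * m < 1) {y : ℝ≥0∞} (hy : y ≤ ENNReal.ofReal m) :
    ∑' k, ENNReal.ofReal a ^ k * y ^ (k + 1) ≤ ENNReal.ofReal (m / (1 - a * m)) := by
  have h1 : ∑' k, ENNReal.ofReal a ^ k * y ^ (k + 1) ≤ ∑' k, ENNReal.ofReal (m * (a * m) ^ k) := by
    refine ENNReal.tsum_le_tsum fun k => ?_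
    refine (mul_le_mul_right (pow_le_pow_left' hy (k+1)) _).trans (le_of_eq ?_)
    rw [← ENNReal.ofReal_pow ha, ← ENNReal.ofReal_pow hm, ← ENNReal.ofReal_mul (by positivity)]
    congr 1; ring
  refine h1.trans (le_of_eq ?_)
  have hs := (hasSum_geometric_of_lt_one (mul_nonneg ha hm) h).mul_left m
  rw [← ENNReal.ofReal_tsum_of_nonneg (fun k => by positivity) hs.summable, hs.tsum_eq]
  rfl

lemma le_ofReal_sub {y : ℝ≥0∞} {a b : ℝ} (hb : 0 ≤ b) (h : y + ENNReal.ofReal b ≤ ENNReal.ofReal a) :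
    y ≤ ENNReal.ofReal (a - b) := by
  rw [ENNReal.ofReal_sub _ hb]
  exact ENNReal.le_sub_of_add_le_right ENNReal.ofReal_ne_top h

/-- from m' bound to EM -/
lemma EM_step {M : Model d c₀} (hc : 0 < c₀) {δ s₀ s t θ : ℝ} (hs₀ : 0 < s₀) (hs₁ : s₀ ^ 2 ≤ 1/10) (hδ : 0 < δ) (hδ1 : δ ≤ s₀ ^ 2 / 100)
    (he : Err M δ t) (h0 : 0 ≤ s) (hst : s ≤ t) (hθ : 1/4 ≤ θ) (hl : (t - s) * X M s = 1 - θ)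
    (hm : ∀ i, ∑' x, M.F s x * ew (s₀ / M.xi t) i x ≤ ENNReal.ofReal ((1 + 45/100 * θ * s₀ ^ 2) * X M s)) : EM M s₀ t := by
  intro i
  have hs := he.1.mono h0 hst
  have hXs := X_pos hs
  have hXt := X_pos he.1
  have hθ1 : θ ≤ 1 := by have := mul_nonneg (sub_nonneg.mpr hst) hXs.le; linarith
  have hlt : ENNReal.ofReal (t - s) * M.chi s < 1 := by
    rw [chi_eq hs, ← ENNReal.ofReal_mul (sub_nonneg.mpr hst), hl]
    exact ENNReal.ofReal_lt_one.mpr (by linarith)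
  have h1 := ew_series he.1 h0 hst hlt (s₀ / M.xi t) i
  set Y := 45/100 * θ * s₀ ^ 2 with hY
  have hY0 : 0 ≤ Y := by positivity
  have e1 : (t - s) * ((1 + Y) * X M s) = (1 - θ) * (1 + Y) := by rw [← hl]; ring
  have hY2 : (1 - θ) * Y ≤ 45/1000 * θ := by
    have : (1 - θ) * Y ≤ 1 * Y := mul_le_mul_of_nonneg_right (by linarith) hY0
    nlinarith
  have hlt2 : (t - s) * ((1 + Y) * X M s) < 1 := by rw [e1]; nlinarith
  refine h1.trans ((geom_bound (sub_nonneg.mpr hst) (by positivity) hlt2 (hm i)).trans ?_)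
  apply ENNReal.ofReal_le_ofReal
  rw [e1]
  have hD : 0 < 1 - (1 - θ) * (1 + Y) := by nlinarith
  rw [div_le_iff₀ hD]
  have h3 := (step_lower hc hδ (by linarith) he h0 hst (by linarith) hl).1
  have h4 : (1 + Y) * X M s ≤ (1 + Y) * ((θ + 2 * δ) * X M t) := mul_le_mul_of_nonneg_left h3 (by positivity)
  refine h4.trans ?_
  have h5 : (1 + Y) * (θ + 2 * δ) ≤ (1 + s₀ ^ 2) * (1 - (1 - θ) * (1 + Y)) := by
    have a1 : 2 * δ ≤ θ * (8/100) * s₀ ^ 2 := by nlinarith [sq_nonneg s₀]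
    set q := s₀ ^ 2 with hq
    have hq0 : 0 < q := by positivity
    have a2 : (1 + Y) * (θ + 2 * δ) ≤ (1 + Y) * (θ + θ * (8/100) * q) := mul_le_mul_of_nonneg_left (by linarith) (by linarith)
    refine a2.trans ?_
    have e3 : (1 + q) * (1 - (1 - θ) * (1 + Y)) - (1 + Y) * (θ + θ * (8/100) * q)
       = θ * q * (1 - 8/100 - 45/100 * (1 - θ) - 45/100 * (1 - θ) * q - 45/100 * θ - 45/100 * θ * (8/100) * q) := by
      rw [hY]; ring
    have : 0 ≤ θ * q * (1 - 8/100 - 45/100 * (1 - θ) - 45/100 * (1 - θ) * q - 45/100 * θ - 45/100 * θ * (8/100) * q) := by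
      refine mul_nonneg (by positivity) ?_
      nlinarith
    linarith
  calc (1 + Y) * ((θ + 2 * δ) * X M t) = ((1 + Y) * (θ + 2 * δ)) * X M t := by ring
    _ ≤ ((1 + s₀ ^ 2) * (1 - (1 - θ) * (1 + Y))) * X M t := mul_le_mul_of_nonneg_right h5 hXt.le
    _ = _ := by ring

lemma R_le_sigma (M : Model d c₀) : c₀ * M.K.R ≤ M.sigma := M.K.sigma_lower

lemma EM_base {M : Model d c₀} (hc : 0 < c₀) (hd : 3 ≤ d) {δ s₀ t : ℝ} (hs₀ : 0 < s₀) (hsc : s₀ ≤ c₀ / 10) (hs₁ : s₀ ^ 2 ≤ 1/10) (hδ : 0 < δ) (hδ1 : δ ≤ s₀ ^ 2 / 100)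
    (he : Err M δ t) (ht : t ≤ 3/4) : EM M s₀ t := by
  have hσ := sigma_pos M hc
  have hξ := xi_pos hc he.1
  have hσξ := sigma_le_xi hc he.1
  have hl : (t - 0) * X M 0 = 1 - (1 - t) := by rw [X_zero]; ring
  refine EM_step hc hs₀ hs₁ hδ hδ1 he le_rfl he.1.1 (θ := 1 - t) (by linarith) hl fun i => ?_
  have hx := (step_lower hc hδ (by linarith) he le_rfl he.1.1 (by linarith) hl).2.2
  rw [xi_zero M hc] at hx
  rw [ew_cosh (F_symm M 0).even]
  have hpt : ∀ x, M.F 0 x * ENNReal.ofReal (Real.cosh (s₀ / M.xi t * (x i : ℝ))) ≤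
     M.F 0 x + ENNReal.ofReal (51/100 * (s₀ / M.xi t) ^ 2) * (M.F 0 x * ENNReal.ofReal ((x i : ℝ) ^ 2)) := by
    intro x
    rw [F_zero]
    by_cases hJ : M.K.J x = 0
    · simp [Jf, hJ]
    have hR := M.K.range_le x (lt_of_le_of_ne (M.K.nonneg x) (Ne.symm hJ))
    have hxi : |(x i : ℝ)| ≤ M.K.R := (abs_le_supNorm x i).trans hR
    have hv : (s₀ / M.xi t * (x i : ℝ)) ^ 2 ≤ 1/100 := by
      have : |s₀ / M.xi t * (x i : ℝ)| ≤ 1/10 := by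
        rw [abs_mul, abs_of_pos (by positivity), div_mul_eq_mul_div, div_le_iff₀ hξ]
        have := R_le_sigma M
        calc s₀ * |(x i : ℝ)| ≤ (c₀/10) * M.K.R := mul_le_mul hsc hxi (abs_nonneg _) (by positivity)
          _ ≤ _ := by linarith
      rw [← sq_abs]; nlinarith [abs_nonneg (s₀ / M.xi t * (x i : ℝ))]
    have := cosh_small hv
    calc Jf M x * ENNReal.ofReal (Real.cosh (s₀ / M.xi t * (x i : ℝ))) ≤ Jf M x * ENNReal.ofReal (1 + 51/100 * (s₀ / M.xi t) ^ 2 * (x i : ℝ) ^ 2) := by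
          gcongr; linarith [mul_pow (s₀ / M.xi t) (x i : ℝ) 2]
      _ = _ := by
          rw [ENNReal.ofReal_add zero_le_one (by positivity), ENNReal.ofReal_one, ENNReal.ofReal_mul (by positivity)]; ring
  refine (ENNReal.tsum_le_tsum hpt).trans ?_
  rw [ENNReal.tsum_add, ENNReal.tsum_mul_left, coord_sq' (sub_zero' M) (by omega) i, xi_zero M hc, X_zero]
  have : ∑' x, M.F 0 x = ENNReal.ofReal 1 := by
    have := mass_F M 0; rw [chi_zero] at this; simpa [mass] using this
  rw [this, ← ENNReal.ofReal_mul (by positivity), ← ENNReal.ofReal_add zero_le_one (by positivity)]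
  apply ENNReal.ofReal_le_ofReal
  have hd' : (3:ℝ) ≤ d := by exact_mod_cast hd
  have hθ : 1/4 ≤ 1 - t := by linarith
  set θ := 1 - t
  have e2 : M.sigma ^ 2 / M.xi t ^ 2 ≤ 2 * θ := by
    rw [div_le_iff₀ (by positivity)]
    have : (θ + 2 * δ) ^ 2 ≤ 2 * θ * θ := by nlinarith
    have h2 : M.sigma ^ 2 * θ ≤ (2 * θ * M.xi t ^ 2) * θ := by nlinarith [pow_pos hξ 2]
    exact le_of_mul_le_mul_right h2 (by linarith)
  have e3 : M.sigma ^ 2 * 1 / d ≤ M.sigma ^ 2 / 3 := by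
    rw [mul_one]; exact div_le_div_of_nonneg_left (by positivity) (by norm_num) hd'
  have e4 : 51/100 * (s₀ / M.xi t) ^ 2 * (M.sigma ^ 2 * 1 / d) ≤ 51/100 * (s₀ / M.xi t) ^ 2 * (M.sigma ^ 2 / 3) :=
    mul_le_mul_of_nonneg_left e3 (by positivity)
  have e5 : 51/100 * (s₀ / M.xi t) ^ 2 * (M.sigma ^ 2 / 3) = 17/100 * s₀ ^ 2 * (M.sigma ^ 2 / M.xi t ^ 2) := by
    field_simp; ring
  have e6 : 17/100 * s₀ ^ 2 * (M.sigma ^ 2 / M.xi t ^ 2) ≤ 17/100 * s₀ ^ 2 * (2 * θ) := mul_le_mul_of_nonneg_left e2 (by positivity)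
  have : 0 ≤ s₀ ^ 2 * θ := by positivity
  nlinarith

lemma EM_level {M : Model d c₀} (hc : 0 < c₀) (hd : 3 ≤ d) {δ s₀ s t : ℝ} (hs₀ : 0 < s₀) (hs₁ : s₀ ^ 2 ≤ 1/10) (hδ : 0 < δ) (hδ1 : δ ≤ s₀ ^ 2 / 100)
    (he : Err M δ t) (h0 : 0 ≤ s) (hst : s ≤ t) (hl : (t - s) * X M s = 1 - 1/4) (hEM : EM M s₀ s) : EM M s₀ t := by
  have hs := he.1.mono h0 hst
  have hξ := xi_pos hc he.1
  have hξs := xi_pos hc hs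
  refine EM_step hc hs₀ hs₁ hδ hδ1 he h0 hst le_rfl hl fun i => ?_
  have hx := (step_lower hc hδ (by linarith) he h0 hst (by norm_num) hl).2.2
  set r := M.xi s / M.xi t with hr
  have hr0 : 0 ≤ r := by positivity
  have hρ : r ^ 2 ≤ 255/1000 := by
    rw [hr, div_pow, div_le_iff₀ (by positivity)]
    have : (1/4 + 2 * δ) ^ 2 ≤ (255/1000) * (1/4) := by nlinarith
    nlinarith [pow_pos hξ 2]
  have hr1 : r ≤ 1 := by nlinarith
  have hXs := X_pos hs
  have hE := hEM i
  rw [ew_cosh (F_symm M s).even] at hE ⊢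
  have hpt : ∀ x, M.F s x * ENNReal.ofReal (Real.cosh (s₀ / M.xi t * (x i : ℝ))) + ENNReal.ofReal (r ^ 4) * M.F s x ≤
     M.F s x + ENNReal.ofReal ((r ^ 2 - r ^ 4) * (s₀ / M.xi s) ^ 2 / 2) * (M.F s x * ENNReal.ofReal ((x i : ℝ) ^ 2))
      + ENNReal.ofReal (r ^ 4) * (M.F s x * ENNReal.ofReal (Real.cosh (s₀ / M.xi s * (x i : ℝ)))) := by
    intro x
    have h1 := cosh_quartic hr0 hr1 (s₀ / M.xi s * (x i : ℝ))
    have e1 : r * (s₀ / M.xi s * (x i : ℝ)) = s₀ / M.xi t * (x i : ℝ) := by rw [hr]; field_simp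
    rw [e1] at h1
    have hrr : 0 ≤ r ^ 2 - r ^ 4 := by nlinarith [sq_nonneg r]
    have hc1 := (Real.cosh_pos (s₀ / M.xi t * (x i : ℝ))).le
    have hc2 := (Real.cosh_pos (s₀ / M.xi s * (x i : ℝ))).le
    have h2 := ENNReal.ofReal_le_ofReal h1
    rw [mul_pow, mul_div_assoc, show ((r ^ 2 - r ^ 4) * ((s₀ / M.xi s) ^ 2 * (x i : ℝ) ^ 2 / 2)) = ((r ^ 2 - r ^ 4) * (s₀ / M.xi s) ^ 2 / 2) * (x i : ℝ) ^ 2 by ring] at h2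
    rw [ENNReal.ofReal_add hc1 (by positivity), ENNReal.ofReal_add (by positivity) (by positivity),
      ENNReal.ofReal_add zero_le_one (by positivity), ENNReal.ofReal_mul (by positivity), ENNReal.ofReal_mul (by positivity), ENNReal.ofReal_one] at h2
    have h3 := mul_le_mul_right h2 (M.F s x)
    refine le_trans (le_of_eq ?_) (h3.trans (le_of_eq ?_)) <;> ring
  have hsum := ENNReal.tsum_le_tsum hpt
  have hmF : ∑' x, M.F s x = ENNReal.ofReal (X M s) := by rw [← chi_eq hs, ← mass_F]; rfl
  rw [ENNReal.tsum_add, ENNReal.tsum_add, ENNReal.tsum_add, ENNReal.tsum_mul_left, ENNReal.tsum_mul_left, ENNReal.tsum_mul_left,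
    coord_sq' hs (by omega) i, hmF] at hsum
  have hrr : 0 ≤ r ^ 2 - r ^ 4 := by nlinarith [sq_nonneg r]
  have hsum2 := hsum.trans (add_le_add le_rfl (mul_le_mul_right hE _))
  simp (disch := positivity) only [← ENNReal.ofReal_mul, ← ENNReal.ofReal_add] at hsum2
  refine (le_ofReal_sub (by positivity) hsum2).trans (ENNReal.ofReal_le_ofReal ?_)
  have hd' : (3:ℝ) ≤ d := by exact_mod_cast hd
  have e3 : (r ^ 2 - r ^ 4) * (s₀ / M.xi s) ^ 2 / 2 * (M.xi s ^ 2 * X M s / d) = (r ^ 2 - r ^ 4) * s₀ ^ 2 * X M s / 2 / d := by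
    field_simp
  have e4 : (r ^ 2 - r ^ 4) * s₀ ^ 2 * X M s / 2 / d ≤ (r ^ 2 - r ^ 4) * s₀ ^ 2 * X M s / 2 / 3 :=
    div_le_div_of_nonneg_left (by positivity) (by norm_num) hd'
  rw [e3]
  have e5 : (r ^ 2 - r ^ 4) / 6 + r ^ 4 ≤ 45/100 * (1/4) := by nlinarith [sq_nonneg r]
  have e6 := mul_le_mul_of_nonneg_right e5 (by positivity : 0 ≤ s₀ ^ 2 * X M s)
  nlinarith

lemma EM_all {M : Model d c₀} (hc : 0 < c₀) (hd : 3 ≤ d) {δ s₀ β : ℝ} (hs₀ : 0 < s₀) (hsc : s₀ ≤ c₀ / 10) (hs₁ : s₀ ^ 2 ≤ 1/10) (hδ : 0 < δ) (hδ1 : δ ≤ s₀ ^ 2 / 100)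
    (he : Err M δ β) : ∀ t, 0 ≤ t → t ≤ β → EM M s₀ t := by
  refine pred_induct (θ := 1/4) he.1 (by norm_num) (EM M s₀) (fun t h0 htb ht => ?_) (fun s t h0 hst htb hl hE => ?_)
  · exact EM_base hc hd hs₀ hsc hs₁ hδ hδ1 (he.mono h0 htb) (by linarith)
  · exact EM_level hc hd hs₀ hs₁ hδ hδ1 (he.mono (h0.trans hst) htb) h0 hst hl hE

end Blackbox
end

section
namespace Blackbox

variable {d : ℕ} {c₀ : ℝ}

structure Nice (p : (Fin d → ℤ) → ℝ≥0∞) (ℓ s₀ : ℝ) : Prop where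
  pos : 0 < ℓ
  mass_one : mass p = 1
  symm : IsSymmFun p
  sm : ∑' x, p x * sq x = ENNReal.ofReal (ℓ ^ 2)
  em : ∀ i, ∑' x, p x * ew (s₀ / ℓ) i x ≤ ENNReal.ofReal (1 + s₀ ^ 2)

lemma Nice.ne_top {p : (Fin d → ℤ) → ℝ≥0∞} {ℓ s₀ : ℝ} (h : Nice p ℓ s₀) (x : Fin d → ℤ) : p x ≠ ⊤ :=
  ne_top_of_le_ne_top (by rw [h.mass_one]; exact ENNReal.one_ne_top) (le_mass p x)

/-- fourth moment constant -/
def m4 (s₀ : ℝ) : ℝ := 48 / s₀ ^ 4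

lemma pow4_le_cosh (v : ℝ) : v ^ 4 / 24 ≤ Real.cosh v := by
  have := sum_le_hasSum (Finset.range 3) (fun n _ => ?_) (Real.hasSum_cosh v)
  · simp [Finset.sum_range_succ, Nat.factorial] at this
    nlinarith [sq_nonneg v]
  · exact div_nonneg (by rw [pow_mul]; positivity) (by positivity)

lemma Nice.fourth {p : (Fin d → ℤ) → ℝ≥0∞} {ℓ s₀ : ℝ} (h : Nice p ℓ s₀) (hs : 0 < s₀) (hs1 : s₀ ≤ 1) (i : Fin d) :
    ∑' x, p x * ENNReal.ofReal ((x i : ℝ) ^ 4) ≤ ENNReal.ofReal (m4 s₀ * ℓ ^ 4) := by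
  have hℓ := h.pos
  have h1 := h.em i
  rw [ew_cosh h.symm.even] at h1
  have h2 : ∀ x, p x * ENNReal.ofReal ((x i : ℝ) ^ 4) ≤ ENNReal.ofReal (24 * ℓ ^ 4 / s₀ ^ 4) *
      (p x * ENNReal.ofReal (Real.cosh (s₀ / ℓ * (x i : ℝ)))) := by
    intro x
    rw [mul_left_comm, ← ENNReal.ofReal_mul (by positivity)]
    gcongr
    have := pow4_le_cosh (s₀ / ℓ * (x i : ℝ))
    calc (x i : ℝ) ^ 4 = 24 * ℓ ^ 4 / s₀ ^ 4 * ((s₀ / ℓ * (x i : ℝ)) ^ 4 / 24) := by field_simp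
      _ ≤ _ := by gcongr
  refine (ENNReal.tsum_le_tsum h2).trans ?_
  rw [ENNReal.tsum_mul_left]
  refine (mul_le_mul_right h1 _).trans ?_
  rw [← ENNReal.ofReal_mul (by positivity)]
  apply ENNReal.ofReal_le_ofReal
  have : 1 + s₀ ^ 2 ≤ 2 := by nlinarith
  calc 24 * ℓ ^ 4 / s₀ ^ 4 * (1 + s₀ ^ 2) ≤ 24 * ℓ ^ 4 / s₀ ^ 4 * 2 := by gcongr
    _ = _ := by unfold m4; ring

lemma real_hasSum {p : (Fin d → ℤ) → ℝ≥0∞} {ℓ s₀ : ℝ} (h : Nice p ℓ s₀) {g : (Fin d → ℤ) → ℝ} (hg : ∀ x, 0 ≤ g x)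
    {a : ℝ} (ha : 0 ≤ a) (hs : ∑' x, p x * ENNReal.ofReal (g x) = ENNReal.ofReal a) :
    HasSum (fun x => (p x).toReal * g x) a := by
  have hne : ∑' x, p x * ENNReal.ofReal (g x) ≠ ⊤ := by rw [hs]; exact ENNReal.ofReal_ne_top
  have := (ENNReal.summable_toReal hne).hasSum
  rw [← ENNReal.tsum_toReal_eq (fun a => ENNReal.ne_top_of_tsum_ne_top hne a), hs, ENNReal.toReal_ofReal ha] at this
  simpa [ENNReal.toReal_mul, ENNReal.toReal_ofReal, hg] using this

lemma Nice.hasSum_one {p : (Fin d → ℤ) → ℝ≥0∞} {ℓ s₀ : ℝ} (h : Nice p ℓ s₀) : HasSum (fun x => (p x).toReal) 1 := by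
  have := real_hasSum h (g := fun _ => 1) (fun _ => zero_le_one) zero_le_one (by simpa [mass] using h.mass_one)
  simpa using this

lemma Nice.hasSum_sq {p : (Fin d → ℤ) → ℝ≥0∞} {ℓ s₀ : ℝ} (h : Nice p ℓ s₀) (hd : 0 < d) (i : Fin d) :
    HasSum (fun x => (p x).toReal * (x i : ℝ) ^ 2) (ℓ ^ 2 / d) := by
  refine real_hasSum h (fun x => sq_nonneg _) (by positivity) ?_
  have h1 := coord_sq h.symm i
  have hd' : (0:ℝ) < d := by exact_mod_cast hd
  rw [ENNReal.ofReal_div_of_pos hd', ← h.sm, ← h1,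
    ENNReal.ofReal_natCast, mul_comm, ENNReal.mul_div_cancel_right]
  · exact_mod_cast hd.ne'
  · exact ENNReal.natCast_ne_top d

lemma Nice.hasSum_cross {p : (Fin d → ℤ) → ℝ≥0∞} {ℓ s₀ : ℝ} (h : Nice p ℓ s₀) (hd : 0 < d) {i j : Fin d} (hij : i ≠ j) :
    HasSum (fun x => (p x).toReal * ((x i : ℝ) * (x j : ℝ))) 0 := by
  have hs : Summable (fun x => (p x).toReal * ((x i : ℝ) * (x j : ℝ))) := by
    refine Summable.of_norm_bounded ((h.hasSum_sq hd i).summable.add (h.hasSum_sq hd j).summable) fun x => ?_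
    rw [Real.norm_eq_abs, abs_mul, abs_of_nonneg ENNReal.toReal_nonneg, ← mul_add]
    refine mul_le_mul_of_nonneg_left ?_ ENNReal.toReal_nonneg
    rw [abs_le]; constructor <;> nlinarith [sq_nonneg ((x i : ℝ) + x j), sq_nonneg ((x i : ℝ) - x j), sq_nonneg (x i : ℝ), sq_nonneg (x j : ℝ)]
  have h1 := hs.hasSum
  set e := sgnEquiv (d := d) 1 (fun k => decide (k = i)) with he
  have h2 := (e.hasSum_iff (f := fun x => (p x).toReal * ((x i : ℝ) * (x j : ℝ)))).mpr h1
  have h3 : ((fun x => (p x).toReal * ((x i : ℝ) * (x j : ℝ))) ∘ e) = fun x => -((p x).toReal * ((x i : ℝ) * (x j : ℝ))) := by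
    funext x
    have hp : p (e x) = p x := h.symm _ _ x
    simp only [Function.comp]
    rw [hp, he]
    simp [sgnEquiv, hij.symm]
  rw [h3] at h2
  have h4 := h2.unique h1.neg
  have h5 : (∑' x, (p x).toReal * ((x i : ℝ) * (x j : ℝ))) = 0 := by
    linarith
  rwa [h5] at h1

def dotp (k : Fin d → ℝ) (x : Fin d → ℤ) : ℝ := ∑ i, k i * (x i : ℝ)

lemma Nice.hasSum_dot {p : (Fin d → ℤ) → ℝ≥0∞} {ℓ s₀ : ℝ} (h : Nice p ℓ s₀) (hd : 0 < d) (k : Fin d → ℝ) :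
    HasSum (fun x => (p x).toReal * dotp k x ^ 2) ((∑ i, k i ^ 2) * (ℓ ^ 2 / d)) := by
  have h1 : HasSum (fun x => ∑ i, ∑ j, k i * k j * ((p x).toReal * ((x i : ℝ) * (x j : ℝ))))
      (∑ i, ∑ j, k i * k j * (if i = j then ℓ ^ 2 / d else 0)) := by
    refine hasSum_sum fun i _ => hasSum_sum fun j _ => ?_
    refine HasSum.mul_left _ ?_
    split_ifs with hij
    · subst hij; simpa [sq, pow_two] using h.hasSum_sq hd i
    · exact h.hasSum_cross hd hij
  convert h1 using 1
  · funext x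
    unfold dotp
    rw [pow_two, Finset.sum_mul_sum, Finset.mul_sum]
    refine Finset.sum_congr rfl fun i _ => ?_
    rw [Finset.mul_sum]
    exact Finset.sum_congr rfl fun j _ => by ring
  · simp [Finset.sum_mul, pow_two]

lemma dotp_four (k : Fin d → ℝ) (x : Fin d → ℤ) : dotp k x ^ 4 ≤ d ^ 3 * ∑ i, k i ^ 4 * (x i : ℝ) ^ 4 := by
  have h1 : dotp k x ^ 2 ≤ d * ∑ i, (k i * (x i:ℝ)) ^ 2 := by
    have := sq_sum_le_card_mul_sum_sq (s := Finset.univ) (f := fun i : Fin d => k i * (x i : ℝ))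
    simpa [dotp] using this
  have h2 : (∑ i, (k i * (x i:ℝ)) ^ 2) ^ 2 ≤ d * ∑ i, ((k i * (x i:ℝ)) ^ 2) ^ 2 := by
    have := sq_sum_le_card_mul_sum_sq (s := Finset.univ) (f := fun i : Fin d => (k i * (x i : ℝ)) ^ 2)
    simpa using this
  calc dotp k x ^ 4 = (dotp k x ^ 2) ^ 2 := by ring
    _ ≤ (d * ∑ i, (k i * (x i:ℝ)) ^ 2) ^ 2 := pow_le_pow_left₀ (sq_nonneg _) h1 2
    _ = d ^ 2 * (∑ i, (k i * (x i:ℝ)) ^ 2) ^ 2 := by ring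
    _ ≤ d ^ 2 * (d * ∑ i, ((k i * (x i:ℝ)) ^ 2) ^ 2) := by gcongr
    _ = _ := by
      rw [← mul_assoc, ← pow_succ]; congr 1
      exact Finset.sum_congr rfl fun i _ => by ring

lemma cos_le_quartic (x : ℝ) : Real.cos x ≤ 1 - x ^ 2 / 2 + x ^ 4 / 2 := by
  by_cases h : |x| ≤ 1
  · have := (abs_le.mp (Real.cos_bound h)).2
    have h2 : |x| ^ 4 = x ^ 4 := by rw [show (4:ℕ) = 2 * 2 from rfl, pow_mul, pow_mul, sq_abs]
    rw [h2] at this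
    have : 0 ≤ x ^ 4 := by positivity
    nlinarith
  · have h1 : 1 ≤ x ^ 2 := by rw [← sq_abs]; nlinarith [not_le.mp h]
    have := Real.cos_le_one x
    nlinarith

/-- characteristic function -/
def phi (p : (Fin d → ℤ) → ℝ≥0∞) (k : Fin d → ℝ) : ℝ := ∑' x, (p x).toReal * Real.cos (dotp k x)

lemma Nice.bdd {p : (Fin d → ℤ) → ℝ≥0∞} {ℓ s₀ : ℝ} (h : Nice p ℓ s₀) {g : (Fin d → ℤ) → ℝ} (hg : ∀ x, |g x| ≤ 1) :
    Summable (fun x => (p x).toReal * g x) := by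
  refine Summable.of_norm_bounded h.hasSum_one.summable fun x => ?_
  rw [Real.norm_eq_abs, abs_mul, abs_of_nonneg ENNReal.toReal_nonneg]
  exact mul_le_of_le_one_right ENNReal.toReal_nonneg (hg x)

lemma dotp_neg (k : Fin d → ℝ) (x : Fin d → ℤ) : dotp k (-x) = - dotp k x := by
  simp [dotp]

lemma dotp_add (k : Fin d → ℝ) (x y : Fin d → ℤ) : dotp k (x + y) = dotp k x + dotp k y := by
  simp [dotp, mul_add, Finset.sum_add_distrib]

lemma Nice.phi_shift {p : (Fin d → ℤ) → ℝ≥0∞} {ℓ s₀ : ℝ} (h : Nice p ℓ s₀) (k : Fin d → ℝ) (b : ℝ) :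
    HasSum (fun x => (p x).toReal * Real.cos (dotp k x + b)) (phi p k * Real.cos b) := by
  have h1 : HasSum (fun x => (p x).toReal * Real.cos (dotp k x)) (phi p k) :=
    (h.bdd fun x => Real.abs_cos_le_one _).hasSum
  have h2 := (h.bdd (g := fun x => Real.sin (dotp k x)) fun x => Real.abs_sin_le_one _).hasSum
  have h3 := ((Equiv.neg (Fin d → ℤ)).hasSum_iff (f := fun x => (p x).toReal * Real.sin (dotp k x))).mpr h2
  have h4 : ((fun x => (p x).toReal * Real.sin (dotp k x)) ∘ (Equiv.neg (Fin d → ℤ))) = fun x => -((p x).toReal * Real.sin (dotp k x)) := by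
    funext x
    simp [dotp_neg, h.symm.even]
  rw [h4] at h3
  have h5 := h3.unique h2.neg
  have h6 : ∑' x, (p x).toReal * Real.sin (dotp k x) = 0 := by linarith
  rw [h6] at h2
  have h7 := (h1.mul_right (Real.cos b)).sub (h2.mul_right (Real.sin b))
  rw [zero_mul, sub_zero] at h7
  refine h7.congr_fun ?_
  intro x; rw [Real.cos_add]; ring

lemma Nice.phi_bounds {p : (Fin d → ℤ) → ℝ≥0∞} {ℓ s₀ : ℝ} (h : Nice p ℓ s₀) (hs : 0 < s₀) (hs1 : s₀ ≤ 1) (hd : 0 < d)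
    (k : Fin d → ℝ) {a : ℝ} (hk : ∀ i, k i ^ 2 * ℓ ^ 2 ≤ a) (ha1 : a ≤ 1) (ha : a * (2 * d ^ 4 * m4 s₀) ≤ 1) :
    0 ≤ phi p k ∧ phi p k ≤ Real.exp (-((∑ i, k i ^ 2) * ℓ ^ 2 / (4 * d))) := by
  have hℓ := h.pos
  have hd' : (0:ℝ) < d := by exact_mod_cast hd
  have h1 : HasSum (fun x => (p x).toReal * Real.cos (dotp k x)) (phi p k) :=
    (h.bdd fun x => Real.abs_cos_le_one _).hasSum
  have h2 := h.hasSum_dot hd k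
  constructor
  · have h3 := (h.hasSum_one).sub (h2.mul_right (1/2))
    have h4 : 1 - (∑ i, k i ^ 2) * (ℓ ^ 2 / d) * (1/2) ≤ phi p k := by
      refine hasSum_le (fun x => ?_) h3 h1
      have := Real.one_sub_sq_div_two_le_cos (x := dotp k x)
      have := mul_le_mul_of_nonneg_left this (ENNReal.toReal_nonneg (a := p x))
      linarith
    have h5 : (∑ i, k i ^ 2) * ℓ ^ 2 ≤ d * 1 := by
      rw [Finset.sum_mul]
      refine (Finset.sum_le_sum fun i _ => (hk i).trans ha1).trans ?_
      simp
    have h6 : (∑ i, k i ^ 2) * (ℓ ^ 2 / d) ≤ 1 := by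
      rw [← mul_div_assoc, div_le_one hd']; linarith
    linarith
  · have hfour : ∀ i : Fin d, ∃ a, a ≤ m4 s₀ * ℓ ^ 4 ∧ HasSum (fun x => (p x).toReal * (x i : ℝ) ^ 4) a := by
      intro i
      have hb := h.fourth hs hs1 i
      have hm : 0 ≤ m4 s₀ * ℓ ^ 4 := by unfold m4; positivity
      refine ⟨(∑' x, p x * ENNReal.ofReal ((x i : ℝ) ^ 4)).toReal, ?_, ?_⟩
      · exact ENNReal.toReal_le_of_le_ofReal hm hb
      · refine real_hasSum h (fun x => by positivity) ENNReal.toReal_nonneg ?_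
        rw [ENNReal.ofReal_toReal (ne_top_of_le_ne_top ENNReal.ofReal_ne_top hb)]
    choose A hA hAs using hfour
    have h3 : HasSum (fun x => ∑ i, k i ^ 4 * ((p x).toReal * (x i : ℝ) ^ 4)) (∑ i, k i ^ 4 * A i) :=
      hasSum_sum fun i _ => (hAs i).mul_left _
    have h4 := ((h.hasSum_one).sub (h2.mul_right (1/2))).add (h3.mul_left ((d:ℝ) ^ 3 / 2))
    have h5 := hasSum_le (fun x => ?_) h1 h4
    · have h6 : ∑ i, k i ^ 4 * A i ≤ (∑ i, k i ^ 2) * (a * (m4 s₀ * ℓ ^ 2)) := by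
        rw [Finset.sum_mul]
        refine Finset.sum_le_sum fun i _ => ?_
        have hm : 0 ≤ m4 s₀ := by unfold m4; positivity
        calc k i ^ 4 * A i ≤ k i ^ 4 * (m4 s₀ * ℓ ^ 4) := mul_le_mul_of_nonneg_left (hA i) (by positivity)
          _ = k i ^ 2 * ((k i ^ 2 * ℓ ^ 2) * (m4 s₀ * ℓ ^ 2)) := by ring
          _ ≤ _ := by gcongr; exact hk i
      have h7 : (d:ℝ) ^ 3 / 2 * (∑ i, k i ^ 4 * A i) ≤ (∑ i, k i ^ 2) * ℓ ^ 2 / (4 * d) := by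
        calc (d:ℝ) ^ 3 / 2 * (∑ i, k i ^ 4 * A i) ≤ (d:ℝ) ^ 3 / 2 * ((∑ i, k i ^ 2) * (a * (m4 s₀ * ℓ ^ 2))) := by gcongr
          _ = (∑ i, k i ^ 2) * ℓ ^ 2 / (4 * d) * (a * (2 * d ^ 4 * m4 s₀)) := by field_simp; ring
          _ ≤ (∑ i, k i ^ 2) * ℓ ^ 2 / (4 * d) * 1 := by gcongr
          _ = _ := by ring
      have h8 := Real.add_one_le_exp (-((∑ i, k i ^ 2) * ℓ ^ 2 / (4 * d)))
      have h9 : (∑ i, k i ^ 2) * (ℓ ^ 2 / d) * (1/2) = 2 * ((∑ i, k i ^ 2) * ℓ ^ 2 / (4 * d)) := by field_simp; ring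
      linarith
    · have := cos_le_quartic (dotp k x)
      have h6 := dotp_four k x
      have h7 : ∑ i, k i ^ 4 * ((p x).toReal * (x i : ℝ) ^ 4) = (p x).toReal * ∑ i, k i ^ 4 * (x i : ℝ) ^ 4 := by
        rw [Finset.mul_sum]; exact Finset.sum_congr rfl fun i _ => by ring
      rw [h7]
      have h8 : Real.cos (dotp k x) ≤ 1 - dotp k x ^ 2 / 2 + d ^ 3 / 2 * ∑ i, k i ^ 4 * (x i : ℝ) ^ 4 := by linarith
      have := mul_le_mul_of_nonneg_left h8 (ENNReal.toReal_nonneg (a := p x))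
      linarith

lemma Nice.phi_pow {p : (Fin d → ℤ) → ℝ≥0∞} {ℓ s₀ : ℝ} (h : Nice p ℓ s₀) (k : Fin d → ℝ)
    (h0 : 0 ≤ phi p k) (h1 : phi p k ≤ 1) (N : ℕ) (b : ℝ) :
    ∑' x, cpow p N x * ENNReal.ofReal (1 + Real.cos (dotp k x + b)) = ENNReal.ofReal (1 + phi p k ^ N * Real.cos b) := by
  have hab : ∀ a y : ℝ, 0 ≤ a → a ≤ 1 → 0 ≤ 1 + a * Real.cos y := fun a y ha ha1 => by
    nlinarith [Real.neg_one_le_cos y]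
  induction N generalizing b with
  | zero =>
    rw [tsum_eq_single 0]
    · simp [cpow, dl, dotp]
    · intro x hx; simp [cpow, dl, hx]
  | succ N ih =>
    have h2 : ∀ x, cpow p (N+1) x = conv p (cpow p N) x := fun x => rfl
    simp_rw [h2]
    rw [tsum_conv_mul]
    have h3 : ∀ y, ∑' z, p y * cpow p N z * ENNReal.ofReal (1 + Real.cos (dotp k (y + z) + b))
        = ENNReal.ofReal ((p y).toReal * (1 + phi p k ^ N * Real.cos (dotp k y + b))) := by
      intro y
      rw [ENNReal.ofReal_mul ENNReal.toReal_nonneg, ENNReal.ofReal_toReal (h.ne_top y), ← ih, ← ENNReal.tsum_mul_left]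
      refine tsum_congr fun z => ?_
      rw [mul_assoc, dotp_add]; congr 5; ring
    simp_rw [h3]
    have hp0 := pow_nonneg h0 N
    have hp1 := pow_le_one₀ (n := N) h0 h1
    have h4 : HasSum (fun y => (p y).toReal * (1 + phi p k ^ N * Real.cos (dotp k y + b))) (1 + phi p k ^ (N+1) * Real.cos b) := by
      have := h.hasSum_one.add ((h.phi_shift k b).mul_left (phi p k ^ N))
      convert this using 1
      · funext y; ring
      · ring
    rw [← ENNReal.ofReal_tsum_of_nonneg (fun y => mul_nonneg ENNReal.toReal_nonneg (hab _ _ hp0 hp1)) h4.summable, h4.tsum_eq]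

lemma sum_cos_sub {ι : Type*} (T : Finset ι) (θ : ι → ℝ) :
    ∑ t ∈ T, ∑ t' ∈ T, Real.cos (θ t - θ t') = (∑ t ∈ T, Real.cos (θ t)) ^ 2 + (∑ t ∈ T, Real.sin (θ t)) ^ 2 := by
  simp_rw [Real.cos_sub, Finset.sum_add_distrib, pow_two, Finset.sum_mul_sum]

end Blackbox
end

section
namespace Blackbox

variable {d : ℕ} {c₀ : ℝ}

/-- outer radius of good steps -/
def tau (d : ℕ) (s₀ : ℝ) : ℝ := 14 * d / s₀ ^ 2
/-- lower bound for the mass of good steps -/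
def pz (d : ℕ) (s₀ : ℝ) : ℝ := 1 / (2 * d * tau d s₀ ^ 2)

lemma tau_sq (s₀ : ℝ) (hs : 0 < s₀) : 4 * d ^ 2 * m4 s₀ ≤ tau d s₀ ^ 2 := by
  unfold tau m4
  rw [div_pow, mul_div_assoc', ← pow_mul]
  gcongr
  nlinarith [sq_nonneg (d:ℝ)]

lemma tau_ge (hd : 0 < d) {s₀ : ℝ} (hs : 0 < s₀) (hs1 : s₀ ≤ 1) : 14 ≤ tau d s₀ := by
  unfold tau
  rw [le_div_iff₀ (by positivity)]
  have : (1:ℝ) ≤ d := by exact_mod_cast hd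
  nlinarith

/-- good part of p -/
def gd (p : (Fin d → ℤ) → ℝ≥0∞) (ℓ τ : ℝ) (x : Fin d → ℤ) : ℝ≥0∞ :=
  open Classical in if ℓ / (2 * d) ≤ supNorm x ∧ supNorm x ≤ τ * ℓ then p x else 0
/-- bad part of p -/
def ng (p : (Fin d → ℤ) → ℝ≥0∞) (ℓ τ : ℝ) (x : Fin d → ℤ) : ℝ≥0∞ :=
  open Classical in if ℓ / (2 * d) ≤ supNorm x ∧ supNorm x ≤ τ * ℓ then 0 else p x

lemma gd_add_ng (p : (Fin d → ℤ) → ℝ≥0∞) (ℓ τ : ℝ) : (fun x => ng p ℓ τ x + gd p ℓ τ x) = p := by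
  funext x; unfold gd ng; split_ifs <;> simp

lemma ng_le (p : (Fin d → ℤ) → ℝ≥0∞) (ℓ τ : ℝ) (x) : ng p ℓ τ x ≤ p x := by
  unfold ng; split_ifs <;> simp

lemma gd_le (p : (Fin d → ℤ) → ℝ≥0∞) (ℓ τ : ℝ) (x) : gd p ℓ τ x ≤ p x := by
  unfold gd; split_ifs <;> simp

lemma sqNorm_sq_le (x : Fin d → ℤ) : sqNorm x ^ 2 ≤ d * ∑ i, (x i : ℝ) ^ 4 := by
  have := sq_sum_le_card_mul_sum_sq (s := (Finset.univ : Finset (Fin d))) (f := fun i => (x i : ℝ) ^ 2)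
  simp only [Finset.card_univ, Fintype.card_fin, ← pow_mul] at this
  exact this

lemma Nice.good_mass {p : (Fin d → ℤ) → ℝ≥0∞} {ℓ s₀ : ℝ} (h : Nice p ℓ s₀) (hs : 0 < s₀) (hs1 : s₀ ≤ 1) (hd : 0 < d) :
    ENNReal.ofReal (pz d s₀) ≤ mass (gd p ℓ (tau d s₀)) ∧ mass (ng p ℓ (tau d s₀)) ≤ ENNReal.ofReal (1 - pz d s₀) := by
  have hℓ := h.pos
  have hτ := tau_ge hd hs hs1
  have hτ2 := tau_sq (d := d) s₀ hs
  have hd' : (1:ℝ) ≤ d := by exact_mod_cast hd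
  set τ := tau d s₀
  have hm : 0 ≤ m4 s₀ := by unfold m4; positivity
  have hpt : ∀ x, p x * sq x ≤ p x * ENNReal.ofReal (ℓ ^ 2 / 4) + ENNReal.ofReal (d * τ ^ 2 * ℓ ^ 2) * gd p ℓ τ x
      + ENNReal.ofReal (d / (τ ^ 2 * ℓ ^ 2)) * ∑ i, p x * ENNReal.ofReal ((x i : ℝ) ^ 4) := by
    intro x
    have hn := supNorm_nonneg x
    by_cases h1 : ℓ / (2 * d) ≤ supNorm x
    · by_cases h2 : supNorm x ≤ τ * ℓ
      · refine le_trans ?_ (le_trans (le_add_left le_rfl) (le_add_right le_rfl))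
        rw [gd, if_pos ⟨h1, h2⟩, mul_comm]
        gcongr
        unfold sq
        apply ENNReal.ofReal_le_ofReal
        refine (sqNorm_le x).trans ?_
        rw [mul_assoc, ← mul_pow]
        gcongr
      · refine le_trans ?_ (le_add_left le_rfl)
        rw [← Finset.mul_sum, mul_left_comm]
        gcongr
        rw [← ENNReal.ofReal_sum_of_nonneg (fun i _ => by positivity), ← ENNReal.ofReal_mul (by positivity)]
        unfold sq
        apply ENNReal.ofReal_le_ofReal
        rw [div_mul_eq_mul_div, le_div_iff₀ (by positivity)]
        refine le_trans ?_ (sqNorm_sq_le x)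
        rw [pow_two (sqNorm x)]
        refine mul_le_mul_of_nonneg_left ?_ (sqNorm_nonneg x)
        refine le_trans ?_ (supNorm_sq_le hd x)
        rw [← mul_pow]
        gcongr
        exact (not_le.mp h2).le
    · refine le_trans ?_ (le_trans (le_add_right le_rfl) (le_add_right le_rfl))
      gcongr
      unfold sq
      apply ENNReal.ofReal_le_ofReal
      refine (sqNorm_le x).trans ?_
      calc d * supNorm x ^ 2 ≤ d * (ℓ / (2 * d)) ^ 2 := by gcongr; exact (not_le.mp h1).le
        _ = ℓ ^ 2 / 4 * (1 / d) := by field_simp; ring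
        _ ≤ ℓ ^ 2 / 4 * 1 := by gcongr; rw [div_le_one (by positivity)]; exact hd'
        _ = _ := mul_one _
  have hsum := ENNReal.tsum_le_tsum hpt
  rw [h.sm, ENNReal.tsum_add, ENNReal.tsum_add, ENNReal.tsum_mul_right, ENNReal.tsum_mul_left, ENNReal.tsum_mul_left] at hsum
  have e1 : ∑' x, p x = 1 := h.mass_one
  rw [e1, one_mul, Summable.tsum_finsetSum (fun i _ => ENNReal.summable)] at hsum
  have e2 : ENNReal.ofReal (d / (τ ^ 2 * ℓ ^ 2)) * ∑ i : Fin d, ∑' x, p x * ENNReal.ofReal ((x i : ℝ) ^ 4) ≤ ENNReal.ofReal (ℓ ^ 2 / 4) := by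
    refine (mul_le_mul_right (Finset.sum_le_sum fun i _ => h.fourth hs hs1 i) _).trans ?_
    rw [← ENNReal.ofReal_sum_of_nonneg (fun i _ => by positivity), ← ENNReal.ofReal_mul (by positivity)]
    apply ENNReal.ofReal_le_ofReal
    simp only [Finset.sum_const, Finset.card_univ, Fintype.card_fin, nsmul_eq_mul]
    rw [div_mul_eq_mul_div, div_le_iff₀ (by positivity)]
    have : (4 * d ^ 2 * m4 s₀) * ℓ ^ 4 ≤ τ ^ 2 * ℓ ^ 4 := by gcongr
    nlinarith
  have hgm : mass (gd p ℓ τ) ≠ ⊤ := ne_top_of_le_ne_top (by rw [h.mass_one]; exact ENNReal.one_ne_top) (mass_mono (gd_le p ℓ τ))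
  have hadd : mass (ng p ℓ τ) + mass (gd p ℓ τ) = 1 := by
    rw [← h.mass_one]; conv_rhs => rw [← gd_add_ng p ℓ τ]
    unfold mass; rw [ENNReal.tsum_add]
  have h3 : ENNReal.ofReal (pz d s₀) ≤ mass (gd p ℓ τ) := by
    have h4 := hsum.trans (add_le_add_right e2 _)
    change _ ≤ ENNReal.ofReal (ℓ ^ 2 / 4) + ENNReal.ofReal (d * τ ^ 2 * ℓ ^ 2) * mass (gd p ℓ τ) + _ at h4
    rw [← ENNReal.ofReal_toReal hgm] at h4 ⊢
    have hg0 : 0 ≤ (mass (gd p ℓ τ)).toReal := ENNReal.toReal_nonneg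
    set g := (mass (gd p ℓ τ)).toReal
    rw [← ENNReal.ofReal_mul (by positivity), ← ENNReal.ofReal_add (by positivity) (by positivity),
      ← ENNReal.ofReal_add (by positivity) (by positivity), ENNReal.ofReal_le_ofReal_iff (by positivity)] at h4
    apply ENNReal.ofReal_le_ofReal
    unfold pz
    rw [div_le_iff₀ (by positivity)]
    have hl2 : 0 < ℓ ^ 2 := by positivity
    by_contra hcon
    nlinarith [mul_lt_mul_of_pos_left (not_le.mp hcon) hl2]
  refine ⟨h3, ?_⟩
  have hp0 : 0 ≤ pz d s₀ := by unfold pz; positivity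
  rw [ENNReal.ofReal_sub _ hp0, ENNReal.ofReal_one]
  refine le_trans ?_ (tsub_le_tsub_left h3 1)
  rw [← hadd]
  exact ENNReal.le_sub_of_add_le_right hgm le_rfl

/-- indicator of ball -/
def ball (z : Fin d → ℤ) (r : ℝ) (x : Fin d → ℤ) : ℝ≥0∞ := open Classical in if supNorm (x - z) ≤ r then 1 else 0

def kv {m : ℕ} (h : ℝ) (t t' : Fin d → Fin m) (i : Fin d) : ℝ := ((t i : ℕ) : ℝ) * h - ((t' i : ℕ) : ℝ) * h

lemma abs_sub_fin {m : ℕ} (a b : Fin m) : |((a:ℕ):ℝ) - ((b:ℕ):ℝ)| ≤ m := by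
  have h1 : ((a:ℕ):ℝ) ≤ m := by exact_mod_cast a.2.le
  have h2 : ((b:ℕ):ℝ) ≤ m := by exact_mod_cast b.2.le
  have h3 : (0:ℝ) ≤ ((a:ℕ):ℝ) := by positivity
  have h4 : (0:ℝ) ≤ ((b:ℕ):ℝ) := by positivity
  rw [abs_le]; constructor <;> linarith

lemma expsum_le {α : ℝ} (hα : 0 < α) {m : ℕ} (a : Fin m) :
    ∑ b : Fin m, Real.exp (-α * |((a:ℕ):ℝ) - ((b:ℕ):ℝ)|) ≤ (∑' j : ℤ, ENNReal.ofReal (Real.exp (-α * |(j : ℝ)|))).toReal := by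
  rw [← ENNReal.ofReal_le_iff_le_toReal (tsum_int_exp hα), ENNReal.ofReal_sum_of_nonneg (fun _ _ => by positivity), ← tsum_fintype (L := .unconditional _)]
  have hinj : Function.Injective (fun b : Fin m => (((a:ℕ):ℤ) - ((b:ℕ):ℤ))) := by
    intro b c hbc
    simp at hbc
    exact Fin.ext (by omega)
  refine le_trans (le_of_eq ?_) (ENNReal.tsum_comp_le_tsum_of_injective hinj (fun j : ℤ => ENNReal.ofReal (Real.exp (-α * |(j : ℝ)|))))
  refine tsum_congr fun b => ?_
  push_cast; rfl

lemma Nice.conc_aux {p : (Fin d → ℤ) → ℝ≥0∞} {ℓ s₀ : ℝ} (hN : Nice p ℓ s₀) (hs : 0 < s₀) (hs1 : s₀ ≤ 1) (hd : 0 < d)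
    {N m : ℕ} (hm : 1 ≤ m) (hmN : m ^ 2 ≤ N) (z : Fin d → ℤ) {α : ℝ} (hα : α = 1 / (4 * d ^ 3 * tau d s₀ ^ 2)) :
    (∑' w, cpow p N w * ball z (tau d s₀ * ℓ) w) ≤
      ENNReal.ofReal (4 * (∑' j : ℤ, ENNReal.ofReal (Real.exp (-α * |(j : ℝ)|))).toReal ^ d / m ^ d) := by
  have hℓ := hN.pos
  have hτ := tau_ge hd hs hs1
  have hτ2 := tau_sq (d := d) s₀ hs
  have hd' : (1:ℝ) ≤ d := by exact_mod_cast hd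
  have hm' : (1:ℝ) ≤ m := by exact_mod_cast hm
  set τ := tau d s₀
  have hm4 : 0 ≤ m4 s₀ := by unfold m4; positivity
  have hα0 : 0 < α := by rw [hα]; positivity
  set Kα := (∑' j : ℤ, ENNReal.ofReal (Real.exp (-α * |(j : ℝ)|))).toReal
  set h : ℝ := 1 / (d * m * τ * ℓ) with hh
  have hh0 : 0 < h := by positivity
  set a : ℝ := (1 / (d * τ)) ^ 2
  have hk : ∀ (t t' : Fin d → Fin m) i, kv h t t' i ^ 2 * ℓ ^ 2 ≤ a := by
    intro t t' i
    have h1 : kv h t t' i = (((t i : ℕ) : ℝ) - ((t' i : ℕ) : ℝ)) * h := by unfold kv; ring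
    rw [h1, ← mul_pow]
    rw [← sq_abs, abs_mul, abs_mul, abs_of_pos hh0, abs_of_pos hℓ]
    refine pow_le_pow_left₀ (by positivity) ?_ 2
    calc _ ≤ m * h * ℓ := by gcongr; exact abs_sub_fin _ _
      _ = _ := by rw [hh]; field_simp
  have ha1 : a ≤ 1 := by
    apply pow_le_one₀ (by positivity)
    rw [div_le_one (by positivity)]; nlinarith
  have ha : a * (2 * d ^ 4 * m4 s₀) ≤ 1 := by
    calc a * (2 * d ^ 4 * m4 s₀) = 2 * d ^ 2 * m4 s₀ / τ ^ 2 := by simp only [a]; field_simp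
      _ ≤ 1 := by rw [div_le_one (by positivity)]; nlinarith [mul_nonneg (sq_nonneg (d:ℝ)) hm4]
  have hphi := fun t t' => hN.phi_bounds hs hs1 hd (kv h t t') (hk t t') ha1 ha
  have hphi1 : ∀ t t', phi p (kv h t t') ≤ 1 := fun t t' => (hphi t t').2.trans (by
    apply Real.exp_le_one_iff.mpr; apply neg_nonpos.mpr; positivity)
  set A : ℝ := (m : ℝ) ^ d
  have hA : 0 < A := by positivity
  have hcard : ((Finset.univ : Finset (Fin d → Fin m)).card : ℝ) = A := by simp [A]
  -- pointwise
  have hpt : ∀ w, cpow p N w * ENNReal.ofReal (A ^ 2) + ENNReal.ofReal (A ^ 2 / 4) * (cpow p N w * ball z (τ * ℓ) w) ≤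
      ∑ t : Fin d → Fin m, ∑ t' : Fin d → Fin m, cpow p N w * ENNReal.ofReal (1 + Real.cos (dotp (kv h t t') w + - dotp (kv h t t') z)) := by
    intro w
    simp_rw [← Finset.mul_sum]
    have hnn : ∀ t t' : Fin d → Fin m, 0 ≤ 1 + Real.cos (dotp (kv h t t') w + - dotp (kv h t t') z) := fun t t' => by
      linarith [Real.neg_one_le_cos (dotp (kv h t t') w + - dotp (kv h t t') z)]
    have e1 : ∀ t : Fin d → Fin m, ∑ t' : Fin d → Fin m, ENNReal.ofReal (1 + Real.cos (dotp (kv h t t') w + - dotp (kv h t t') z))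
        = ENNReal.ofReal (∑ t' : Fin d → Fin m, (1 + Real.cos (dotp (kv h t t') w + - dotp (kv h t t') z))) := fun t =>
      (ENNReal.ofReal_sum_of_nonneg (fun _ _ => hnn t _)).symm
    simp_rw [e1]
    rw [← ENNReal.ofReal_sum_of_nonneg (fun t _ => Finset.sum_nonneg fun t' _ => hnn t t')]
    set θ : (Fin d → Fin m) → ℝ := fun t => ∑ i, ((t i : ℕ) : ℝ) * h * ((w - z) i : ℝ) with hθ
    have e2 : ∀ t t' : Fin d → Fin m, dotp (kv h t t') w + - dotp (kv h t t') z = θ t - θ t' := by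
      intro t t'
      simp only [hθ, dotp, kv, ← Finset.sum_neg_distrib, ← Finset.sum_add_distrib, ← Finset.sum_sub_distrib]
      refine Finset.sum_congr rfl fun i _ => ?_
      simp only [Pi.sub_apply]; push_cast; ring
    have e3 : ∑ t : Fin d → Fin m, ∑ t' : Fin d → Fin m, (1 + Real.cos (dotp (kv h t t') w + - dotp (kv h t t') z))
        = A ^ 2 + ((∑ t, Real.cos (θ t)) ^ 2 + (∑ t, Real.sin (θ t)) ^ 2) := by
      simp_rw [e2, Finset.sum_add_distrib]
      rw [sum_cos_sub]
      simp only [Finset.sum_const, nsmul_eq_mul, hcard, mul_one]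
      ring
    rw [e3]
    unfold ball
    split_ifs with hb
    · rw [mul_one, mul_comm (ENNReal.ofReal (A ^ 2 / 4)), ← mul_add, ← ENNReal.ofReal_add (by positivity) (by positivity)]
      gcongr
      have hc : ∀ t, 1 / 2 ≤ Real.cos (θ t) := by
        intro t
        have hθ1 : |θ t| ≤ 1 := by
          refine (Finset.abs_sum_le_sum_abs _ _).trans ?_
          have : ∀ i ∈ (Finset.univ : Finset (Fin d)), |((t i : ℕ) : ℝ) * h * ((w - z) i : ℝ)| ≤ 1 / d := by
            intro i _
            rw [abs_mul, abs_of_nonneg (by positivity)]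
            have h1 : ((t i : ℕ) : ℝ) ≤ m := by exact_mod_cast (t i).2.le
            calc _ ≤ m * h * (τ * ℓ) := by
                  gcongr
                  exact (abs_le_supNorm (w - z) i).trans hb
              _ = 1 / d := by rw [hh]; field_simp
          refine (Finset.sum_le_sum this).trans ?_
          simp; rw [mul_inv_cancel₀ (by positivity)]
        have := Real.one_sub_sq_div_two_le_cos (x := θ t)
        have : θ t ^ 2 ≤ 1 := by rw [← sq_abs]; exact pow_le_one₀ (abs_nonneg _) hθ1
        linarith
      have hsumc : A / 2 ≤ ∑ t, Real.cos (θ t) := by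
        refine le_trans ?_ (Finset.sum_le_sum fun t _ => hc t)
        simp only [Finset.sum_const, nsmul_eq_mul, hcard]; linarith
      have : (A/2)^2 ≤ (∑ t, Real.cos (θ t)) ^ 2 := by gcongr
      nlinarith [sq_nonneg (∑ t, Real.sin (θ t))]
    · rw [mul_zero, mul_zero, add_zero]
      gcongr
      nlinarith [sq_nonneg (∑ t, Real.sin (θ t)), sq_nonneg (∑ t, Real.cos (θ t))]
  have hsum := ENNReal.tsum_le_tsum hpt
  rw [ENNReal.tsum_add, ENNReal.tsum_mul_left, ENNReal.tsum_mul_right] at hsum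
  have e1 : ∑' w, cpow p N w = 1 := by
    have := mass_cpow p N; rw [hN.mass_one, one_pow] at this; exact this
  rw [e1, one_mul, Summable.tsum_finsetSum (fun i _ => ENNReal.summable)] at hsum
  simp_rw [Summable.tsum_finsetSum (fun i _ => ENNReal.summable)] at hsum
  have e2 : ∀ t t' : Fin d → Fin m, ∑' w, cpow p N w * ENNReal.ofReal (1 + Real.cos (dotp (kv h t t') w + - dotp (kv h t t') z)) ≤
      ENNReal.ofReal (1 + ∏ i, Real.exp (-α * |((t i : ℕ):ℝ) - ((t' i : ℕ):ℝ)|)) := by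
    intro t t'
    rw [hN.phi_pow _ (hphi t t').1 (hphi1 t t')]
    apply ENNReal.ofReal_le_ofReal
    gcongr 1 + ?_
    have h0 : 0 ≤ phi p (kv h t t') ^ N := pow_nonneg (hphi t t').1 N
    refine (mul_le_of_le_one_right h0 (Real.cos_le_one _)).trans ?_
    refine (pow_le_pow_left₀ (hphi t t').1 (hphi t t').2 N).trans ?_
    rw [← Real.exp_nat_mul, ← Real.exp_sum]
    apply Real.exp_le_exp.mpr
    rw [mul_neg, ← Finset.mul_sum, neg_mul]
    apply neg_le_neg
    rw [Finset.mul_sum, Finset.sum_mul, Finset.sum_div, Finset.mul_sum]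
    refine Finset.sum_le_sum fun i _ => ?_
    have h1 : kv h t t' i = (((t i : ℕ) : ℝ) - ((t' i : ℕ) : ℝ)) * h := by unfold kv; ring
    have h2 : |((t i : ℕ):ℝ) - ((t' i : ℕ):ℝ)| ≤ (((t i : ℕ):ℝ) - ((t' i : ℕ):ℝ)) ^ 2 := by
      have : |((t i : ℕ):ℤ) - ((t' i : ℕ):ℤ)| ≤ (((t i : ℕ):ℤ) - ((t' i : ℕ):ℤ)) ^ 2 := by
        rw [← sq_abs]; exact Int.le_self_sq _
      exact_mod_cast this
    have h3 : (m:ℝ) ^ 2 ≤ N := by exact_mod_cast hmN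
    rw [h1]
    calc α * |((t i : ℕ):ℝ) - ((t' i : ℕ):ℝ)| ≤ α * (((t i : ℕ):ℝ) - ((t' i : ℕ):ℝ)) ^ 2 := by gcongr
      _ = m ^ 2 * (((((t i : ℕ):ℝ) - ((t' i : ℕ):ℝ)) * h) ^ 2 * ℓ ^ 2 / (4 * d)) := by
        rw [hα, hh]; field_simp
      _ ≤ _ := by gcongr
  have e3 := hsum.trans (Finset.sum_le_sum fun t _ => Finset.sum_le_sum fun t' _ => e2 t t')
  have e4 : ∀ t : Fin d → Fin m, ∑ t' : Fin d → Fin m, ENNReal.ofReal (1 + ∏ i, Real.exp (-α * |((t i : ℕ):ℝ) - ((t' i : ℕ):ℝ)|)) ≤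
      ENNReal.ofReal (A + Kα ^ d) := by
    intro t
    rw [← ENNReal.ofReal_sum_of_nonneg (fun _ _ => by positivity)]
    apply ENNReal.ofReal_le_ofReal
    rw [Finset.sum_add_distrib]
    simp only [Finset.sum_const, nsmul_eq_mul, hcard, mul_one]
    gcongr A + ?_
    rw [← Fintype.piFinset_univ, ← Finset.prod_univ_sum (fun _ => (Finset.univ : Finset (Fin m))) (fun i j => Real.exp (-α * |((t i : ℕ):ℝ) - ((j : ℕ):ℝ)|))]
    refine (Finset.prod_le_prod (fun i _ => by positivity) fun i _ => expsum_le hα0 (t i)).trans ?_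
    simp [Kα]
  have hK0 : 0 ≤ Kα := ENNReal.toReal_nonneg
  have e5 := e3.trans (Finset.sum_le_sum fun t _ => e4 t)
  rw [← ENNReal.ofReal_sum_of_nonneg (fun _ _ => by positivity)] at e5
  simp only [Finset.sum_const, nsmul_eq_mul, hcard] at e5
  rw [mul_add, ← pow_two, ENNReal.ofReal_add (by positivity) (by positivity), ENNReal.add_le_add_iff_left ENNReal.ofReal_ne_top] at e5
  set P := ∑' w, cpow p N w * ball z (τ * ℓ) w
  calc P = ENNReal.ofReal (4 / A ^ 2) * (ENNReal.ofReal (A ^ 2 / 4) * P) := by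
        rw [← mul_assoc, ← ENNReal.ofReal_mul (by positivity)]
        rw [show 4 / A ^ 2 * (A ^ 2 / 4) = 1 by field_simp]; simp
    _ ≤ ENNReal.ofReal (4 / A ^ 2) * ENNReal.ofReal (A * Kα ^ d) := by gcongr
    _ = _ := by
      rw [← ENNReal.ofReal_mul (by positivity)]
      congr 1
      field_simp

/-- concentration -/
lemma Nice.conc (hd : 0 < d) {s₀ : ℝ} (hs : 0 < s₀) (hs1 : s₀ ≤ 1) : ∃ Kc : ℝ, 0 < Kc ∧
    ∀ (p : (Fin d → ℤ) → ℝ≥0∞) (ℓ : ℝ), Nice p ℓ s₀ → ∀ (N : ℕ) (z : Fin d → ℤ),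
      (∑' w, cpow p N w * ball z (tau d s₀ * ℓ) w) ≤ ENNReal.ofReal (Kc / Real.sqrt (N + 1) ^ d) := by
  set α : ℝ := 1 / (4 * d ^ 3 * tau d s₀ ^ 2) with hα
  set Kα := (∑' j : ℤ, ENNReal.ofReal (Real.exp (-α * |(j : ℝ)|))).toReal
  have hK0 : 0 ≤ Kα := ENNReal.toReal_nonneg
  refine ⟨4 * (2 * Kα) ^ d + 1, by positivity, fun p ℓ hN N z => ?_⟩
  rcases Nat.eq_zero_or_pos N with rfl | hpos
  · refine le_trans (b := 1) ?_ ?_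
    · calc _ ≤ ∑' w, cpow p 0 w := ENNReal.tsum_le_tsum fun w => by
            unfold ball; split_ifs <;> simp
        _ = 1 := by have := mass_cpow p 0; rw [pow_zero] at this; exact this
    · simp
      positivity
  · have hm : 1 ≤ Nat.sqrt N := Nat.sqrt_pos.mpr hpos
    refine (hN.conc_aux hs hs1 hd hm (Nat.sqrt_le' N) z hα).trans ?_
    apply ENNReal.ofReal_le_ofReal
    set m := Nat.sqrt N
    have h1 : N + 1 ≤ (m + 1) ^ 2 := Nat.lt_succ_sqrt' N
    have h2 : Real.sqrt (N + 1) ≤ 2 * m := by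
      apply Real.sqrt_le_iff.mpr
      refine ⟨by positivity, ?_⟩
      have h1' : (N:ℝ) + 1 ≤ (m + 1) ^ 2 := by exact_mod_cast h1
      have : (1:ℝ) ≤ m := by exact_mod_cast hm
      nlinarith
    have hm' : (1:ℝ) ≤ m := by exact_mod_cast hm
    change 4 * Kα ^ d / m ^ d ≤ _
    calc 4 * Kα ^ d / (m:ℝ) ^ d = 4 * (2 * Kα) ^ d / (2 * m) ^ d := by
          rw [mul_pow, mul_pow]; field_simp
      _ ≤ 4 * (2 * Kα) ^ d / Real.sqrt (N + 1) ^ d := by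
          have : 0 < Real.sqrt (N + 1) := Real.sqrt_pos.mpr (by positivity)
          gcongr
      _ ≤ _ := by gcongr; linarith

end Blackbox
end

section
namespace Blackbox

variable {d : ℕ} {c₀ : ℝ}

lemma tsum_antidiag (f : ℕ → ℕ → ℝ≥0∞) : ∑' k, ∑ j ∈ Finset.range (k + 1), f j (k - j) = ∑' j, ∑' N, f j N := by
  simp_rw [← Nat.succ_eq_add_one, ← Finset.Nat.sum_antidiagonal_eq_sum_range_succ f]
  rw [← ENNReal.tsum_prod, ← Finset.HasAntidiagonal.sigmaAntidiagonalEquivProd.tsum_eq, ENNReal.tsum_sigma']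
  refine tsum_congr fun k => ?_
  rw [tsum_fintype, ← Finset.sum_attach]
  rfl

lemma cpow_decomp (f g : (Fin d → ℤ) → ℝ≥0∞) (n : ℕ) (x : Fin d → ℤ) :
    cpow (fun x => f x + g x) (n + 1) x =
      ∑ j ∈ Finset.range (n + 1), conv (cpow f j) (conv g (cpow (fun x => f x + g x) (n - j))) x + cpow f (n + 1) x := by
  set p := fun x => f x + g x
  induction n generalizing x with
  | zero => simp [cpow_one, cpow, conv_dl, dl_conv, p, add_comm]
  | succ n ih =>
    have h1 : cpow p (n + 1 + 1) x = conv f (cpow p (n+1)) x + conv g (cpow p (n+1)) x := by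
      change conv p (cpow p (n+1)) x = _
      rw [show conv p (cpow p (n+1)) = _ from add_conv f g _]
    have h2 : conv f (cpow p (n+1)) x =
        ∑ j ∈ Finset.range (n + 1), conv (cpow f (j+1)) (conv g (cpow p (n - j))) x + cpow f (n + 1 + 1) x := by
      have e : cpow p (n+1) = fun y => (∑ j ∈ Finset.range (n + 1), conv (cpow f j) (conv g (cpow p (n - j))) y) + cpow f (n + 1) y :=
        funext ih
      rw [e, conv_add]
      congr 1
      have e2 : ∀ j, conv (cpow f (j+1)) (conv g (cpow p (n - j))) x = conv f (conv (cpow f j) (conv g (cpow p (n - j)))) x := by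
        intro j; rw [← conv_assoc f]; rfl
      simp_rw [e2]
      unfold conv
      simp_rw [Finset.mul_sum]
      rw [Summable.tsum_finsetSum (fun i _ => ENNReal.summable)]
      rfl
    rw [h1, h2, Finset.sum_range_succ' _ (n+1)]
    simp only [Nat.add_sub_add_right, Nat.sub_zero, cpow, dl_conv]
    ring

lemma sqrt_sum {L : ℝ} (hL : 1 ≤ L) (M : ℕ) :
    ∑ N ∈ Finset.range M, (if ((N:ℝ) + 1) ≤ L ^ 2 then 1 / L ^ 2 else L / Real.sqrt (N + 1) ^ 3) ≤ 6 := by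
  have hL0 : 0 < L := by linarith
  suffices h : ∑ N ∈ Finset.range M, (if ((N:ℝ) + 1) ≤ L ^ 2 then 1 / L ^ 2 else L / Real.sqrt (N + 1) ^ 3) ≤
      if (M:ℝ) ≤ L ^ 2 then M / L ^ 2 else 6 - 2 * L / Real.sqrt M by
    refine h.trans ?_
    split_ifs with h1
    · rw [div_le_iff₀ (by positivity)]; linarith
    · have : 0 ≤ 2 * L / Real.sqrt M := by positivity
      linarith
  induction M with
  | zero => simp; positivity
  | succ M ih =>
    rw [Finset.sum_range_succ]
    push_cast
    by_cases h1 : (M:ℝ) + 1 ≤ L ^ 2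
    · rw [if_pos (by linarith)] at ih
      rw [if_pos h1, if_pos h1, add_div]
      linarith
    · rw [if_neg h1, if_neg h1]
      have hn : L ≤ Real.sqrt (M + 1) := Real.le_sqrt_of_sq_le (not_le.mp h1).le
      have hn0 : 0 < Real.sqrt (M + 1) := by linarith
      by_cases h2 : (M:ℝ) ≤ L ^ 2
      · rw [if_pos h2] at ih
        have i1 : M / L ^ 2 ≤ 1 := by rw [div_le_one (by positivity)]; exact h2
        have i2 : L / Real.sqrt (M + 1) ^ 3 ≤ 1 := by
          rw [div_le_one (by positivity)]
          calc L ≤ Real.sqrt (M+1) := hn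
            _ ≤ _ := le_self_pow₀ (by linarith) (by norm_num)
        have i3 : 2 * L / Real.sqrt (M + 1) ≤ 2 := by rw [div_le_iff₀ hn0]; linarith
        linarith
      · rw [if_neg h2] at ih
        have hm : L ≤ Real.sqrt M := Real.le_sqrt_of_sq_le (not_le.mp h2).le
        have hm0 : 0 < Real.sqrt M := by linarith
        have hmn : Real.sqrt M ≤ Real.sqrt (M + 1) := Real.sqrt_le_sqrt (by linarith)
        have e1 : Real.sqrt M ^ 2 = M := Real.sq_sqrt (by positivity)
        have e2 : Real.sqrt (M + 1) ^ 2 = M + 1 := Real.sq_sqrt (by positivity)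
        set a := Real.sqrt M
        set b := Real.sqrt (M + 1)
        have key : L / b ^ 3 ≤ 2 * L / a - 2 * L / b := by
          have : 2 * L / a - 2 * L / b = 2 * L / (a * b * (a + b)) := by
            rw [div_sub_div _ _ hm0.ne' hn0.ne', div_eq_div_iff (by positivity) (by positivity)]
            have : b ^ 2 - a ^ 2 = 1 := by linarith
            linear_combination (2 * L * a * b) * this
          rw [this, div_le_div_iff₀ (by positivity) (by positivity)]
          have i1 : a * b * (a + b) ≤ b * b * (b + b) := by gcongr
          nlinarith
        linarith

lemma sqrt_exp_sum (hd : 3 ≤ d) {s : ℝ} (hs : 0 < s) {L : ℝ} (hL : 1 ≤ L) :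
    ∑' N : ℕ, ENNReal.ofReal (1 / Real.sqrt (N + 1) ^ d * Real.exp (-(s * L / Real.sqrt (N + 1)))) ≤
      ENNReal.ofReal (6 * (1 + d.factorial / s ^ d) * (L ^ 2 / L ^ d)) := by
  have hL0 : 0 < L := by linarith
  set K : ℝ := 1 + d.factorial / s ^ d
  have hK0 : 0 < K := by positivity
  have hpt : ∀ N : ℕ, 1 / Real.sqrt (N + 1) ^ d * Real.exp (-(s * L / Real.sqrt (N + 1))) ≤
      K * (L ^ 2 / L ^ d) * (if ((N:ℝ) + 1) ≤ L ^ 2 then 1 / L ^ 2 else L / Real.sqrt (N + 1) ^ 3) := by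
    intro N
    have hb0 : 0 < Real.sqrt (N + 1) := Real.sqrt_pos.mpr (by positivity)
    split_ifs with h1
    · set b := Real.sqrt (N + 1)
      have hy : 0 < s * L / b := by positivity
      have h2 := Real.pow_div_factorial_le_exp (s * L / b) hy.le d
      have h3 : Real.exp (-(s * L / b)) ≤ d.factorial / (s * L / b) ^ d := by
        rw [Real.exp_neg, ← one_div, div_le_div_iff₀ (by positivity) (by positivity)]
        rw [div_le_iff₀ (by positivity)] at h2
        linarith
      calc 1 / b ^ d * Real.exp (-(s * L / b)) ≤ 1 / b ^ d * (d.factorial / (s * L / b) ^ d) := by gcongr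
        _ = d.factorial / s ^ d * (L ^ 2 / L ^ d) * (1 / L ^ 2) := by
          rw [div_pow, mul_pow]; field_simp
        _ ≤ _ := by gcongr; simp only [K]; linarith
    · have hn : L ≤ Real.sqrt (N + 1) := Real.le_sqrt_of_sq_le (not_le.mp h1).le
      set b := Real.sqrt (N + 1)
      obtain ⟨e, rfl⟩ := Nat.exists_eq_add_of_le hd
      have h4 : Real.exp (-(s * L / b)) ≤ 1 := Real.exp_le_one_iff.mpr (by apply neg_nonpos.mpr; positivity)
      calc 1 / b ^ (3 + e) * Real.exp (-(s * L / b)) ≤ 1 / b ^ (3 + e) * 1 := by gcongr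
        _ = 1 / b ^ 3 * (1 / b ^ e) := by rw [pow_add]; field_simp
        _ ≤ 1 / b ^ 3 * (1 / L ^ e) := by gcongr
        _ = 1 * (L ^ 2 / L ^ (3 + e)) * (L / b ^ 3) := by rw [pow_add]; field_simp
        _ ≤ _ := by gcongr; simp only [K]; have : 0 ≤ ((3+e).factorial : ℝ) / s ^ (3+e) := by positivity
                    linarith
  refine ENNReal.tsum_le_of_sum_range_le fun M => ?_
  rw [← ENNReal.ofReal_sum_of_nonneg (fun _ _ => by positivity)]
  apply ENNReal.ofReal_le_ofReal
  refine (Finset.sum_le_sum fun N _ => hpt N).trans ?_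
  rw [← Finset.mul_sum]
  calc _ ≤ K * (L ^ 2 / L ^ d) * 6 := by gcongr; exact sqrt_sum hL M
    _ = _ := by ring

lemma Nice.em' {p : (Fin d → ℤ) → ℝ≥0∞} {ℓ s₀ : ℝ} (h : Nice p ℓ s₀) (hs : 0 < s₀) {u : ℝ} (hu : |u| ≤ s₀) (i : Fin d) :
    ∑' x, p x * ew (u / ℓ) i x ≤ ENNReal.ofReal (Real.exp (u ^ 2)) := by
  have hℓ := h.pos
  have h1 := h.em i
  rw [ew_cosh h.symm.even] at h1 ⊢
  set r := u / s₀
  have hr : |r| ≤ 1 := by rw [abs_div, abs_of_pos hs, div_le_one hs]; exact hu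
  have h2 : ∀ x, p x * ENNReal.ofReal (Real.cosh (u / ℓ * (x i : ℝ))) + p x * ENNReal.ofReal (r ^ 2) ≤
      p x + ENNReal.ofReal (r ^ 2) * (p x * ENNReal.ofReal (Real.cosh (s₀ / ℓ * (x i : ℝ)))) := by
    intro x
    have := cosh_quad (v := s₀ / ℓ * (x i : ℝ)) hr
    have e : r * (s₀ / ℓ * (x i : ℝ)) = u / ℓ * (x i : ℝ) := by simp only [r]; field_simp
    rw [e] at this
    have c1 := (Real.cosh_pos (u / ℓ * (x i : ℝ))).le
    have c2 := (Real.cosh_pos (s₀ / ℓ * (x i : ℝ))).le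
    calc _ = p x * ENNReal.ofReal (Real.cosh (u / ℓ * (x i : ℝ)) + r ^ 2) := by
          rw [ENNReal.ofReal_add c1 (by positivity), mul_add]
      _ ≤ p x * ENNReal.ofReal (1 + r ^ 2 * Real.cosh (s₀ / ℓ * (x i : ℝ))) := by gcongr
      _ = _ := by
        rw [ENNReal.ofReal_add zero_le_one (by positivity), ENNReal.ofReal_mul (by positivity), ENNReal.ofReal_one]
        ring
  have h3 := ENNReal.tsum_le_tsum h2
  have e1 : ∑' x, p x = 1 := h.mass_one
  rw [ENNReal.tsum_add, ENNReal.tsum_add, ENNReal.tsum_mul_right, ENNReal.tsum_mul_left, e1, one_mul] at h3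
  have h4 := h3.trans (add_le_add_right (mul_le_mul_right h1 _) _)
  rw [← ENNReal.ofReal_mul (by positivity), ← ENNReal.ofReal_one, ← ENNReal.ofReal_add zero_le_one (by positivity)] at h4
  have e2 : 1 + r ^ 2 * (1 + s₀ ^ 2) = 1 + u ^ 2 + r ^ 2 := by simp only [r]; field_simp; ring
  rw [e2, ENNReal.ofReal_add (by positivity) (by positivity), ENNReal.add_le_add_iff_right ENNReal.ofReal_ne_top] at h4
  refine h4.trans (ENNReal.ofReal_le_ofReal ?_)
  linarith [Real.add_one_le_exp (u ^ 2)]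

lemma cpow_ew (p : (Fin d → ℤ) → ℝ≥0∞) (u : ℝ) (i : Fin d) (N : ℕ) :
    ∑' x, cpow p N x * ew u i x = (∑' x, p x * ew u i x) ^ N := by
  induction N with
  | zero =>
    rw [tsum_eq_single 0]
    · simp [cpow, dl, ew]
    · intro x hx; simp [cpow, dl, hx]
  | succ N ih =>
    have h2 : ∀ x, cpow p (N+1) x = conv p (cpow p N) x := fun x => rfl
    simp_rw [h2]
    rw [tsum_conv_mul, pow_succ', ← ih, ← ENNReal.tsum_mul_right]
    refine tsum_congr fun y => ?_
    rw [← ENNReal.tsum_mul_left]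
    refine tsum_congr fun z => ?_
    rw [ew_add]; ring

lemma tl_le_ew (hd : 0 < d) {u : ℝ} (hu : 0 ≤ u) (x : Fin d → ℤ) : tl u x ≤ ∑ i, (ew u i x + ew (-u) i x) := by
  obtain ⟨i, hi⟩ := exists_supNorm_eq hd x
  refine le_trans ?_ (Finset.single_le_sum (f := fun i => ew u i x + ew (-u) i x) (fun _ _ => zero_le) (Finset.mem_univ i))
  unfold tl ew
  rw [hi]
  rcases abs_cases (x i : ℝ) with ⟨h, _⟩ | ⟨h, _⟩
  · rw [h]; exact le_self_add
  · rw [h, show u * -(x i : ℝ) = -u * (x i : ℝ) by ring]; exact le_add_left le_rfl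

lemma Nice.mass_tilt {p : (Fin d → ℤ) → ℝ≥0∞} {ℓ s₀ : ℝ} (h : Nice p ℓ s₀) (hs : 0 < s₀) (hd : 0 < d) {u : ℝ} (hu0 : 0 ≤ u) (hu : u ≤ s₀) (N : ℕ) :
    ∑' x, cpow p N x * tl (u / ℓ) x ≤ ENNReal.ofReal (2 * d * Real.exp (u ^ 2 * N)) := by
  have hℓ := h.pos
  have h1 : ∀ x, cpow p N x * tl (u / ℓ) x ≤ ∑ i, (cpow p N x * ew (u / ℓ) i x + cpow p N x * ew (-u / ℓ) i x) := by
    intro x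
    simp_rw [← mul_add]
    rw [← Finset.mul_sum]
    gcongr
    have := tl_le_ew hd (u := u / ℓ) (by positivity) x
    simpa only [neg_div] using this
  refine (ENNReal.tsum_le_tsum h1).trans ?_
  rw [Summable.tsum_finsetSum (fun i _ => ENNReal.summable)]
  have h2 : ∀ i ∈ (Finset.univ : Finset (Fin d)), ∑' x, (cpow p N x * ew (u / ℓ) i x + cpow p N x * ew (-u / ℓ) i x) ≤ ENNReal.ofReal (2 * Real.exp (u ^ 2 * N)) := by
    intro i _
    rw [ENNReal.tsum_add, cpow_ew, cpow_ew]
    have e1 := h.em' hs (u := u) (by rw [abs_of_nonneg hu0]; exact hu) i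
    have e2 := h.em' hs (u := -u) (by rw [abs_neg, abs_of_nonneg hu0]; exact hu) i
    rw [neg_sq] at e2
    refine (add_le_add (pow_le_pow_left' e1 N) (pow_le_pow_left' e2 N)).trans ?_
    rw [← ENNReal.ofReal_pow (by positivity), ← Real.exp_nat_mul, ← ENNReal.ofReal_add (by positivity) (by positivity)]
    apply ENNReal.ofReal_le_ofReal
    rw [mul_comm (N:ℝ)]; linarith
  refine (Finset.sum_le_sum h2).trans ?_
  rw [← ENNReal.ofReal_sum_of_nonneg (fun _ _ => by positivity)]
  apply ENNReal.ofReal_le_ofReal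
  simp only [Finset.sum_const, Finset.card_univ, Fintype.card_fin, nsmul_eq_mul]
  linarith

/-- basic tilt size -/
def a0 (d : ℕ) (s₀ : ℝ) : ℝ := pz d s₀ * s₀ / (12 * d)

lemma pz_le (hd : 0 < d) {s₀ : ℝ} (hs : 0 < s₀) (hs1 : s₀ ≤ 1) : 0 < pz d s₀ ∧ pz d s₀ ≤ 1 := by
  have hτ := tau_ge hd hs hs1
  have hd' : (1:ℝ) ≤ d := by exact_mod_cast hd
  unfold pz
  refine ⟨by positivity, ?_⟩
  rw [div_le_one (by positivity)]
  nlinarith [mul_pos (by linarith : (0:ℝ) < d) (by linarith : 0 < tau d s₀)]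

lemma a0_le (hd : 0 < d) {s₀ : ℝ} (hs : 0 < s₀) (hs1 : s₀ ≤ 1) : 0 < a0 d s₀ ∧ a0 d s₀ ≤ s₀ / 12 := by
  obtain ⟨h1, h2⟩ := pz_le hd hs hs1
  have hd' : (1:ℝ) ≤ d := by exact_mod_cast hd
  unfold a0
  refine ⟨by positivity, ?_⟩
  gcongr
  · nlinarith
  · linarith

lemma Nice.ng_tilt {p : (Fin d → ℤ) → ℝ≥0∞} {ℓ s₀ : ℝ} (h : Nice p ℓ s₀) (hs : 0 < s₀) (hs1 : s₀ ≤ 1) (hd : 0 < d) {u : ℝ} (hu0 : 0 ≤ u) (hu : u ≤ a0 d s₀) :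
    mass (fun x => ng p ℓ (tau d s₀) x * tl (u / ℓ) x) ≤ ENNReal.ofReal (1 - pz d s₀ / 2) := by
  have hℓ := h.pos
  obtain ⟨hp0, hp1⟩ := pz_le hd hs hs1
  obtain ⟨ha0, ha1⟩ := a0_le hd hs hs1
  have hd' : (1:ℝ) ≤ d := by exact_mod_cast hd
  have hus : u / s₀ ≤ 1 := by rw [div_le_one hs]; linarith
  have hus0 : 0 ≤ u / s₀ := by positivity
  have h1 : ∀ x, ng p ℓ (tau d s₀) x * tl (u / ℓ) x ≤ ng p ℓ (tau d s₀) x + ENNReal.ofReal (u / s₀) * (p x * tl (s₀ / ℓ) x) := by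
    intro x
    have e1 : tl (u / ℓ) x ≤ 1 + ENNReal.ofReal (u / s₀) * tl (s₀ / ℓ) x := by
      unfold tl
      rw [← ENNReal.ofReal_mul hus0, ← ENNReal.ofReal_one, ← ENNReal.ofReal_add zero_le_one (by positivity)]
      apply ENNReal.ofReal_le_ofReal
      have := convexOn_exp.2 (Set.mem_univ 0) (Set.mem_univ (s₀ / ℓ * supNorm x)) (sub_nonneg.mpr hus) hus0 (by ring)
      simp only [smul_eq_mul, mul_zero, zero_add, Real.exp_zero, mul_one] at this
      rw [show u / s₀ * (s₀ / ℓ * supNorm x) = u / ℓ * supNorm x by field_simp] at this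
      linarith
    calc _ ≤ ng p ℓ (tau d s₀) x * (1 + ENNReal.ofReal (u / s₀) * tl (s₀ / ℓ) x) := by gcongr
      _ = ng p ℓ (tau d s₀) x + ENNReal.ofReal (u / s₀) * (ng p ℓ (tau d s₀) x * tl (s₀ / ℓ) x) := by ring
      _ ≤ _ := by gcongr; exact ng_le _ _ _ _
  refine (mass_mono h1).trans ?_
  unfold mass
  rw [ENNReal.tsum_add, ENNReal.tsum_mul_left]
  have h2 := h.mass_tilt hs hd hs.le le_rfl 1
  rw [cpow_one] at h2
  refine (add_le_add (h.good_mass hs hs1 hd).2 (mul_le_mul_right h2 _)).trans ?_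
  rw [← ENNReal.ofReal_mul hus0, ← ENNReal.ofReal_add (by linarith) (by positivity)]
  apply ENNReal.ofReal_le_ofReal
  have e3 : Real.exp (s₀ ^ 2 * (1:ℕ)) ≤ 3 := by
    have : s₀ ^ 2 * (1:ℕ) ≤ 1 := by push_cast; nlinarith
    exact (Real.exp_le_exp.mpr this).trans (by linarith [Real.exp_one_lt_d9])
  have : u / s₀ * (2 * d * Real.exp (s₀ ^ 2 * (1:ℕ))) ≤ pz d s₀ / 2 := by
    calc _ ≤ a0 d s₀ / s₀ * (2 * d * 3) := by gcongr
      _ = _ := by unfold a0; field_simp; ring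
  linarith

end Blackbox
end

section
namespace Blackbox

variable {d : ℕ} {c₀ : ℝ}

lemma ball_shift (z y w : Fin d → ℤ) (r : ℝ) : ball z r (y + w) = ball (z - y) r w := by
  unfold ball; rw [show y + w - z = w - (z - y) by abel]

lemma tl_pos_ne {a : ℝ} (x : Fin d → ℤ) : tl a x * ENNReal.ofReal (Real.exp (-(a * supNorm x))) = 1 := by
  unfold tl
  rw [← ENNReal.ofReal_mul (by positivity), ← Real.exp_add]; simp

lemma tl_split {u : ℝ} (hu : 0 ≤ u) (x y : Fin d → ℤ) : tl u (x + y) ≤ tl (2 * u) x + tl (2 * u) y := by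
  unfold tl
  rw [← ENNReal.ofReal_add (by positivity) (by positivity)]
  apply ENNReal.ofReal_le_ofReal
  have h1 := mul_le_mul_of_nonneg_left (supNorm_add x y) hu
  rcases le_total (supNorm x) (supNorm y) with h | h
  · have : Real.exp (u * supNorm (x + y)) ≤ Real.exp (2 * u * supNorm y) := Real.exp_le_exp.mpr (by nlinarith)
    linarith [Real.exp_pos (2 * u * supNorm x)]
  · have : Real.exp (u * supNorm (x + y)) ≤ Real.exp (2 * u * supNorm x) := Real.exp_le_exp.mpr (by nlinarith)
    linarith [Real.exp_pos (2 * u * supNorm y)]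

lemma conv_ball {f g : (Fin d → ℤ) → ℝ≥0∞} {u r : ℝ} (hu : 0 ≤ u) {Cf Cg : ℝ≥0∞}
    (hf : ∀ z, ∑' w, f w * ball z r w ≤ Cf) (hg : ∀ z, ∑' w, g w * ball z r w ≤ Cg) (z : Fin d → ℤ) :
    ∑' w, conv f g w * (tl u w * ball z r w) ≤ (∑' w, f w * tl (2 * u) w) * Cg + (∑' w, g w * tl (2 * u) w) * Cf := by
  rw [tsum_conv_mul]
  have h1 : ∀ y w, f y * g w * (tl u (y + w) * ball z r (y + w)) ≤
      f y * tl (2 * u) y * (g w * ball (z - y) r w) + g w * tl (2 * u) w * (f y * ball (z - w) r y) := by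
    intro y w
    rw [← ball_shift, ← ball_shift, add_comm w y]
    calc _ ≤ f y * g w * ((tl (2 * u) y + tl (2 * u) w) * ball z r (y + w)) := by gcongr; exact tl_split hu y w
      _ = _ := by ring
  refine (ENNReal.tsum_le_tsum fun y => ENNReal.tsum_le_tsum fun w => h1 y w).trans ?_
  simp_rw [ENNReal.tsum_add]
  refine add_le_add ?_ ?_
  · rw [← ENNReal.tsum_mul_right]
    refine ENNReal.tsum_le_tsum fun y => ?_
    rw [ENNReal.tsum_mul_left]
    gcongr
    exact hg _
  · rw [ENNReal.tsum_comm, ← ENNReal.tsum_mul_right]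
    refine ENNReal.tsum_le_tsum fun y => ?_
    rw [ENNReal.tsum_mul_left]
    gcongr
    exact hf _

lemma Nice.tilt_conc {p : (Fin d → ℤ) → ℝ≥0∞} {ℓ s₀ : ℝ} (h : Nice p ℓ s₀) (hs : 0 < s₀) (hd : 0 < d) {Kc r : ℝ} (hK : 0 < Kc)
    (hc : ∀ (N : ℕ) (z : Fin d → ℤ), (∑' w, cpow p N w * ball z r w) ≤ ENNReal.ofReal (Kc / Real.sqrt (N + 1) ^ d))
    {u : ℝ} (hu0 : 0 ≤ u) (hu : 2 * u ≤ s₀) (N : ℕ) (z : Fin d → ℤ) :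
    ∑' w, cpow p N w * (tl (u / ℓ) w * ball z r w) ≤
      ENNReal.ofReal (4 * d * 2 ^ d * Kc * Real.exp (4 * u ^ 2 * N) / Real.sqrt (N + 1) ^ d) := by
  have hℓ := h.pos
  obtain ⟨m, n, hmn, hm, hn⟩ : ∃ m n : ℕ, N = m + n ∧ N + 1 ≤ 4 * (m + 1) ∧ N + 1 ≤ 4 * (n + 1) :=
    ⟨N / 2, N - N / 2, by omega, by omega, by omega⟩
  have hb : ∀ k : ℕ, N + 1 ≤ 4 * (k + 1) → ∀ z, (∑' w, cpow p k w * ball z r w) ≤ ENNReal.ofReal (2 ^ d * Kc / Real.sqrt (N + 1) ^ d) := by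
    intro k hk z
    refine (hc k z).trans (ENNReal.ofReal_le_ofReal ?_)
    have h0 : 0 < Real.sqrt (N + 1) := Real.sqrt_pos.mpr (by positivity)
    have h1 : 0 < Real.sqrt (k + 1) := Real.sqrt_pos.mpr (by positivity)
    have h2 : Real.sqrt (N + 1) ≤ 2 * Real.sqrt (k + 1) := by
      apply Real.sqrt_le_iff.mpr
      refine ⟨by positivity, ?_⟩
      rw [mul_pow, Real.sq_sqrt (by positivity)]
      have : (N:ℝ) + 1 ≤ 4 * (k + 1) := by exact_mod_cast hk
      linarith
    rw [div_le_div_iff₀ (by positivity) (by positivity)]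
    calc Kc * Real.sqrt (N + 1) ^ d ≤ Kc * (2 * Real.sqrt (k + 1)) ^ d := by gcongr
      _ = _ := by rw [mul_pow]; ring
  have ht : ∀ k : ℕ, k ≤ N → ∑' w, cpow p k w * tl (2 * (u / ℓ)) w ≤ ENNReal.ofReal (2 * d * Real.exp (4 * u ^ 2 * N)) := by
    intro k hk
    have := h.mass_tilt hs hd (u := 2 * u) (by positivity) hu k
    rw [mul_div_assoc] at this
    refine this.trans (ENNReal.ofReal_le_ofReal ?_)
    have hk' : (k:ℝ) ≤ N := by exact_mod_cast hk
    gcongr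
    nlinarith
  have key := conv_ball (u := u / ℓ) (by positivity) (hb m hm) (hb n hn) z
  rw [← cpow_add, ← hmn] at key
  refine key.trans ?_
  refine (add_le_add (mul_le_mul_left (ht m (by omega)) _) (mul_le_mul_left (ht n (by omega)) _)).trans ?_
  have h0 : 0 < Real.sqrt (N + 1) := Real.sqrt_pos.mpr (by positivity)
  rw [← ENNReal.ofReal_mul (by positivity), ← ENNReal.ofReal_add (by positivity) (by positivity)]
  apply ENNReal.ofReal_le_ofReal
  apply le_of_eq
  ring

lemma Nice.term_bound {p : (Fin d → ℤ) → ℝ≥0∞} {ℓ s₀ : ℝ} (h : Nice p ℓ s₀) (hs : 0 < s₀) (hs1 : s₀ ≤ 1) (hd : 0 < d) {Kc : ℝ} (hK : 0 < Kc)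
    (hc : ∀ (N : ℕ) (z : Fin d → ℤ), (∑' w, cpow p N w * ball z (tau d s₀ * ℓ) w) ≤ ENNReal.ofReal (Kc / Real.sqrt (N + 1) ^ d))
    {Bg : ℝ≥0∞} (hB : ∀ w, ℓ / (2 * d) ≤ supNorm w → supNorm w ≤ tau d s₀ * ℓ → p w ≤ Bg)
    {u : ℝ} (hu0 : 0 ≤ u) (hu : u ≤ a0 d s₀) (j N : ℕ) (x : Fin d → ℤ) :
    conv (cpow (ng p ℓ (tau d s₀)) j) (conv (gd p ℓ (tau d s₀)) (cpow p N)) x ≤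
      ENNReal.ofReal (1 - pz d s₀ / 2) ^ j * (Bg * ENNReal.ofReal (Real.exp (-(u * (supNorm x / ℓ))) * (Real.exp (u * tau d s₀) *
        (4 * d * 2 ^ d * Kc * Real.exp (4 * u ^ 2 * N) / Real.sqrt (N + 1) ^ d)))) := by
  have hℓ := h.pos
  obtain ⟨ha0, ha1⟩ := a0_le hd hs hs1
  set τ := tau d s₀
  have huℓ : 0 ≤ u / ℓ := by positivity
  have hW := fun x y => tl_add (d := d) huℓ x y
  set Q := 4 * d * 2 ^ d * Kc * Real.exp (4 * u ^ 2 * N) / Real.sqrt (N + 1) ^ d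
  have hQ : 0 ≤ Q := by positivity
  have h1 : conv (cpow (ng p ℓ τ) j) (conv (gd p ℓ τ) (cpow p N)) x * tl (u / ℓ) x ≤
      conv (cpow (fun y => ng p ℓ τ y * tl (u / ℓ) y) j) (conv (fun y => gd p ℓ τ y * tl (u / ℓ) y) (fun y => cpow p N y * tl (u / ℓ) y)) x := by
    refine (conv_weight hW _ _ x).trans ?_
    exact conv_mono (cpow_weight hW (tl_zero _) _ j) (conv_weight hW _ _) x
  have h2 : ∀ y, conv (fun y => gd p ℓ τ y * tl (u / ℓ) y) (fun y => cpow p N y * tl (u / ℓ) y) y ≤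
      Bg * ENNReal.ofReal (Real.exp (u * τ)) * ENNReal.ofReal Q := by
    intro y
    rw [conv_comm]
    unfold conv
    refine le_trans (ENNReal.tsum_le_tsum fun w => ?_) (b := ∑' w, Bg * ENNReal.ofReal (Real.exp (u * τ)) * (cpow p N w * (tl (u / ℓ) w * ball y (τ * ℓ) w))) ?_
    · have hg : gd p ℓ τ (y - w) * tl (u / ℓ) (y - w) ≤ Bg * ENNReal.ofReal (Real.exp (u * τ)) * ball y (τ * ℓ) w := by
        have e : supNorm (w - y) = supNorm (y - w) := by rw [← supNorm_neg, neg_sub]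
        unfold gd ball
        rw [e]
        by_cases hgood : ℓ / (2 * d) ≤ supNorm (y - w) ∧ supNorm (y - w) ≤ τ * ℓ
        · rw [if_pos hgood, if_pos hgood.2, mul_one]
          refine mul_le_mul' (hB _ hgood.1 hgood.2) ?_
          unfold tl
          apply ENNReal.ofReal_le_ofReal
          apply Real.exp_le_exp.mpr
          calc u / ℓ * supNorm (y - w) ≤ u / ℓ * (τ * ℓ) := by gcongr; exact hgood.2
            _ = _ := by field_simp
        · rw [if_neg hgood, zero_mul]; exact zero_le
      calc _ ≤ cpow p N w * tl (u / ℓ) w * (Bg * ENNReal.ofReal (Real.exp (u * τ)) * ball y (τ * ℓ) w) := by gcongr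
        _ = _ := by ring
    · rw [ENNReal.tsum_mul_left]
      gcongr
      exact h.tilt_conc hs hd hK hc hu0 (by linarith) N y
  have h3 := h1.trans (conv_le_sup h2 x)
  rw [mass_cpow] at h3
  have h4 := h3.trans (mul_le_mul_left (pow_le_pow_left' (h.ng_tilt hs hs1 hd hu0 hu) j) _)
  have h5 := mul_le_mul_left h4 (ENNReal.ofReal (Real.exp (-(u / ℓ * supNorm x))))
  rw [mul_assoc, tl_pos_ne, mul_one] at h5
  refine h5.trans (le_of_eq ?_)
  rw [show u * (supNorm x / ℓ) = u / ℓ * supNorm x by ring, ENNReal.ofReal_mul (by positivity), ENNReal.ofReal_mul (by positivity)]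
  ring

lemma Nice.bad_bound {p : (Fin d → ℤ) → ℝ≥0∞} {ℓ s₀ : ℝ} (h : Nice p ℓ s₀) (hs : 0 < s₀) (hs1 : s₀ ≤ 1) (hd : 0 < d)
    {a : ℝ} (ha0 : 0 ≤ a) (ha : a ≤ a0 d s₀) (x : Fin d → ℤ) {Bx : ℝ≥0∞}
    (hB : ∀ n : ℕ, 1 ≤ n → ∀ w, supNorm x ≤ n * supNorm w → p w * tl (a / ℓ) w ≤ (n:ℝ≥0∞) ^ d * Bx) (n : ℕ) :
    cpow (ng p ℓ (tau d s₀)) (n + 1) x ≤ ENNReal.ofReal ((n + 1 : ℝ) ^ (d + 1) * (1 - pz d s₀ / 2) ^ n) * (ENNReal.ofReal (Real.exp (-(a * (supNorm x / ℓ)))) * Bx) := by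
  have hℓ := h.pos
  obtain ⟨hp0, hp1⟩ := pz_le hd hs hs1
  have haℓ : 0 ≤ a / ℓ := by positivity
  have hW := fun x y => tl_add (d := d) haℓ x y
  have h1 := cpow_weight hW (tl_zero _) (ng p ℓ (tau d s₀)) (n + 1) x
  have h2 := max_step_cpow (f := fun y => ng p ℓ (tau d s₀) y * tl (a / ℓ) y) (r := supNorm x / (n + 1)) (A := ((n + 1 : ℕ) : ℝ≥0∞) ^ d * Bx)
    (fun y hy => by
      refine (mul_le_mul_left (ng_le p ℓ _ y) _).trans (hB (n+1) (by omega) y ?_)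
      rw [div_le_iff₀ (by positivity)] at hy
      push_cast; linarith) n x (by push_cast; apply le_of_eq; field_simp)
  have h3 := h1.trans (h2.trans (mul_le_mul_right (pow_le_pow_left' (h.ng_tilt hs hs1 hd ha0 ha) n) _))
  have h5 := mul_le_mul_left h3 (ENNReal.ofReal (Real.exp (-(a / ℓ * supNorm x))))
  rw [mul_assoc, tl_pos_ne, mul_one] at h5
  refine h5.trans (le_of_eq ?_)
  rw [show a * (supNorm x / ℓ) = a / ℓ * supNorm x by ring, ENNReal.ofReal_mul (by positivity), ENNReal.ofReal_pow (by first | positivity | linarith), ENNReal.ofReal_pow (by first | positivity | linarith)]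
  rw [show (n + 1 : ℝ) = ((n + 1 : ℕ) : ℝ) by push_cast; rfl, ENNReal.ofReal_natCast]
  ring

lemma green_real {ϑ u v b K4 A τ L : ℝ} {N : ℕ} (hϑ : 0 < ϑ) (hϑ1 : ϑ ≤ 1) (hb0 : 0 < b) (hbsq : b ^ 2 = N + 1)
    (hu : u = v * Real.sqrt ϑ + v / b) (hv0 : 0 < v) (i2 : v ≤ 1 / 24) (hu0 : 0 ≤ u) (huv : u ≤ A) (hτ : 14 ≤ τ) (hK4 : 0 < K4) :
    (1 - ϑ) ^ N * (Real.exp (-(u * L)) * (Real.exp (u * τ) * (K4 * Real.exp (4 * u ^ 2 * N) / b ^ d))) ≤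
      K4 * Real.exp (A * τ + 1) * Real.exp (-(v * Real.sqrt ϑ * L)) * (1 / b ^ d * Real.exp (-(v * L / b))) := by
  have e1 : (1 - ϑ) ^ N ≤ Real.exp (-(ϑ * N)) := by
    have : 1 - ϑ ≤ Real.exp (-ϑ) := by linarith [Real.add_one_le_exp (-ϑ)]
    calc (1 - ϑ) ^ N ≤ Real.exp (-ϑ) ^ N := pow_le_pow_left₀ (by linarith) this N
      _ = _ := by rw [← Real.exp_nat_mul]; congr 1; ring
  have hN0 : (0:ℝ) ≤ N := by positivity
  have e2 : 4 * u ^ 2 * N ≤ ϑ * N + 1 := by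
    have i1 : u ^ 2 ≤ 2 * (v * Real.sqrt ϑ) ^ 2 + 2 * (v / b) ^ 2 := by
      rw [hu]; nlinarith only [sq_nonneg (v * Real.sqrt ϑ - v / b)]
    have j1 : (v * Real.sqrt ϑ) ^ 2 = v ^ 2 * ϑ := by rw [mul_pow, Real.sq_sqrt hϑ.le]
    have j2 : (v / b) ^ 2 = v ^ 2 / (N + 1) := by rw [div_pow, hbsq]
    rw [j1, j2] at i1
    have i3 : v ^ 2 ≤ 1 / 8 := by nlinarith
    have i4 : v ^ 2 / (N + 1) * N ≤ 1 / 8 := by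
      rw [div_mul_eq_mul_div, div_le_iff₀ (by positivity)]; nlinarith
    have i5 : v ^ 2 * ϑ * N ≤ 1 / 8 * (ϑ * N) := by
      rw [mul_assoc]; gcongr
    have i6 := mul_le_mul_of_nonneg_right i1 hN0
    nlinarith
  have e3 : u * τ ≤ A * τ := mul_le_mul_of_nonneg_right huv (by linarith)
  have h1ϑ : 0 ≤ 1 - ϑ := by linarith
  calc (1 - ϑ) ^ N * (Real.exp (-(u * L)) * (Real.exp (u * τ) * (K4 * Real.exp (4 * u ^ 2 * N) / b ^ d)))
      ≤ Real.exp (-(ϑ * N)) * (Real.exp (-(u * L)) * (Real.exp (A * τ) * (K4 * Real.exp (ϑ * N + 1) / b ^ d))) := by gcongr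
    _ = K4 * (Real.exp (-(ϑ * N)) * Real.exp (ϑ * N + 1) * Real.exp (A * τ)) * Real.exp (-(u * L)) * (1 / b ^ d) := by ring
    _ = K4 * Real.exp (A * τ + 1) * Real.exp (-(v * Real.sqrt ϑ * L)) * (1 / b ^ d * Real.exp (-(v * L / b))) := by
      rw [← Real.exp_add, ← Real.exp_add, show -(ϑ * N) + (ϑ * N + 1) + A * τ = A * τ + 1 by ring,
        show -(u * L) = -(v * Real.sqrt ϑ * L) + -(v * L / b) by rw [hu]; ring, Real.exp_add (-(v * Real.sqrt ϑ * L))]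
      ring

set_option maxHeartbeats 1000000 in
lemma green (hd : 3 ≤ d) {s₀ : ℝ} (hs : 0 < s₀) (hs1 : s₀ ≤ 1) : ∃ K : ℝ, 0 < K ∧
    ∀ (p : (Fin d → ℤ) → ℝ≥0∞) (ℓ : ℝ), Nice p ℓ s₀ → ∀ ϑ : ℝ, 0 < ϑ → ϑ ≤ 1 → ∀ a, a ≤ a0 d s₀ →
      a0 d s₀ / 2 * Real.sqrt ϑ ≤ a / 2 → ∀ x : Fin d → ℤ, ℓ ≤ supNorm x → ∀ Bx Bg : ℝ≥0∞,
      (∀ n : ℕ, 1 ≤ n → ∀ w, supNorm x ≤ n * supNorm w → p w * tl (a / ℓ) w ≤ (n:ℝ≥0∞) ^ d * Bx) →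
      (∀ w, ℓ / (2 * d) ≤ supNorm w → supNorm w ≤ tau d s₀ * ℓ → p w ≤ Bg) →
      ∑' k : ℕ, ENNReal.ofReal (1 - ϑ) ^ k * cpow p (k + 1) x ≤
        ENNReal.ofReal (K * Real.exp (-(a0 d s₀ / 2 * Real.sqrt ϑ * (supNorm x / ℓ)))) *
          (ENNReal.ofReal ((supNorm x / ℓ) ^ 2 / (supNorm x / ℓ) ^ d) * Bg + ENNReal.ofReal (Real.exp (-(a / 2 * (supNorm x / ℓ)))) * Bx) := by
  have hd0 : 0 < d := by omega
  obtain ⟨hp0, hp1⟩ := pz_le hd0 hs hs1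
  obtain ⟨ha0, ha1⟩ := a0_le hd0 hs hs1
  obtain ⟨Kc, hKc, hconc⟩ := Nice.conc hd0 hs hs1
  set r := 1 - pz d s₀ / 2 with hr
  have hr0 : 0 ≤ r := by linarith
  have hr1 : r < 1 := by linarith
  set v := a0 d s₀ / 2 with hv
  have hv0 : 0 < v := by positivity
  have hτ := tau_ge hd0 hs hs1
  set τ := tau d s₀
  set K4 := 4 * d * 2 ^ d * Kc
  have hd' : (1:ℝ) ≤ d := by exact_mod_cast hd0
  have hK4 : 0 < K4 := by positivity
  set K5 := K4 * Real.exp (a0 d s₀ * τ + 1)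
  have hsummable : Summable (fun n : ℕ => ((n:ℝ) + 1) ^ (d + 1) * r ^ n) := by
    have h1 := summable_pow_mul_geometric_of_norm_lt_one (R := ℝ) (d + 1) (r := r) (by rw [Real.norm_eq_abs, abs_of_nonneg hr0]; exact hr1)
    have hrp : 0 < r := by linarith
    have h2 := ((summable_nat_add_iff 1).mpr h1).mul_right r⁻¹
    refine h2.congr fun n => ?_
    push_cast
    rw [pow_succ r]; field_simp
  set K2 := ∑' n : ℕ, ((n:ℝ) + 1) ^ (d + 1) * r ^ n
  have hK2 : 0 ≤ K2 := tsum_nonneg fun n => by positivity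
  set K3 := 1 / (1 - r) * (K5 * (6 * (1 + d.factorial / v ^ d)))
  have hK3 : 0 < K3 := by have : 0 < 1 - r := by linarith
                          positivity
  refine ⟨K3 + K2, by positivity, fun p ℓ h ϑ hϑ hϑ1 a ha hva x hx Bx Bg hP1 hP2 => ?_⟩
  have hℓ := h.pos
  set L := supNorm x / ℓ
  have hL : 1 ≤ L := by rw [le_div_iff₀ hℓ]; linarith
  have hsϑ : 0 ≤ Real.sqrt ϑ := Real.sqrt_nonneg _
  have hsϑ1 : Real.sqrt ϑ ≤ 1 := Real.sqrt_le_one.mpr hϑ1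
  have ha0' : 0 ≤ a := by nlinarith [mul_nonneg hv0.le hsϑ]
  set q := ENNReal.ofReal (1 - ϑ) with hq
  have hq1 : q ≤ 1 := by rw [hq, ← ENNReal.ofReal_one]; exact ENNReal.ofReal_le_ofReal (by linarith)
  -- decomposition
  have hdec : ∀ k : ℕ, q ^ k * cpow p (k + 1) x ≤
      ∑ j ∈ Finset.range (k + 1), q ^ (k - j) * conv (cpow (ng p ℓ τ) j) (conv (gd p ℓ τ) (cpow p (k - j))) x + cpow (ng p ℓ τ) (k + 1) x := by
    intro k
    have e := cpow_decomp (ng p ℓ τ) (gd p ℓ τ) k x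
    rw [gd_add_ng] at e
    rw [e, mul_add, Finset.mul_sum]
    refine add_le_add (Finset.sum_le_sum fun j hj => ?_) (mul_le_of_le_one_left zero_le (pow_le_one₀ zero_le hq1))
    gcongr ?_ * _
    exact pow_le_pow_of_le_one zero_le hq1 (by omega)
  refine (ENNReal.tsum_le_tsum hdec).trans ?_
  rw [ENNReal.tsum_add, tsum_antidiag (fun j N => q ^ N * conv (cpow (ng p ℓ τ) j) (conv (gd p ℓ τ) (cpow p N)) x)]
  set E := Real.exp (-(v * Real.sqrt ϑ * L)) with hE
  -- good part
  have hgood : ∑' j : ℕ, ∑' N : ℕ, q ^ N * conv (cpow (ng p ℓ τ) j) (conv (gd p ℓ τ) (cpow p N)) x ≤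
      ENNReal.ofReal (K3 * E) * (ENNReal.ofReal (L ^ 2 / L ^ d) * Bg) := by
    have ht : ∀ j N : ℕ, q ^ N * conv (cpow (ng p ℓ τ) j) (conv (gd p ℓ τ) (cpow p N)) x ≤
        ENNReal.ofReal (r ^ j) * (Bg * ENNReal.ofReal (K5 * E) * ENNReal.ofReal (1 / Real.sqrt (N + 1) ^ d * Real.exp (-(v * L / Real.sqrt (N + 1))))) := by
      intro j N
      have hb1 : 1 ≤ Real.sqrt (N + 1) := Real.one_le_sqrt.mpr (by have : (0:ℝ) ≤ N := by positivity
                                                                   linarith)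
      have hbsq : Real.sqrt (N + 1) ^ 2 = N + 1 := Real.sq_sqrt (by positivity)
      set b := Real.sqrt (N + 1)
      have hb0 : 0 < b := by linarith
      set u := v * Real.sqrt ϑ + v / b with hu
      have hu0 : 0 ≤ u := by positivity
      have huv : u ≤ a0 d s₀ := by
        have h1 : v * Real.sqrt ϑ ≤ v * 1 := by gcongr
        have h2 : v / b ≤ v := div_le_self hv0.le hb1
        linarith
      have hterm := h.term_bound hs hs1 hd0 hKc (hconc p ℓ h) hP2 hu0 huv j N x
      refine (mul_le_mul_right hterm _).trans ?_
      rw [← ENNReal.ofReal_pow hr0, hq, ← ENNReal.ofReal_pow (by linarith)]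
      calc _ = ENNReal.ofReal (r ^ j) * (Bg * (ENNReal.ofReal ((1 - ϑ) ^ N) * ENNReal.ofReal (Real.exp (-(u * L)) * (Real.exp (u * τ) * (K4 * Real.exp (4 * u ^ 2 * N) / b ^ d))))) := by ring
        _ ≤ _ := by
          rw [mul_assoc Bg, ← ENNReal.ofReal_mul (pow_nonneg (by linarith) _), ← ENNReal.ofReal_mul (by positivity)]
          refine mul_le_mul_right (mul_le_mul_right (ENNReal.ofReal_le_ofReal ?_) _) _
          exact green_real hϑ hϑ1 hb0 hbsq hu hv0 (by linarith) hu0 huv hτ hK4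
    refine (ENNReal.tsum_le_tsum fun j => ENNReal.tsum_le_tsum fun N => ht j N).trans ?_
    simp_rw [ENNReal.tsum_mul_left]
    rw [ENNReal.tsum_mul_right, ← ENNReal.ofReal_tsum_of_nonneg (fun j => by positivity) (summable_geometric_of_lt_one hr0 hr1),
      tsum_geometric_of_lt_one hr0 hr1]
    refine (mul_le_mul_right (mul_le_mul_right (sqrt_exp_sum hd hv0 hL) _) _).trans ?_
    have hr' : 0 < 1 - r := by linarith
    calc _ = ENNReal.ofReal (1 - r)⁻¹ * ENNReal.ofReal (K5 * E) * ENNReal.ofReal (6 * (1 + d.factorial / v ^ d) * (L ^ 2 / L ^ d)) * Bg := by ring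
      _ = ENNReal.ofReal (K3 * E) * ENNReal.ofReal (L ^ 2 / L ^ d) * Bg := by
        rw [← ENNReal.ofReal_mul (by positivity), ← ENNReal.ofReal_mul (by positivity), ← ENNReal.ofReal_mul (by positivity)]
        congr 2
        simp only [K3]; ring
      _ ≤ _ := by rw [mul_assoc]
  have hbad : ∑' k : ℕ, cpow (ng p ℓ τ) (k + 1) x ≤ ENNReal.ofReal (K2 * E) * (ENNReal.ofReal (Real.exp (-(a / 2 * L))) * Bx) := by
    refine (ENNReal.tsum_le_tsum fun k => h.bad_bound hs hs1 hd0 ha0' ha x hP1 k).trans ?_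
    rw [ENNReal.tsum_mul_right, ← ENNReal.ofReal_tsum_of_nonneg (fun j => by positivity) hsummable, ← mul_assoc, ← mul_assoc]
    rw [← ENNReal.ofReal_mul hK2, ← ENNReal.ofReal_mul (by positivity)]
    refine mul_le_mul_left (ENNReal.ofReal_le_ofReal ?_) _
    change K2 * Real.exp (-(a * L)) ≤ _
    rw [mul_assoc, hE, ← Real.exp_add]
    gcongr
    nlinarith [mul_le_mul_of_nonneg_right hva (by linarith : 0 ≤ L)]
  refine (add_le_add hgood hbad).trans ?_
  rw [mul_add]
  gcongr
  · linarith
  · linarith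

end Blackbox
end

section
namespace Blackbox

variable {d : ℕ} {c₀ : ℝ}

def pf (M : Model d c₀) (s : ℝ) (x : Fin d → ℤ) : ℝ≥0∞ := ENNReal.ofReal (X M s)⁻¹ * M.F s x

lemma F_eq_pf {M : Model d c₀} {s : ℝ} (h : Sub M s) : M.F s = fun x => ENNReal.ofReal (X M s) * pf M s x := by
  have hX := X_pos h
  funext x
  unfold pf
  rw [← mul_assoc, ← ENNReal.ofReal_mul hX.le, mul_inv_cancel₀ hX.ne', ENNReal.ofReal_one, one_mul]

lemma nice_pf {M : Model d c₀} (hc : 0 < c₀) {s s₀ : ℝ} (h : Sub M s) (hE : EM M s₀ s) : Nice (pf M s) (M.xi s) s₀ := by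
  have hX := X_pos h
  refine ⟨xi_pos hc h, ?_, ?_, ?_, ?_⟩
  · change mass (fun x => ENNReal.ofReal (X M s)⁻¹ * M.F s x) = 1
    rw [mass_smul, mass_F, chi_eq h, ← ENNReal.ofReal_mul (by positivity), inv_mul_cancel₀ hX.ne', ENNReal.ofReal_one]
  · intro π e x
    unfold pf
    rw [F_symm M s π e x]
  · simp only [pf, mul_assoc]
    rw [ENNReal.tsum_mul_left]
    change _ * Ss M s = _
    rw [Ss_eq' h, ← ENNReal.ofReal_mul (by positivity), xi_sq h]
    congr 1; field_simp
  · intro i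
    simp only [pf, mul_assoc]
    rw [ENNReal.tsum_mul_left]
    refine (mul_le_mul_right (hE i) _).trans ?_
    rw [← ENNReal.ofReal_mul (by positivity)]
    apply le_of_eq
    congr 1; field_simp

lemma series_pf {M : Model d c₀} {s t ϑ : ℝ} (h : Sub M t) (h0 : 0 ≤ s) (hs : s ≤ t) (hϑ : 0 < ϑ)
    (hl : (t - s) * X M s = 1 - ϑ) (x : Fin d → ℤ) :
    M.F t x ≤ ENNReal.ofReal (X M s) * ∑' k, ENNReal.ofReal (1 - ϑ) ^ k * cpow (pf M s) (k + 1) x := by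
  have hs' := h.mono h0 hs
  have hX := X_pos hs'
  have hq : ENNReal.ofReal (t - s) * ENNReal.ofReal (X M s) = ENNReal.ofReal (1 - ϑ) := by
    rw [← ENNReal.ofReal_mul (by linarith), hl]
  have hl' : ENNReal.ofReal (t - s) * M.chi s < 1 := by
    rw [chi_eq hs', hq, ← ENNReal.ofReal_one]
    exact (ENNReal.ofReal_lt_ofReal_iff one_pos).mpr (by linarith)
  refine (F_series h h0 hs hl' x).trans ?_
  rw [← ENNReal.tsum_mul_left]
  refine ENNReal.tsum_le_tsum fun k => ?_
  conv_lhs => rw [F_eq_pf hs', cpow_smul]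
  rw [← hq, mul_pow, pow_succ (ENNReal.ofReal (X M s))]
  apply le_of_eq; ring

lemma xi_ratio {M : Model d c₀} (hc : 0 < c₀) {δ s t θ : ℝ} (hδ : 0 < δ) (hδ' : δ ≤ 1/2) (he : Err M δ t) (h0 : 0 ≤ s) (hst : s ≤ t)
    (hθ : 0 < θ) (hδθ : 2 * δ ≤ θ) (hl : (t - s) * X M s = 1 - θ) : M.xi s ≤ 2 * Real.sqrt θ * M.xi t := by
  have h := (step_lower hc hδ hδ' he h0 hst hθ hl).2.2
  have hx := xi_nonneg M t
  refine abs_le_of_sq_le_sq' ?_ (by positivity) |>.2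
  rw [mul_pow, mul_pow, Real.sq_sqrt hθ.le]
  have h1 : (θ + 2 * δ) ^ 2 ≤ (2 * θ) ^ 2 := pow_le_pow_left₀ (by positivity) (by linarith) 2
  have h2 := mul_le_mul_of_nonneg_left h1 (sq_nonneg (M.xi t))
  have h3 : M.xi s ^ 2 * θ ≤ (2 ^ 2 * θ * M.xi t ^ 2) * θ := by linarith
  exact le_of_mul_le_mul_right h3 hθ

lemma sigma_le_R (M : Model d c₀) (hd : 1 ≤ d) : M.sigma ≤ d * M.K.R := by
  have hR := M.K.R_ge_one
  have hd' : (1:ℝ) ≤ d := by exact_mod_cast hd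
  refine abs_le_of_sq_le_sq' ?_ (by positivity) |>.2
  have h1 : ENNReal.ofReal (M.sigma ^ 2) ≤ ENNReal.ofReal ((d * M.K.R) ^ 2) := by
    rw [← sq_J]
    calc ∑' x, Jf M x * sq x ≤ ∑' x, Jf M x * ENNReal.ofReal ((d * M.K.R) ^ 2) := by
          refine ENNReal.tsum_le_tsum fun x => ?_
          rcases (M.K.nonneg x).eq_or_lt with h | h
          · simp [Jf, ← h]
          · refine mul_le_mul_right (ENNReal.ofReal_le_ofReal ?_) _
            have h2 := M.K.range_le x h
            have h3 := sqNorm_le x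
            have h4 : supNorm x ^ 2 ≤ M.K.R ^ 2 := pow_le_pow_left₀ (supNorm_nonneg x) h2 2
            calc _ ≤ d * supNorm x ^ 2 := h3
              _ ≤ d * M.K.R ^ 2 := by gcongr
              _ ≤ (d * d) * M.K.R ^ 2 := by gcongr; nlinarith
              _ = _ := by ring
      _ = _ := by
        rw [ENNReal.tsum_mul_right]
        change mass (Jf M) * _ = _
        rw [mass_J, one_mul]
  exact (ENNReal.ofReal_le_ofReal_iff (by positivity)).mp h1

lemma bottom (hc : 0 < c₀) (hd : 3 ≤ d) {s₀ : ℝ} (hs : 0 < s₀) (hs1 : s₀ ≤ 1) : ∃ K : ℝ, 0 < K ∧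
    ∀ M : Model d c₀, EM M s₀ 0 → ∀ t, Sub M t → ∀ ϑ, 0 < ϑ → ϑ ≤ 1 → t = 1 - ϑ → ∀ x : Fin d → ℤ, M.sigma ≤ supNorm x →
      M.F t x ≤ ENNReal.ofReal (K / M.sigma ^ d * ((supNorm x / M.sigma) ^ 2 / (supNorm x / M.sigma) ^ d) *
        Real.exp (-(a0 d s₀ / 2 * Real.sqrt ϑ * (supNorm x / M.sigma)))) := by
  have hd0 : 0 < d := by omega
  obtain ⟨K, hK, hg⟩ := green hd hs hs1
  obtain ⟨ha0, ha1⟩ := a0_le hd0 hs hs1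
  set A := a0 d s₀ with hA
  refine ⟨K * (c₀⁻¹ * d ^ d) * (1 + Real.exp (A / c₀) / c₀ ^ d), by positivity, fun M hE t ht ϑ hϑ hϑ1 htϑ x hx => ?_⟩
  have hσ := sigma_pos M hc
  have hR := M.K.R_ge_one
  have hR0 : 0 < M.K.R := by linarith
  have hRσ := R_le_sigma M
  have hN := nice_pf hc (sub_zero' M) hE
  have hF := series_pf ht le_rfl ht.1 hϑ (by rw [X_zero, htϑ]; ring) x
  rw [X_zero, ENNReal.ofReal_one, one_mul] at hF
  have hp : ∀ w, pf M 0 w = ENNReal.ofReal (M.K.J w) := fun w => by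
    unfold pf; rw [X_zero, F_zero]; simp [Jf]
  rw [xi_zero M hc] at hN
  set L := supNorm x / M.sigma with hL
  have hL1 : 1 ≤ L := by rw [hL, le_div_iff₀ hσ]; linarith
  have hL0 : 0 < L := by linarith
  have hsϑ : Real.sqrt ϑ ≤ 1 := Real.sqrt_le_one.mpr hϑ1
  have hJ : ∀ w, M.K.J w ≤ c₀⁻¹ * d ^ d / M.sigma ^ d := fun w => by
    refine (M.K.J_upper w).trans ?_
    rw [div_le_div_iff₀ (by positivity) (by positivity), mul_assoc]
    gcongr
    rw [← mul_pow]
    exact pow_le_pow_left₀ hσ.le (sigma_le_R M hd0) d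
  set B := c₀⁻¹ * d ^ d / M.sigma ^ d with hB
  have hB0 : 0 ≤ B := by positivity
  have := hg (pf M 0) M.sigma hN ϑ hϑ hϑ1 A le_rfl (by nlinarith) x hx
    (ENNReal.ofReal (B * (Real.exp (A / c₀) / c₀ ^ d) / L ^ d)) (ENNReal.ofReal B) ?_ ?_
  · refine hF.trans (this.trans ?_)
    rw [← hL]
    simp (disch := positivity) only [← ENNReal.ofReal_mul, ← ENNReal.ofReal_add]
    apply ENNReal.ofReal_le_ofReal
    have e1 : Real.exp (-(A / 2 * L)) ≤ 1 := Real.exp_le_one_iff.mpr (neg_nonpos.mpr (by positivity))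
    set E := Real.exp (-(A / 2 * Real.sqrt ϑ * L))
    have hE0 : 0 < E := Real.exp_pos _
    set D := Real.exp (A / c₀) / c₀ ^ d
    have hD : 0 ≤ D := by positivity
    calc K * E * (L ^ 2 / L ^ d * B + Real.exp (-(A / 2 * L)) * (B * D / L ^ d))
        ≤ K * E * (L ^ 2 / L ^ d * B + 1 * (B * D * L ^ 2 / L ^ d)) := by
          have h1 : 1 ≤ L ^ 2 := one_le_pow₀ hL1
          have h0 : 0 ≤ B * D := by positivity
          have h2 : B * D / L ^ d ≤ B * D * L ^ 2 / L ^ d :=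
            div_le_div_of_nonneg_right (le_mul_of_one_le_right h0 h1) (by positivity)
          exact mul_le_mul_of_nonneg_left (add_le_add le_rfl (mul_le_mul e1 h2 (by positivity) zero_le_one)) (by positivity)
      _ = _ := by rw [hB]; field_simp
  · intro n hn w hw
    rw [hp]
    rcases (M.K.nonneg w).eq_or_lt with h | h
    · rw [← h]; simp
    have hwR := M.K.range_le w h
    have hw2 : c₀ * supNorm w ≤ M.sigma := by nlinarith
    unfold tl
    have hn1 : (1:ℝ) ≤ n := by exact_mod_cast hn
    rw [← ENNReal.ofReal_natCast, ← ENNReal.ofReal_pow (by positivity), ← ENNReal.ofReal_mul h.le, ← ENNReal.ofReal_mul (by positivity)]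
    apply ENNReal.ofReal_le_ofReal
    have e1 : A / M.sigma * supNorm w ≤ A / c₀ := by
      rw [div_mul_eq_mul_div, div_le_div_iff₀ hσ hc]; nlinarith
    have e2 : c₀ * L ≤ n := by
      rw [hL, mul_div_assoc', div_le_iff₀ hσ]
      nlinarith
    have e3 : (c₀ * L) ^ d ≤ n ^ d := pow_le_pow_left₀ (by positivity) e2 d
    calc M.K.J w * Real.exp (A / M.sigma * supNorm w) ≤ B * Real.exp (A / c₀) := by gcongr; exact hJ w
      _ = (c₀ * L) ^ d * (B * (Real.exp (A / c₀) / c₀ ^ d) / L ^ d) := by rw [mul_pow]; field_simp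
      _ ≤ _ := by gcongr
  · intro w _ _
    rw [hp]; exact ENNReal.ofReal_le_ofReal (hJ w)

end Blackbox
end

section
namespace Blackbox

variable {d : ℕ} {c₀ : ℝ}

lemma weak_decay (q : ℝ) (hq : q ≤ d) {a : ℝ} (ha : 0 < a) : ∃ K : ℝ, 0 < K ∧
    ∀ σ ξ R r ν : ℝ, 0 < σ → σ ≤ ξ → ξ ≤ R → 1 ≤ ν → R ≤ ν * r →
      (σ / max σ r) ^ q * Real.exp (-(a * (r / ξ))) ≤ K * ν ^ d * (σ / R) ^ q := by
  obtain ⟨m, hm⟩ := exists_nat_ge (-q)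
  refine ⟨1 + m.factorial / a ^ m * Real.exp a, by positivity, fun σ ξ R r ν hσ hσξ hξR hν hr => ?_⟩
  have hξ : 0 < ξ := by linarith
  have hR : 0 < R := by linarith
  have hr0 : 0 < r := by
    by_contra h
    push Not at h
    nlinarith
  set r' := max σ r with hr'
  have hr'0 : 0 < r' := lt_max_of_lt_left hσ
  have e0 : (σ / r') ^ q = (R / r') ^ q * (σ / R) ^ q := by
    rw [← Real.mul_rpow (by positivity) (by positivity)]; congr 1; field_simp
  have hexp : Real.exp (-(a * (r / ξ))) ≤ 1 := Real.exp_le_one_iff.mpr (neg_nonpos.mpr (by positivity))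
  have hνd : 1 ≤ ν ^ d := one_le_pow₀ hν
  have key : (R / r') ^ q * Real.exp (-(a * (r / ξ))) ≤ (1 + m.factorial / a ^ m * Real.exp a) * ν ^ d := by
    have hF0 : 0 ≤ m.factorial / a ^ m * Real.exp a := by positivity
    rcases le_or_gt 0 q with h | h
    · have h1 : R / r' ≤ ν := by
        rw [div_le_iff₀ hr'0]
        exact hr.trans (mul_le_mul_of_nonneg_left (le_max_right _ _) (by linarith))
      have h2 : (R / r') ^ q ≤ ν ^ d := by
        calc (R / r') ^ q ≤ ν ^ q := Real.rpow_le_rpow (by positivity) h1 h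
          _ ≤ ν ^ (d:ℝ) := Real.rpow_le_rpow_of_exponent_le hν hq
          _ = ν ^ d := Real.rpow_natCast ν d
      calc _ ≤ ν ^ d * 1 := mul_le_mul h2 hexp (Real.exp_pos _).le (by positivity)
        _ ≤ _ := by nlinarith
    · set y := r / ξ with hy
      have hy0 : 0 ≤ y := by positivity
      have h1 : r' / R ≤ 1 + y := by
        rw [div_le_iff₀ hR]
        refine max_le (by nlinarith) ?_
        have : r = y * ξ := by rw [hy]; field_simp
        nlinarith
      have h2 : (R / r') ^ q ≤ (1 + y) ^ m := by
        calc (R / r') ^ q = (r' / R) ^ (-q) := by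
              rw [Real.rpow_neg (by positivity), ← Real.inv_rpow (by positivity), inv_div]
          _ ≤ (1 + y) ^ (-q) := Real.rpow_le_rpow (by positivity) h1 (by linarith)
          _ ≤ (1 + y) ^ (m:ℝ) := Real.rpow_le_rpow_of_exponent_le (by linarith) hm
          _ = _ := Real.rpow_natCast _ _
      have h3 := Real.pow_div_factorial_le_exp (a * (1 + y)) (by positivity) m
      have h4 : (1 + y) ^ m ≤ m.factorial / a ^ m * Real.exp a * Real.exp (a * y) := by
        rw [mul_assoc, ← Real.exp_add, show a + a * y = a * (1 + y) by ring]
        rw [mul_pow, div_le_iff₀ (by positivity)] at h3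
        rw [div_mul_eq_mul_div, le_div_iff₀ (by positivity)]
        linarith
      have h5 : Real.exp (a * y) * Real.exp (-(a * y)) = 1 := by rw [← Real.exp_add]; simp
      calc (R / r') ^ q * Real.exp (-(a * y)) ≤ (m.factorial / a ^ m * Real.exp a * Real.exp (a * y)) * Real.exp (-(a * y)) := by
            refine mul_le_mul_of_nonneg_right (h2.trans h4) (Real.exp_pos _).le
        _ = m.factorial / a ^ m * Real.exp a := by rw [mul_assoc, h5, mul_one]
        _ ≤ _ := by nlinarith
  rw [e0]
  calc _ = ((R / r') ^ q * Real.exp (-(a * (r / ξ)))) * (σ / R) ^ q := by ring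
    _ ≤ _ := mul_le_mul_of_nonneg_right key (by positivity)

lemma level (hc : 0 < c₀) (hd : 3 ≤ d) {s₀ : ℝ} (hs : 0 < s₀) (hs1 : s₀ ≤ 1) {ε : ℝ} (hε : 0 < ε) : ∃ K : ℝ, 0 < K ∧
    ∀ M : Model d c₀, ∀ s t θ C : ℝ, EM M s₀ s → Sub M t → 0 ≤ s → s ≤ t → 0 < θ → Real.sqrt θ ≤ 1/16 →
      (t - s) * X M s = 1 - θ → 0 < C →
      (∀ w, M.F s w ≤ ENNReal.ofReal (Real.exp 2 * (C / M.sigma ^ d * (M.sigma / max M.sigma (supNorm w)) ^ ((d:ℝ) - 2 - ε) *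
        Real.exp (-(a0 d s₀ / 8 * (supNorm w / M.xi s)))))) →
      ∀ x, M.xi s ≤ supNorm x →
      M.F t x ≤ ENNReal.ofReal (K * ((supNorm x / M.xi s) ^ (-ε) + Real.exp (-(a0 d s₀ / 32 * (supNorm x / M.xi s)))) *
        (C / M.sigma ^ d * (M.sigma / max M.sigma (supNorm x)) ^ ((d:ℝ) - 2 - ε) *
        Real.exp (-(a0 d s₀ / 2 * Real.sqrt θ * (supNorm x / M.xi s))))) := by
  have hd0 : 0 < d := by omega
  obtain ⟨K, hK, hg⟩ := green hd hs hs1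
  obtain ⟨ha0, ha1⟩ := a0_le hd0 hs hs1
  set A := a0 d s₀ with hA
  set q := (d:ℝ) - 2 - ε with hq
  obtain ⟨Kw, hKw, hw⟩ := weak_decay (d := d) q (by linarith) (a := A / 16) (by positivity)
  refine ⟨K * Kw * Real.exp 2 * (2 * d) ^ d, by positivity, fun M s t θ C hE ht h0 hst hθ hsθ hl hC hF x hx => ?_⟩
  have hd1 : (1:ℝ) ≤ d := by exact_mod_cast hd0
  have hsub := ht.mono h0 hst
  have hX := X_pos hsub
  have hσ := sigma_pos M hc
  have hξ := xi_pos hc hsub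
  have hσξ := sigma_le_xi hc hsub
  have hN := nice_pf hc hsub hE
  have hser := series_pf ht h0 hst hθ hl x
  have hθ1 : θ ≤ 1 := by
    have := Real.sq_sqrt hθ.le
    nlinarith [Real.sqrt_nonneg θ]
  have hx0 : 0 < supNorm x := by linarith
  set χ := X M s with hχ
  set ξ := M.xi s with hξd
  set σ := M.sigma with hσd
  set B := Real.exp 2 * (C / σ ^ d) with hB
  have hB0 : 0 < B := by positivity
  have hdec : ∀ w R ν, ξ ≤ R → 1 ≤ ν → R ≤ ν * supNorm w →
      pf M s w * tl (A / 16 / ξ) w ≤ ENNReal.ofReal (ν ^ d * (χ⁻¹ * B * (Kw * (σ / R) ^ q))) := by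
    intro w R ν hR hν hRw
    unfold pf tl
    refine (mul_le_mul_left (mul_le_mul_right (hF w) _) _).trans ?_
    have hmx : 0 < max σ (supNorm w) := lt_max_of_lt_left hσ
    simp (disch := positivity) only [← ENNReal.ofReal_mul]
    apply ENNReal.ofReal_le_ofReal
    have h1 := hw σ ξ R (supNorm w) ν hσ hσξ hR hν hRw
    have h2 : Real.exp (-(A / 8 * (supNorm w / ξ))) * Real.exp (A / 16 / ξ * supNorm w) = Real.exp (-(A / 16 * (supNorm w / ξ))) := by
      rw [← Real.exp_add]; congr 1; ring
    calc _ = χ⁻¹ * B * ((σ / max σ (supNorm w)) ^ q * (Real.exp (-(A / 8 * (supNorm w / ξ))) * Real.exp (A / 16 / ξ * supNorm w))) := by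
            rw [hB]; ring
      _ ≤ χ⁻¹ * B * (Kw * ν ^ d * (σ / R) ^ q) := by rw [h2]; exact mul_le_mul_of_nonneg_left h1 (by positivity)
      _ = _ := by ring
  set L := supNorm x / ξ with hL
  have hL1 : 1 ≤ L := by rw [hL, le_div_iff₀ hξ]; linarith
  have hL0 : 0 < L := by linarith
  have := hg (pf M s) ξ hN θ hθ hθ1 (A / 16) (by linarith) (by nlinarith) x hx
    (ENNReal.ofReal (χ⁻¹ * B * (Kw * (σ / supNorm x) ^ q))) (ENNReal.ofReal ((2 * d) ^ d * (χ⁻¹ * B * (Kw * (σ / ξ) ^ q)))) ?_ ?_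
  · refine hser.trans ((mul_le_mul_right this _).trans ?_)
    rw [← hL]
    simp (disch := positivity) only [← ENNReal.ofReal_mul, ← ENNReal.ofReal_add]
    apply ENNReal.ofReal_le_ofReal
    rw [max_eq_right (hσξ.trans hx)]
    have e1 : (σ / ξ) ^ q = L ^ q * (σ / supNorm x) ^ q := by
      rw [← Real.mul_rpow (by positivity) (by positivity)]; congr 1; rw [hL]; field_simp
    have e2 : L ^ 2 / L ^ d * L ^ q = L ^ (-ε) := by
      rw [← Real.rpow_natCast L 2, ← Real.rpow_natCast L d, ← Real.rpow_sub hL0, ← Real.rpow_add hL0]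
      congr 1; rw [hq]; push_cast; ring
    have e3 : Real.exp (-(A / 16 / 2 * L)) = Real.exp (-(A / 32 * L)) := by congr 1; ring
    rw [e1, e3]
    set Y := (σ / supNorm x) ^ q
    have hY : 0 ≤ Y := by positivity
    set E := Real.exp (-(A / 2 * Real.sqrt θ * L))
    set E' := Real.exp (-(A / 32 * L))
    have h2d : (1:ℝ) ≤ (2 * d) ^ d := one_le_pow₀ (by linarith)
    have hχ' : χ * χ⁻¹ = 1 := mul_inv_cancel₀ hX.ne'
    calc χ * (K * E * (L ^ 2 / L ^ d * ((2 * d) ^ d * (χ⁻¹ * B * (Kw * (L ^ q * Y)))) + E' * (χ⁻¹ * B * (Kw * Y))))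
        = (χ * χ⁻¹) * (K * Kw * B * E * Y) * ((2 * d) ^ d * (L ^ 2 / L ^ d * L ^ q) + 1 * E') := by ring
      _ ≤ (χ * χ⁻¹) * (K * Kw * B * E * Y) * ((2 * d) ^ d * (L ^ 2 / L ^ d * L ^ q) + (2 * d) ^ d * E') := by gcongr
      _ = _ := by rw [hχ', e2, hB]; ring
  · intro n hn w hw'
    have hn1 : (1:ℝ) ≤ n := by exact_mod_cast hn
    have := hdec w (supNorm x) n hx hn1 hw'
    rwa [ENNReal.ofReal_mul (by positivity), ENNReal.ofReal_pow (by positivity), ENNReal.ofReal_natCast] at this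
  · intro w hw1 _
    have := hdec w ξ (2 * d) le_rfl (by linarith) (by rwa [div_le_iff₀' (by positivity)] at hw1)
    refine le_trans ?_ this
    refine le_mul_of_one_le_right' ?_
    unfold tl
    rw [← ENNReal.ofReal_one]
    refine ENNReal.ofReal_le_ofReal (Real.one_le_exp ?_)
    have := supNorm_nonneg w
    positivity

end Blackbox
end

section
namespace Blackbox

lemma small_L {K a ε : ℝ} (ha : 0 < a) (hε : 0 < ε) : ∃ L₀ : ℝ, 1 ≤ L₀ ∧ ∀ L, L₀ ≤ L →
    K * (L ^ (-ε) + Real.exp (-(a * L))) ≤ 1 / 8 := by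
  have h1 : Filter.Tendsto (fun L : ℝ => L ^ (-ε)) Filter.atTop (nhds 0) := tendsto_rpow_neg_atTop hε
  have h2 : Filter.Tendsto (fun L : ℝ => Real.exp (-(a * L))) Filter.atTop (nhds 0) :=
    Real.tendsto_exp_neg_atTop_nhds_zero.comp (Filter.tendsto_id.const_mul_atTop ha)
  have h3 := (h1.add h2).const_mul K
  rw [add_zero, mul_zero] at h3
  have h4 := h3.eventually (ge_mem_nhds (by norm_num : (0:ℝ) < 1 / 8))
  obtain ⟨L₁, hL₁⟩ := Filter.eventually_atTop.mp h4
  exact ⟨max 1 L₁, le_max_left _ _, fun L hL => hL₁ L ((le_max_right _ _).trans hL)⟩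

lemma exp_cmp {A r ℓ ξ n : ℝ} (hA : 0 < A) (hℓ : 0 < ℓ) (hξ : 0 < ξ) (hr0 : 0 ≤ r) (hn : 0 ≤ n) (hr : ℓ ≤ 2 * r * ξ) :
    Real.exp (-(A / 2 * r * (n / ℓ))) ≤ Real.exp (-(A / 8 * (n / ξ))) := by
  refine Real.exp_le_exp.mpr (neg_le_neg ?_)
  have hL : 0 ≤ n / ℓ := by positivity
  have h1 : n / ξ ≤ 2 * r * (n / ℓ) := by
    rw [div_le_iff₀ hξ]
    calc n = n / ℓ * ℓ := by field_simp
      _ ≤ n / ℓ * (2 * r * ξ) := mul_le_mul_of_nonneg_left hr hL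
      _ = _ := by ring
  have h2 : A / 8 * (n / ξ) ≤ A / 8 * (2 * r * (n / ℓ)) := mul_le_mul_of_nonneg_left h1 (by positivity)
  have h3 : 0 ≤ A * r * (n / ℓ) := by positivity
  linarith

set_option maxHeartbeats 1000000 in
theorem main (d : ℕ) (hd : 2 < d) (c₀ : ℝ) (hc₀ : c₀ ∈ Set.Ioc (0:ℝ) 1) :
    ∃ cstar > (0:ℝ), ∃ Cstar > (0:ℝ), ∀ ε > (0:ℝ), ∀ η > (0:ℝ),
      ∃ δ₂ : ℝ, δ₂ ∈ Set.Ioc (0:ℝ) (1/2) ∧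
        ∀ c : ℝ, 0 < c → c ≤ cstar → ∀ C : ℝ, Cstar ≤ C →
          ∀ M : Model d c₀, ∀ β : ℝ, 0 ≤ β → β < M.betaOf δ₂ →
            (∀ β' : ℝ, 0 ≤ β' → β' ≤ β → ∀ x : Fin d → ℤ,
              M.F β' x ≤ ENNReal.ofReal (C / M.sigma ^ d *
                (M.sigma / max M.sigma (supNorm x)) ^ ((d:ℝ) - 2 - ε) *
                Real.exp (-c * supNorm x / M.xi β'))) →
            ∀ x : Fin d → ℤ, max (η * M.xi β) (2 * M.sigma) ≤ supNorm x →
              M.F β x ≤ ENNReal.ofReal (1/8 * (C / M.sigma ^ d *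
                (M.sigma / max M.sigma (supNorm x)) ^ ((d:ℝ) - 2 - ε) *
                Real.exp (-c * supNorm x / M.xi β))) := by
  obtain ⟨hc, hc1⟩ := hc₀
  have hd3 : 3 ≤ d := hd
  have hd0 : 0 < d := by omega
  obtain ⟨s₀, hs₀⟩ : ∃ s₀, s₀ = c₀ / 10 := ⟨_, rfl⟩
  have hs : 0 < s₀ := by rw [hs₀]; positivity
  have hs1 : s₀ ≤ 1 := by linarith
  have hs2 : s₀ ^ 2 ≤ 1 / 10 := by nlinarith
  obtain ⟨ha0, ha1⟩ := a0_le hd0 hs hs1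
  set A := a0 d s₀ with hA
  obtain ⟨K3, hK3, hbot⟩ := bottom hc hd3 hs hs1
  refine ⟨A / 8, by positivity, 8 * K3, by positivity, fun ε hε η' hη' => ?_⟩
  obtain ⟨η, hηd⟩ : ∃ η, η = min η' 1 := ⟨_, rfl⟩
  have hη : 0 < η := by rw [hηd]; exact lt_min hη' one_pos
  have hη1 : η ≤ 1 := by rw [hηd]; exact min_le_right _ _
  have hηη : η ≤ η' := by rw [hηd]; exact min_le_left _ _
  obtain ⟨K, hK, hlev⟩ := level hc hd3 hs hs1 hε
  obtain ⟨L₀, hL₀, hsm⟩ := small_L (K := K) (a := A / 32) (by positivity) hε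
  obtain ⟨ρ, hρd⟩ : ∃ ρ, ρ = min (1 / 16) (η / (2 * L₀)) := ⟨_, rfl⟩
  have hρ : 0 < ρ := by rw [hρd]; exact lt_min (by norm_num) (by positivity)
  have hρ1 : ρ ≤ 1 / 16 := by rw [hρd]; exact min_le_left _ _
  have hρ2 : 2 * ρ * L₀ ≤ η := by
    have : ρ ≤ η / (2 * L₀) := by rw [hρd]; exact min_le_right _ _
    rw [le_div_iff₀ (by positivity)] at this
    linarith
  have hθ1 : ρ ^ 2 ≤ 1 / 256 := by nlinarith
  have hsq : Real.sqrt (ρ ^ 2) = ρ := Real.sqrt_sq hρ.le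
  obtain ⟨δ, hδd⟩ : ∃ δ, δ = min (ρ ^ 2 / 2) (s₀ ^ 2 / 100) := ⟨_, rfl⟩
  have hδ : 0 < δ := by rw [hδd]; exact lt_min (by positivity) (by positivity)
  have hδ1 : δ ≤ ρ ^ 2 / 2 := by rw [hδd]; exact min_le_left _ _
  have hδ2 : δ ≤ s₀ ^ 2 / 100 := by rw [hδd]; exact min_le_right _ _
  have hδh : δ ≤ 1 / 2 := by linarith
  refine ⟨δ, ⟨hδ, hδh⟩, fun c hc0 hcA C hC M β hβ0 hβ hyp x hx => ?_⟩
  have hC0 : 0 < C := by linarith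
  have he := err_of_lt hc hδ hβ0 hβ
  have hσ := sigma_pos M hc
  have hEM := EM_all hc hd3 hs (by linarith) hs2 hδ hδ2 he
  have claim : ∀ t, 0 ≤ t → t ≤ β → ∀ x : Fin d → ℤ, max (η * M.xi t) (2 * M.sigma) ≤ supNorm x →
      M.F t x ≤ ENNReal.ofReal (1/8 * (C / M.sigma ^ d *
        (M.sigma / max M.sigma (supNorm x)) ^ ((d:ℝ) - 2 - ε) * Real.exp (-(A / 8 * (supNorm x / M.xi t))))) := by
    refine pred_induct (θ := ρ ^ 2) he.1 (by linarith) _ (fun t h0 htβ ht x hx => ?_) (fun s t h0 hst htβ hl hcl x hx => ?_)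
    · have het := he.mono h0 htβ
      have hξt := xi_pos hc het.1
      have hx2 : 2 * M.sigma ≤ supNorm x := (le_max_right _ _).trans hx
      have h1 := hbot M (hEM 0 le_rfl hβ0) t het.1 (1 - t) (by linarith [pow_pos hρ 2]) (by linarith) (by ring) x (by linarith)
      have hr := xi_ratio hc hδ hδh het le_rfl h0 (θ := 1 - t) (by linarith [pow_pos hρ 2]) (by linarith) (by rw [X_zero]; ring)
      rw [xi_zero M hc] at hr
      refine h1.trans (ENNReal.ofReal_le_ofReal ?_)
      have hx0 : 0 < supNorm x := by linarith
      rw [max_eq_right (by linarith : M.sigma ≤ supNorm x)]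
      set L := supNorm x / M.sigma with hL
      have hL1 : 1 ≤ L := by rw [hL, le_div_iff₀ hσ]; linarith
      have hL0 : 0 < L := by linarith
      have e1 : L ^ 2 / L ^ d ≤ (M.sigma / supNorm x) ^ ((d:ℝ) - 2 - ε) := by
        rw [show M.sigma / supNorm x = L⁻¹ by rw [hL, inv_div], Real.inv_rpow hL0.le, ← Real.rpow_neg hL0.le,
          ← Real.rpow_natCast L 2, ← Real.rpow_natCast L d, ← Real.rpow_sub hL0]
        refine Real.rpow_le_rpow_of_exponent_le hL1 ?_
        push_cast; linarith
      have e2 : Real.exp (-(A / 2 * Real.sqrt (1 - t) * L)) ≤ Real.exp (-(A / 8 * (supNorm x / M.xi t))) := by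
        exact exp_cmp ha0 hσ hξt (Real.sqrt_nonneg _) hx0.le hr
      calc K3 / M.sigma ^ d * (L ^ 2 / L ^ d) * Real.exp (-(A / 2 * Real.sqrt (1 - t) * L))
          ≤ (C / 8) / M.sigma ^ d * (M.sigma / supNorm x) ^ ((d:ℝ) - 2 - ε) * Real.exp (-(A / 8 * (supNorm x / M.xi t))) := by
            gcongr
            linarith
        _ = _ := by ring
    · have h0t : 0 ≤ t := h0.trans hst
      have hsβ : s ≤ β := hst.trans htβ
      have het := he.mono h0t htβ
      have hes := he.mono h0 hsβ
      have hξt := xi_pos hc het.1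
      have hξs := xi_pos hc hes.1
      have hσξ := sigma_le_xi hc hes.1
      have hr := xi_ratio hc hδ hδh het h0 hst (by positivity) (by linarith) hl
      rw [hsq] at hr
      have hxη : η * M.xi t ≤ supNorm x := (le_max_left _ _).trans hx
      set L := supNorm x / M.xi s with hL
      have hLL : L₀ ≤ L := by
        rw [hL, le_div_iff₀ hξs]
        calc L₀ * M.xi s ≤ L₀ * (2 * ρ * M.xi t) := by gcongr
          _ = 2 * ρ * L₀ * M.xi t := by ring
          _ ≤ η * M.xi t := by gcongr
          _ ≤ _ := hxη
      have hL1 : 1 ≤ L := hL₀.trans hLL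
      have hL0 : 0 < L := by linarith
      have hxL : supNorm x = L * M.xi s := by rw [hL]; field_simp
      have hxs : M.xi s ≤ supNorm x := by rw [hxL]; exact le_mul_of_one_le_left hξs.le hL1
      have hF : ∀ w, M.F s w ≤ ENNReal.ofReal (Real.exp 2 * (C / M.sigma ^ d * (M.sigma / max M.sigma (supNorm w)) ^ ((d:ℝ) - 2 - ε) *
          Real.exp (-(A / 8 * (supNorm w / M.xi s))))) := by
        intro w
        have hmx : 0 < max M.sigma (supNorm w) := lt_max_of_lt_left hσ
        by_cases hw : max (η * M.xi s) (2 * M.sigma) ≤ supNorm w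
        · refine (hcl w hw).trans (ENNReal.ofReal_le_ofReal ?_)
          have : (1:ℝ) / 8 ≤ Real.exp 2 := by linarith [Real.add_one_le_exp (2:ℝ)]
          refine mul_le_mul_of_nonneg_right this (by positivity)
        · have hw2 : supNorm w ≤ 2 * M.xi s := by
            push Not at hw
            refine hw.le.trans (max_le (mul_le_mul_of_nonneg_right (by linarith) hξs.le) (by linarith))
          have hw0 := supNorm_nonneg w
          refine (hyp s h0 hsβ w).trans (ENNReal.ofReal_le_ofReal ?_)
          have e1 : Real.exp (-c * supNorm w / M.xi s) ≤ 1 := Real.exp_le_one_iff.mpr (by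
            rw [neg_mul, neg_div]; exact neg_nonpos.mpr (by positivity))
          have e2 : supNorm w / M.xi s ≤ 2 := by rw [div_le_iff₀ hξs]; exact hw2
          have e3 : 1 ≤ Real.exp 2 * Real.exp (-(A / 8 * (supNorm w / M.xi s))) := by
            rw [← Real.exp_add]
            refine Real.one_le_exp ?_
            nlinarith [mul_le_mul_of_nonneg_left e2 ha0.le]
          calc _ ≤ C / M.sigma ^ d * (M.sigma / max M.sigma (supNorm w)) ^ ((d:ℝ) - 2 - ε) *
                (Real.exp 2 * Real.exp (-(A / 8 * (supNorm w / M.xi s)))) :=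
                  mul_le_mul_of_nonneg_left (e1.trans e3) (by positivity)
            _ = _ := by ring
      have h1 := hlev M s t (ρ ^ 2) C (hEM s h0 hsβ) het.1 h0 hst (by positivity) (by rw [hsq]; exact hρ1) hl hC0 hF x hxs
      refine h1.trans (ENNReal.ofReal_le_ofReal ?_)
      rw [hsq]
      have hmx : 0 < max M.sigma (supNorm x) := lt_max_of_lt_left hσ
      have e2 : Real.exp (-(A / 2 * ρ * L)) ≤ Real.exp (-(A / 8 * (supNorm x / M.xi t))) := by
        exact exp_cmp ha0 hξs hξt hρ.le (supNorm_nonneg x) hr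
      exact mul_le_mul (hsm L hLL) (mul_le_mul_of_nonneg_left e2 (by positivity)) (by positivity) (by norm_num)
  have hξ := xi_pos hc he.1
  have hx' : max (η * M.xi β) (2 * M.sigma) ≤ supNorm x :=
    (max_le_max (mul_le_mul_of_nonneg_right hηη hξ.le) le_rfl).trans hx
  refine (claim β hβ0 le_rfl x hx').trans (ENNReal.ofReal_le_ofReal ?_)
  have hx0 := supNorm_nonneg x
  have hmx : 0 < max M.sigma (supNorm x) := lt_max_of_lt_left hσ
  have e : Real.exp (-(A / 8 * (supNorm x / M.xi β))) ≤ Real.exp (-c * supNorm x / M.xi β) := by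
    refine Real.exp_le_exp.mpr ?_
    rw [neg_mul, neg_div, mul_div_assoc]
    exact neg_le_neg (mul_le_mul_of_nonneg_right hcA (by positivity))
  exact mul_le_mul_of_nonneg_left (mul_le_mul_of_nonneg_left e (by positivity)) (by norm_num)

end Blackbox
end

/-- improvement at typical length scales (`prop: typical scales`). -/
theorem statement17 (d : ℕ) (hd : 2 < d) (c₀ : ℝ) (hc₀ : c₀ ∈ Set.Ioc (0:ℝ) 1) :
    ∃ cstar > (0:ℝ), ∃ Cstar > (0:ℝ), ∀ ε > (0:ℝ), ∀ η > (0:ℝ),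
      ∃ δ₂ : ℝ, δ₂ ∈ Set.Ioc (0:ℝ) (1/2) ∧
        ∀ c : ℝ, 0 < c → c ≤ cstar → ∀ C : ℝ, Cstar ≤ C →
          ∀ M : Model d c₀, ∀ β : ℝ, 0 ≤ β → β < M.betaOf δ₂ →
            (∀ β' : ℝ, 0 ≤ β' → β' ≤ β → ∀ x : Fin d → ℤ,
              M.F β' x ≤ ENNReal.ofReal (C / M.sigma ^ d *
                (M.sigma / max M.sigma (supNorm x)) ^ ((d:ℝ) - 2 - ε) *
                Real.exp (-c * supNorm x / M.xi β'))) →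
            ∀ x : Fin d → ℤ, max (η * M.xi β) (2 * M.sigma) ≤ supNorm x →
              M.F β x ≤ ENNReal.ofReal (1/8 * (C / M.sigma ^ d *
                (M.sigma / max M.sigma (supNorm x)) ^ ((d:ℝ) - 2 - ε) *
                Real.exp (-c * supNorm x / M.xi β))) := by
  exact Blackbox.main d hd c₀ hc₀
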